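/- Let n ≥ 1 and let A₀, A₁, …, Aₙ ∈ ℂ[z, X₁, …, Xₙ] be polynomials with A₀ ≠ 0. Let f₁, …, fₙ be functions of one complex variable, analytic in a neighbourhood of 0, such that A₀(z, f₁(z), …, fₙ(z)) · fᵢ'(z) = Aᵢ(z, f₁(z), …, fₙ(z)) for all i = 1, …, n and all z in a neighbourhood of 0. Let D be the derivation of ℂ[z, X₁, …, Xₙ] given by D = A₀·∂/∂z + Σ_{i=1}^{n} Aᵢ·∂/∂Xᵢ. Assume there exists a constant K₀ such that every nonzero prime ideal 𝔭 of ℂ[z, X₁, …, Xₙ] with D(𝔭) ⊆ 𝔭 contains a polynomial P for which the function z ↦ P(z, f₁(z), …, fₙ(z)) does not vanish identically near 0 and its order of vanishing at z = 0 is at most K₀. Then there exists a constant K₁ > 0 such that for every nonzero polynomial P ∈ ℂ[z, X₁, …, Xₙ], the order of vanishing at z = 0 of the (not identically zero or else the order is infinite) function P(z, f₁(z), …, fₙ(z)) is at most K₁ · (deg_z P + 1) · (deg_X P + 1)ⁿ. -/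

import Mathlib

open scoped Classical

noncomputable section

/-- Total degree in the variables `X₁, …, Xₙ` (variable `0` plays the role of `z`). -/
def degXvars {n : ℕ} (P : MvPolynomial (Fin (n + 1)) ℂ) : ℕ :=
  P.support.sup fun d => ∑ j : Fin n, d j.succ

/-- The derivation `D = A₀·∂/∂z + Σᵢ Aᵢ·∂/∂Xᵢ` of `ℂ[z, X₁, …, Xₙ]`. -/
def Dop {n : ℕ} (A : Fin (n + 1) → MvPolynomial (Fin (n + 1)) ℂ)
    (Q : MvPolynomial (Fin (n + 1)) ℂ) : MvPolynomial (Fin (n + 1)) ℂ :=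
  A 0 * MvPolynomial.pderiv 0 Q + ∑ i : Fin n, A i.succ * MvPolynomial.pderiv i.succ Q

/-!
The solution `z ↦ (z, f₁(z), …, fₙ(z))` is a generic point `φ` of affine space over a valued field,
the valuation being the order of vanishing at `0`. Fix bounds `c` for the degrees in the individual
variables. To measure the distance from `φ` to a variety `V`, project `V` to an affine space of the
same dimension by generic polynomials of multidegree at most `c`, and multiply the distances from
`φ` to the points of `V` in the fiber through `φ`; their number is the degree of `V` with respect to
`c`.

Cutting `V` by a hypersurface `t = 0` gives a metric Bézout inequality: lower bounds for the
distances to the components of the section give one for the product of the `max (dist φ σ) |t φ|`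
over the points `σ` of the fiber. If `t` is a derivative `D^[j] Q`, with `j` bounded, of a
polynomial `Q` of bounded degree that vanishes on `V`, then `|t φ|` is controlled by `|Q φ|`, hence
by every `dist φ σ`, because `D` lowers orders of vanishing along the solution by at most one. So
the distance to `V` is bounded below by induction on the dimension, and cutting the whole space by
`P = 0` gives the estimate for `P`. If `V` is contained in a `D`-stable variety, then the distance
is bounded directly by the hypothesis on stable primes; otherwise such a `Q` has to be found.

If there is none, then the flow of `D` is tangent to `V` to high order, so every polynomial of
bounded degree vanishing on `V` is very small on the formal integral curve `ψ` of `D` through the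
generic point of `V`. On the other hand `ψ` is generic in the ambient space, and its distance to `V`
is not too small. Climbing from `V` through the varieties of increasing dimension that contain it,
the metric Bézout inequality shows that the distance from `ψ` to the whole space is not zero, a
contradiction. Each step up uses the existence of `Q` in a larger dimension, whence a descending
induction.
-/

open MvPolynomial

section TranscendenceDegree

variable (𝕜 : Type*) [Field 𝕜]

/-- The transcendence degree over `𝕜`, as a natural number; for a domain of finite type over `𝕜`
this is its Krull dimension. -/
def natTrdeg (B : Type*) [CommRing B] [Algebra 𝕜 B] : ℕ :=
  Cardinal.toNat (Algebra.trdeg 𝕜 B)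

variable {𝕜} {A B : Type*} [CommRing A] [Algebra 𝕜 A] [CommRing B] [Algebra 𝕜 B]

theorem natCast_natTrdeg [Algebra.FiniteType 𝕜 B] :
    (natTrdeg 𝕜 B : Cardinal) = Algebra.trdeg 𝕜 B :=
  Cardinal.cast_toNat_of_lt_aleph0 trdeg_lt_aleph0_of_finiteType

theorem natTrdeg_le_of_injective [Algebra.FiniteType 𝕜 B] (f : A →ₐ[𝕜] B)
    (hf : Function.Injective f) : natTrdeg 𝕜 A ≤ natTrdeg 𝕜 B := by
  rw [natTrdeg, natTrdeg, ← Cardinal.toNat_lift (Algebra.trdeg 𝕜 A),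
    ← Cardinal.toNat_lift (Algebra.trdeg 𝕜 B)]
  exact Cardinal.toNat_le_toNat (lift_trdeg_le_of_injective f hf)
    (Cardinal.lift_lt_aleph0.mpr trdeg_lt_aleph0_of_finiteType)

theorem natTrdeg_le_of_surjective [Algebra.FiniteType 𝕜 A] (f : A →ₐ[𝕜] B)
    (hf : Function.Surjective f) : natTrdeg 𝕜 B ≤ natTrdeg 𝕜 A := by
  rw [natTrdeg, natTrdeg, ← Cardinal.toNat_lift (Algebra.trdeg 𝕜 A),
    ← Cardinal.toNat_lift (Algebra.trdeg 𝕜 B)]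
  exact Cardinal.toNat_le_toNat (lift_trdeg_le_of_surjective f hf)
    (Cardinal.lift_lt_aleph0.mpr trdeg_lt_aleph0_of_finiteType)

theorem natTrdeg_eq_of_algEquiv (e : A ≃ₐ[𝕜] B) : natTrdeg 𝕜 A = natTrdeg 𝕜 B := by
  simpa only [natTrdeg, Cardinal.toNat_lift] using congrArg Cardinal.toNat e.lift_trdeg_eq

theorem natTrdeg_mvPolynomial (r : ℕ) : natTrdeg 𝕜 (MvPolynomial (Fin r) 𝕜) = r := by
  simp [natTrdeg, MvPolynomial.trdeg_of_isDomain]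

theorem natTrdeg_polynomial [IsDomain B] [Algebra.FiniteType 𝕜 B] :
    natTrdeg 𝕜 (Polynomial B) = natTrdeg 𝕜 B + 1 := by
  have h := trdeg_add_eq 𝕜 B (A := Polynomial B)
  rw [Polynomial.trdeg_of_isDomain] at h
  rw [natTrdeg, ← h, ← natCast_natTrdeg]
  simp

theorem transcendental_of_algHom_apply_eq_zero {R S T : Type*} [CommRing R] [CommRing S]
    [IsDomain S] [CommRing T] [Algebra R S] [Algebra R T] (f : S →ₐ[R] T)
    (hR : Function.Injective (algebraMap R T)) {y : S} (hy : f y = 0) (hy0 : y ≠ 0) :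
    Transcendental R y := by
  rintro ⟨p, hp, hpy⟩
  obtain ⟨q, hq, hXq⟩ := Polynomial.exists_eq_pow_rootMultiplicity_mul_and_not_dvd p hp 0
  rw [map_zero, sub_zero] at hq hXq
  rw [hq, map_mul, map_pow, Polynomial.aeval_X] at hpy
  have hqy : Polynomial.aeval y q = 0 := (mul_eq_zero.mp hpy).resolve_left (pow_ne_zero _ hy0)
  have hcoeff := congrArg f hqy
  rw [← Polynomial.aeval_algHom_apply, hy, map_zero,
    ← Polynomial.coeff_zero_eq_aeval_zero'] at hcoeff
  exact hXq (Polynomial.X_dvd_iff.mpr (hR (by rw [hcoeff, map_zero])))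

theorem injective_comp_val_adjoin_of_algebraicIndependent {ι : Type*} (f : A →ₐ[𝕜] B) {x : ι → A}
    (hx : AlgebraicIndependent 𝕜 (f ∘ x)) :
    Function.Injective (f.comp (Algebra.adjoin 𝕜 (Set.range x)).val) := by
  rw [injective_iff_map_eq_zero]
  rintro ⟨a, ha⟩ h0
  rw [Algebra.adjoin_range_eq_range_aeval] at ha
  obtain ⟨p, rfl⟩ := ha
  have hp : aeval (fun i => f (x i)) p = 0 := by
    rw [← MvPolynomial.comp_aeval_apply]
    exact h0
  exact Subtype.ext (by simp [hx.eq_zero_of_aeval_eq_zero p hp])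

theorem natTrdeg_lt_of_surjective [IsDomain A] [Algebra.FiniteType 𝕜 A] [IsDomain B]
    (f : A →ₐ[𝕜] B) (hf : Function.Surjective f) {y : A} (hy : f y = 0) (hy0 : y ≠ 0) :
    natTrdeg 𝕜 B < natTrdeg 𝕜 A := by
  have : Algebra.FiniteType 𝕜 B := Algebra.FiniteType.of_surjective f hf
  obtain ⟨ι, x, hx⟩ := exists_isTranscendenceBasis' 𝕜 B
  choose x' hx' using fun i => hf (x i)
  have hfx' : AlgebraicIndependent 𝕜 (f ∘ x') := by
    convert hx.1 using 1
    exact funext hx'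
  have hy_transcendental : Transcendental (Algebra.adjoin 𝕜 (Set.range x')) y := by
    let S := Algebra.adjoin 𝕜 (Set.range x')
    let _ : Algebra S B := (f.comp S.val).toAlgebra
    let f' : A →ₐ[S] B := { f with commutes' := fun _ => rfl }
    exact transcendental_of_algHom_apply_eq_zero f'
      (injective_comp_val_adjoin_of_algebraicIndependent f hfx') hy hy0
  have h := ((hfx'.of_comp f).option_iff_transcendental y).mpr hy_transcendental
    |>.lift_cardinalMk_le_trdeg
  have hcard := hx.lift_cardinalMk_eq_trdeg
  rw [← natCast_natTrdeg, Cardinal.lift_natCast, Cardinal.lift_eq_nat_iff] at hcard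
  rw [Cardinal.mk_option, hcard, ← natCast_natTrdeg, Cardinal.lift_natCast, ← Nat.cast_succ,
    Cardinal.lift_natCast, Nat.cast_le] at h
  exact h

theorem natTrdeg_quotient_lt [Algebra.FiniteType 𝕜 A] {P Q : Ideal A} [P.IsPrime] [Q.IsPrime]
    (h : P < Q) : natTrdeg 𝕜 (A ⧸ Q) < natTrdeg 𝕜 (A ⧸ P) := by
  obtain ⟨y, hyQ, hyP⟩ := SetLike.exists_of_lt h
  refine natTrdeg_lt_of_surjective (Ideal.Quotient.factorₐ 𝕜 h.le)
    (Ideal.Quotient.factor_surjective h.le) (y := Ideal.Quotient.mk P y) ?_ ?_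
  · simpa [Ideal.Quotient.eq_zero_iff_mem] using hyQ
  · simpa [Ideal.Quotient.eq_zero_iff_mem] using hyP

end TranscendenceDegree

section MomentCurve

variable {𝕜 : Type*} [Field 𝕜] {s : ℕ}

theorem eventually_sum_pow_smul_ne_zero {B : Type*} [CommRing B] [IsDomain B] [Algebra 𝕜 B]
    (x : Fin s → B) (hx : ∃ i, x i ≠ 0) :
    ∀ᶠ l : 𝕜 in Filter.cofinite, ∑ i : Fin s, l ^ (i : ℕ) • x i ≠ 0 := by
  let p : Polynomial B := ∑ i : Fin s, Polynomial.monomial (i : ℕ) (x i)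
  have hp : p ≠ 0 := by
    obtain ⟨i, hi⟩ := hx
    intro h
    have hcoeff := congrArg (fun q => Polynomial.coeff q (i : ℕ)) h
    exact hi (by simpa [p, Polynomial.finsetSum_coeff, Polynomial.coeff_monomial,
      Fin.val_inj] using hcoeff)
  have hfin : ((algebraMap 𝕜 B) ⁻¹' (p.rootSet B)).Finite :=
    (Polynomial.rootSet_finite p B).preimage (FaithfulSMul.algebraMap_injective 𝕜 B).injOn
  filter_upwards [hfin.compl_mem_cofinite] with l hl h
  apply hl
  simp only [Set.mem_preimage, Polynomial.mem_rootSet, hp, ne_eq, not_false_eq_true, true_and]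
  rw [← h]
  simp [p, Polynomial.aeval_def, Polynomial.eval₂_monomial, Algebra.smul_def, mul_comm]

variable {Ω Γ₀ : Type*} [Field Ω] [Algebra 𝕜 Ω] [LinearOrderedCommGroupWithZero Γ₀]
  {v : Valuation Ω Γ₀}

theorem valuation_coeff_lagrangeBasis_le_one (hv : ∀ c : 𝕜, v (algebraMap 𝕜 Ω c) ≤ 1)
    (t : Finset 𝕜) (l : 𝕜) (i : ℕ) :
    v ((Lagrange.basis t (algebraMap 𝕜 Ω) l).coeff i) ≤ 1 := by
  have hmap : Lagrange.basis t (algebraMap 𝕜 Ω) l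
      = (Lagrange.basis t (id : 𝕜 → 𝕜) l).map (algebraMap 𝕜 Ω) := by
    simp [Lagrange.basis, Lagrange.basisDivisor, Polynomial.map_prod]
  rw [hmap, Polynomial.coeff_map]
  exact hv _

theorem exists_valuation_coeff_le_valuation_eval (hv : ∀ c : 𝕜, v (algebraMap 𝕜 Ω c) ≤ 1)
    {p : Polynomial Ω} {t : Finset 𝕜} (ht : t.Nonempty) (hp : p.degree < t.card) (i : ℕ) :
    ∃ l ∈ t, v (p.coeff i) ≤ v (p.eval (algebraMap 𝕜 Ω l)) := by
  have hp_interpolate := Lagrange.eq_interpolate_of_eval_eq (s := t) (v := algebraMap 𝕜 Ω)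
    (fun l => p.eval (algebraMap 𝕜 Ω l)) (FaithfulSMul.algebraMap_injective 𝕜 Ω).injOn hp (by simp)
  have hcoeff : p.coeff i = ∑ l ∈ t, p.eval (algebraMap 𝕜 Ω l) *
      (Lagrange.basis t (algebraMap 𝕜 Ω) l).coeff i := by
    conv_lhs => rw [hp_interpolate]
    simp [Lagrange.interpolate_apply, Polynomial.finsetSum_coeff]
  obtain ⟨l₀, hl₀⟩ := ht
  by_contra! hlt
  have hne : v (p.coeff i) ≠ 0 := fun h => not_lt_zero (h ▸ hlt l₀ hl₀)
  have hself : v (p.coeff i) < v (p.coeff i) := by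
    conv_lhs => rw [hcoeff]
    refine v.map_sum_lt hne fun l hl => ?_
    rw [map_mul]
    exact (mul_le_of_le_one_right' (valuation_coeff_lagrangeBasis_le_one hv t l i)).trans_lt
      (hlt l hl)
  exact lt_irrefl _ hself

theorem eventually_valuation_le_valuation_sum_pow_smul (hv : ∀ c : 𝕜, v (algebraMap 𝕜 Ω c) ≤ 1)
    (x : Fin s → Ω) (i : Fin s) :
    ∀ᶠ l : 𝕜 in Filter.cofinite, v (x i) ≤ v (∑ j : Fin s, l ^ (j : ℕ) • x j) := by
  let p : Polynomial Ω := ∑ j : Fin s, Polynomial.monomial (j : ℕ) (x j)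
  have hp_eval (l : 𝕜) : p.eval (algebraMap 𝕜 Ω l) = ∑ j : Fin s, l ^ (j : ℕ) • x j := by
    simp [p, Polynomial.eval_finsetSum, Polynomial.eval_monomial, Algebra.smul_def, mul_comm]
  have hp_coeff : p.coeff i = x i := by
    simp [p, Polynomial.finsetSum_coeff, Polynomial.coeff_monomial, Fin.val_inj]
  have hp_degree : p.degree < s := by
    simpa [p, Polynomial.C_mul_X_pow_eq_monomial] using Polynomial.degree_sum_fin_lt x
  rw [Filter.eventually_cofinite]
  by_contra hinf
  obtain ⟨t, ht, hts⟩ := Set.Infinite.exists_subset_card_eq hinf s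
  obtain ⟨l, hl, hle⟩ := exists_valuation_coeff_le_valuation_eval hv
    (Finset.card_pos.mp (hts ▸ i.pos)) (hts ▸ hp_degree) i
  rw [hp_coeff, hp_eval] at hle
  exact ht hl hle

end MomentCurve

section GenericParameters

variable (𝕜 : Type*) [Field 𝕜]

/-- Iterated cofinite filter on parameter sequences: the parameters with index `< k` are chosen
one after the other, each outside a finite set depending on the previous ones. -/
def genericFilter : ℕ → Filter (ℕ → 𝕜)
  | 0 => pure 0
  | k + 1 => (genericFilter k).bind fun l => Filter.cofinite.map fun c => Function.update l k c

variable {𝕜} {k m : ℕ} {p : (ℕ → 𝕜) → Prop}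

theorem eventually_genericFilter_succ :
    (∀ᶠ l in genericFilter 𝕜 (k + 1), p l) ↔
      ∀ᶠ l in genericFilter 𝕜 k, ∀ᶠ c in Filter.cofinite, p (Function.update l k c) := by
  simp [genericFilter, Filter.eventually_bind, Filter.eventually_map]

instance genericFilter_neBot [Infinite 𝕜] : (genericFilter 𝕜 k).NeBot := by
  induction k with
  | zero => exact Filter.pure_neBot
  | succ k ih =>
    rw [← Filter.frequently_true_iff_neBot, Filter.Frequently, eventually_genericFilter_succ]
    simpa [Set.infinite_univ] using ih.ne

theorem eventually_genericFilter_of_le (hkm : k ≤ m)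
    (hp : ∀ l l', (∀ i < k, l i = l' i) → p l → p l') (h : ∀ᶠ l in genericFilter 𝕜 k, p l) :
    ∀ᶠ l in genericFilter 𝕜 m, p l := by
  induction m, hkm using Nat.le_induction with
  | base => exact h
  | succ m hm ih =>
    rw [eventually_genericFilter_succ]
    filter_upwards [ih] with l hl
    refine Filter.Eventually.of_forall fun c => hp l _ (fun i hi => ?_) hl
    rw [Function.update_of_ne (by omega)]

theorem eventually_genericFilter_of_lt (hkm : k < m)
    (hp : ∀ l l', (∀ i < k + 1, l i = l' i) → p l → p l')
    (h : ∀ᶠ l in genericFilter 𝕜 k, ∀ᶠ c in Filter.cofinite, p (Function.update l k c)) :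
    ∀ᶠ l in genericFilter 𝕜 m, p l :=
  eventually_genericFilter_of_le hkm hp (eventually_genericFilter_succ.mpr h)

end GenericParameters

section GenericNormalization

attribute [local instance] MvPolynomial.gradedAlgebra

variable {𝕜 : Type*} [Field 𝕜] {s : ℕ}

theorem homogeneousComponent_mul_of_isHomogeneous_one {y : MvPolynomial (Fin s) 𝕜}
    (hy : y.IsHomogeneous 1) (a : MvPolynomial (Fin s) 𝕜) (d : ℕ) :
    homogeneousComponent (d + 1) (y * a) = y * homogeneousComponent d a := by
  have h := DirectSum.coe_decompose_mul_add_of_left_mem (homogeneousSubmodule (Fin s) 𝕜) (i := 1)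
    (j := d) (a := y) (b := a) hy
  rwa [← DirectSum.Decomposition.decompose'_eq, decomposition.decompose'_apply,
    decomposition.decompose'_apply, add_comm] at h

theorem isHomogeneous_of_mem_minimalPrimes {J P : Ideal (MvPolynomial (Fin s) 𝕜)}
    (hJ : J.IsHomogeneous (homogeneousSubmodule (Fin s) 𝕜)) (hP : P ∈ J.minimalPrimes) :
    P.IsHomogeneous (homogeneousSubmodule (Fin s) 𝕜) := by
  have hP_prime : P.IsPrime := hP.1.1
  let Q := P.homogeneousCore (homogeneousSubmodule (Fin s) 𝕜)
  have hQP : Q.toIdeal ≤ P := Ideal.toIdeal_homogeneousCore_le _ _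
  have hJQ : J ≤ Q.toIdeal := by
    rw [← hJ.toIdeal_homogeneousCore_eq_self]
    exact Ideal.homogeneousCore_mono _ hP.1.2
  have hPQ : P = Q.toIdeal := le_antisymm (hP.2 ⟨hP_prime.homogeneousCore, hJQ⟩ hQP) hQP
  rw [hPQ]
  exact Q.isHomogeneous

theorem homogeneousComponent_natDegree_aeval_X (p : Polynomial 𝕜) (i : Fin s) :
    homogeneousComponent p.natDegree (Polynomial.aeval (X i : MvPolynomial (Fin s) 𝕜) p)
      = C p.leadingCoeff * X i ^ p.natDegree := by
  rw [Polynomial.aeval_eq_sum_range, map_sum, Finset.sum_range_succ, Finset.sum_eq_zero, zero_add,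
    map_smul, homogeneousComponent_of_mem ((isHomogeneous_X 𝕜 i).pow _), one_mul, if_pos rfl,
    smul_eq_C_mul, Polynomial.leadingCoeff]
  intro k hk
  rw [map_smul, homogeneousComponent_of_mem ((isHomogeneous_X 𝕜 i).pow _), one_mul,
    if_neg (Finset.mem_range.mp hk).ne', smul_zero]

theorem X_mem_of_isHomogeneous_of_natTrdeg_quotient_eq_zero {P : Ideal (MvPolynomial (Fin s) 𝕜)}
    [hP : P.IsPrime] (hP_hom : P.IsHomogeneous (homogeneousSubmodule (Fin s) 𝕜))
    (h0 : natTrdeg 𝕜 (MvPolynomial (Fin s) 𝕜 ⧸ P) = 0) (i : Fin s) : X i ∈ P := by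
  have htr : Algebra.trdeg 𝕜 (MvPolynomial (Fin s) 𝕜 ⧸ P) = 0 := by
    rw [← natCast_natTrdeg, h0, Nat.cast_zero]
  obtain ⟨p, hp0, hp⟩ := (trdeg_eq_zero_iff.mp htr).isAlgebraic (Ideal.Quotient.mk P (X i))
  have hmem : Polynomial.aeval (X i : MvPolynomial (Fin s) 𝕜) p ∈ P := by
    rw [← Ideal.Quotient.eq_zero_iff_mem, ← hp]
    exact (Polynomial.aeval_algHom_apply (Ideal.Quotient.mkₐ 𝕜 P) (X i) p).symm
  have htop := hP_hom p.natDegree hmem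
  rw [← DirectSum.Decomposition.decompose'_eq, decomposition.decompose'_apply,
    homogeneousComponent_natDegree_aeval_X] at htop
  refine hP.mem_of_pow_mem _ ((hP.mem_or_mem htop).resolve_left fun h => hP.ne_top ?_)
  exact Ideal.eq_top_of_isUnit_mem _ h
    ((Polynomial.leadingCoeff_ne_zero.mpr hp0).isUnit.map C)

variable {B : Type*} [CommRing B] [Algebra 𝕜 B]

/-- The algebra map `X i ↦ g i · T` into `B[T]`, whose kernel is the ideal of homogeneous
relations between the `g i`. -/
def reesHom (g : Fin s → B) : MvPolynomial (Fin s) 𝕜 →ₐ[𝕜] Polynomial B :=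
  aeval fun i => Polynomial.C (g i) * Polynomial.X

variable (g : Fin s → B)

theorem reesHom_of_isHomogeneous {q : MvPolynomial (Fin s) 𝕜} {d : ℕ} (hq : q.IsHomogeneous d) :
    reesHom g q = Polynomial.C (aeval g q) * Polynomial.X ^ d := by
  conv_lhs => rw [q.as_sum]
  conv_rhs => rw [q.as_sum]
  rw [map_sum, map_sum, map_sum, Finset.sum_mul]
  refine Finset.sum_congr rfl fun a ha => ?_
  have hd : ∑ i, a i = d := by
    have hweight := hq (mem_support_iff.mp ha)
    rwa [Finsupp.weight_apply, Finsupp.sum_fintype _ _ (by simp),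
      ← Finset.sum_congr rfl] at hweight
    simp
  rw [reesHom, aeval_monomial, aeval_monomial, Finsupp.prod_fintype _ _ (by simp),
    Finsupp.prod_fintype _ _ (by simp), ← hd]
  simp only [mul_pow, Finset.prod_mul_distrib, ← Finset.prod_pow_eq_pow_sum, map_mul, map_prod,
    map_pow, IsScalarTower.algebraMap_apply 𝕜 B (Polynomial B), Polynomial.algebraMap_eq]
  ring

theorem aeval_homogeneousComponent_of_reesHom_eq_zero {h : MvPolynomial (Fin s) 𝕜}
    (hh : reesHom g h = 0) (d : ℕ) : aeval g (homogeneousComponent d h) = 0 := by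
  rw [← sum_homogeneousComponent h, map_sum] at hh
  simp only [reesHom_of_isHomogeneous g (homogeneousComponent_isHomogeneous _ h)] at hh
  have hcoeff := congrArg (fun p => Polynomial.coeff p d) hh
  simp only [Polynomial.finsetSum_coeff, Polynomial.coeff_C_mul_X_pow,
    Polynomial.coeff_zero] at hcoeff
  by_cases hd : d < h.totalDegree + 1
  · simpa [Finset.sum_ite_eq, hd] using hcoeff
  · rw [homogeneousComponent_eq_zero _ _ (by omega), map_zero]

theorem isHomogeneous_ker_reesHom : (RingHom.ker (reesHom (𝕜 := 𝕜) g)).IsHomogeneous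
    (homogeneousSubmodule (Fin s) 𝕜) := by
  intro d h hh
  rw [← DirectSum.Decomposition.decompose'_eq, decomposition.decompose'_apply]
  rw [RingHom.mem_ker] at hh ⊢
  rw [reesHom_of_isHomogeneous g (homogeneousComponent_isHomogeneous _ h),
    aeval_homogeneousComponent_of_reesHom_eq_zero g hh, map_zero, zero_mul]

/-- The linear form whose coefficient vector `(1, l, …, l ^ (s - 1))` is the point with
parameter `l` of the moment curve. -/
def momentForm (s : ℕ) (l : 𝕜) : MvPolynomial (Fin s) 𝕜 := ∑ i : Fin s, l ^ (i : ℕ) • X i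

theorem isHomogeneous_sum_smul_X (a : Fin s → 𝕜) :
    (∑ i, a i • X i : MvPolynomial (Fin s) 𝕜).IsHomogeneous 1 :=
  IsHomogeneous.sum _ _ _ fun i _ =>
    (homogeneousSubmodule (Fin s) 𝕜 1).smul_mem _ (isHomogeneous_X 𝕜 i)

theorem isHomogeneous_momentForm (l : 𝕜) : (momentForm s l).IsHomogeneous 1 :=
  isHomogeneous_sum_smul_X _

theorem aeval_momentForm (l : 𝕜) : aeval g (momentForm s l) = ∑ i : Fin s, l ^ (i : ℕ) • g i := by
  simp [momentForm]

theorem eventually_momentForm_notMem {P : Ideal (MvPolynomial (Fin s) 𝕜)} [P.IsPrime]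
    (hP : ∃ i, X i ∉ P) : ∀ᶠ l in Filter.cofinite, momentForm s l ∉ P := by
  have hne := eventually_sum_pow_smul_ne_zero (𝕜 := 𝕜) (fun i => Ideal.Quotient.mkₐ 𝕜 P (X i))
    (by simpa [Ideal.Quotient.eq_zero_iff_mem] using hP)
  filter_upwards [hne] with l hl h
  apply hl
  rw [← Ideal.Quotient.eq_zero_iff_mem] at h
  rw [← h, momentForm]
  change _ = Ideal.Quotient.mkₐ 𝕜 P _
  simp [map_sum]

/-- The ideal generated by the homogeneous relations between the `g i`, a form `y` and the first
`k` moment forms. -/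
def cutIdeal (y : MvPolynomial (Fin s) 𝕜) (k : ℕ) (l : ℕ → 𝕜) : Ideal (MvPolynomial (Fin s) 𝕜) :=
  RingHom.ker (reesHom g) ⊔ Ideal.span {y} ⊔
    Ideal.span (Set.range fun i : Fin k => momentForm s (l i))

theorem isHomogeneous_cutIdeal {y : MvPolynomial (Fin s) 𝕜} (hy : y.IsHomogeneous 1) (k : ℕ)
    (l : ℕ → 𝕜) : (cutIdeal g y k l).IsHomogeneous (homogeneousSubmodule (Fin s) 𝕜) := by
  refine ((isHomogeneous_ker_reesHom g).sup (Ideal.homogeneous_span _ _ ?_)).sup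
    (Ideal.homogeneous_span _ _ ?_)
  · rintro _ rfl
    exact ⟨1, hy⟩
  · rintro _ ⟨i, rfl⟩
    exact ⟨1, isHomogeneous_momentForm _⟩

theorem cutIdeal_le_cutIdeal_update (y : MvPolynomial (Fin s) 𝕜) (k : ℕ) (l : ℕ → 𝕜) (c : 𝕜) :
    cutIdeal g y k l ≤ cutIdeal g y (k + 1) (Function.update l k c) := by
  refine sup_le_sup le_rfl (Ideal.span_mono ?_)
  rintro _ ⟨i, rfl⟩
  exact ⟨i.castSucc, by simp [Function.update_of_ne i.2.ne]⟩

theorem momentForm_mem_cutIdeal_update (y : MvPolynomial (Fin s) 𝕜) (k : ℕ) (l : ℕ → 𝕜) (c : 𝕜) :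
    momentForm s c ∈ cutIdeal g y (k + 1) (Function.update l k c) :=
  Ideal.mem_sup_right (Ideal.subset_span ⟨Fin.last k, by simp⟩)

theorem natTrdeg_quotient_le_of_cutIdeal_zero_le [IsDomain B] [Algebra.FiniteType 𝕜 B]
    {y : MvPolynomial (Fin s) 𝕜} (hy : reesHom g y = Polynomial.X) {l : ℕ → 𝕜}
    {P : Ideal (MvPolynomial (Fin s) 𝕜)} [P.IsPrime] (hP : cutIdeal g y 0 l ≤ P) :
    natTrdeg 𝕜 (MvPolynomial (Fin s) 𝕜 ⧸ P) ≤ natTrdeg 𝕜 B := by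
  have hker : (RingHom.ker (reesHom (𝕜 := 𝕜) g)).IsPrime := RingHom.ker_isPrime _
  have hle : RingHom.ker (reesHom g) ⊔ Ideal.span {y} ≤ P := le_sup_left.trans hP
  have hlt : RingHom.ker (reesHom g) < P := by
    refine lt_of_le_of_ne (le_sup_left.trans hle) fun h => ?_
    have hyP : y ∈ P := hle (Ideal.mem_sup_right (Ideal.mem_span_singleton_self y))
    rw [← h, RingHom.mem_ker, hy] at hyP
    exact Polynomial.X_ne_zero hyP
  have h_quotient := natTrdeg_quotient_lt (𝕜 := 𝕜) hlt
  have h_image : natTrdeg 𝕜 (MvPolynomial (Fin s) 𝕜 ⧸ RingHom.ker (reesHom g)) ≤ _ :=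
    natTrdeg_le_of_injective (Ideal.kerLiftAlg (reesHom g)) (Ideal.kerLiftAlg_injective _)
  rw [natTrdeg_polynomial] at h_image
  omega

theorem eventually_forall_minimalPrimes_momentForm_notMem (J : Ideal (MvPolynomial (Fin s) 𝕜)) :
    ∀ᶠ l in Filter.cofinite, ∀ P ∈ J.minimalPrimes, (∃ i, X i ∉ P) → momentForm s l ∉ P := by
  rw [Filter.eventually_all_finite (Ideal.finite_minimalPrimes_of_isNoetherianRing _ J)]
  intro P hP
  have hP_prime : P.IsPrime := hP.1.1
  by_cases h : ∃ i, X i ∉ P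
  · filter_upwards [eventually_momentForm_notMem h] with l hl _ using hl
  · exact Filter.Eventually.of_forall fun _ h' => absurd h' h

theorem eventually_natTrdeg_quotient_add_le [IsDomain B] [Algebra.FiniteType 𝕜 B]
    {y : MvPolynomial (Fin s) 𝕜} (hy : reesHom g y = Polynomial.X) (k : ℕ) :
    ∀ᶠ l in genericFilter 𝕜 k, ∀ P ∈ (cutIdeal g y k l).minimalPrimes,
      (∀ i, X i ∈ P) ∨ natTrdeg 𝕜 (MvPolynomial (Fin s) 𝕜 ⧸ P) + k ≤ natTrdeg 𝕜 B := by
  induction k with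
  | zero =>
    refine Filter.Eventually.of_forall fun l P hP => Or.inr ?_
    have hP_prime : P.IsPrime := hP.1.1
    exact natTrdeg_quotient_le_of_cutIdeal_zero_le g hy hP.1.2
  | succ k ih =>
    rw [eventually_genericFilter_succ]
    filter_upwards [ih] with l hl
    filter_upwards [eventually_forall_minimalPrimes_momentForm_notMem (cutIdeal g y k l)]
      with c hc P hP
    have hP_prime : P.IsPrime := hP.1.1
    obtain ⟨Q, hQ, hQP⟩ :=
      Ideal.exists_minimalPrimes_le ((cutIdeal_le_cutIdeal_update g y k l c).trans hP.1.2)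
    have hQ_prime : Q.IsPrime := hQ.1.1
    by_cases h : ∃ i, X i ∉ Q
    · right
      have hmem : momentForm s c ∈ P := hP.1.2 (momentForm_mem_cutIdeal_update g y k l c)
      have hlt : Q < P := lt_of_le_of_ne hQP fun he => hc Q hQ h (he ▸ hmem)
      have h_drop := natTrdeg_quotient_lt (𝕜 := 𝕜) hlt
      have h_prev := (hl Q hQ).resolve_left (by simpa using h)
      omega
    · left
      push Not at h
      exact fun i => hQP (h i)

/-- The algebra `B`, filtered by the powers of `V`, is a finite filtered module over the
polynomials in `Y`. -/
def FilteredFinite (V : Submodule 𝕜 B) {N : ℕ} (Y : Fin N → B) : Prop :=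
  ∃ m : ℕ, ∀ x ∈ V ^ (m + 1), ∃ a ∈ V ^ m, ∃ b : Fin N → B, (∀ i, b i ∈ V ^ m) ∧
    x = a + ∑ i, Y i * b i

theorem span_X_pow_eq_homogeneousSubmodule (d : ℕ) :
    Submodule.span 𝕜 (Set.range X) ^ d = homogeneousSubmodule (Fin s) 𝕜 d := by
  rw [← homogeneousSubmodule_one_pow _ d, homogeneousSubmodule_one_eq_span_X]

theorem map_homogeneousSubmodule_aeval (d : ℕ) :
    (homogeneousSubmodule (Fin s) 𝕜 d).map (aeval g).toLinearMap
      = Submodule.span 𝕜 (Set.range g) ^ d := by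
  rw [← span_X_pow_eq_homogeneousSubmodule, Submodule.map_pow, Submodule.map_span,
    ← Set.range_comp]
  congr 3
  ext i
  simp

theorem homogeneousSubmodule_le_span_X_pow (d : ℕ) : homogeneousSubmodule (Fin s) 𝕜 d
      ≤ (Ideal.span (Set.range X) ^ d).restrictScalars 𝕜 := by
  rw [← span_X_pow_eq_homogeneousSubmodule]
  induction d with
  | zero => simp [Ideal.one_eq_top]
  | succ d ih =>
    rw [pow_succ, pow_succ, Submodule.mul_le]
    intro a ha b hb
    exact Ideal.mul_mem_mul (ih ha) (Submodule.span_le_restrictScalars 𝕜 _ _ hb)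

theorem exists_homogeneousSubmodule_le_of_X_mem_radical {J : Ideal (MvPolynomial (Fin s) 𝕜)}
    (hX : ∀ i, X i ∈ J.radical) :
    ∃ m : ℕ, homogeneousSubmodule (Fin s) 𝕜 (m + 1) ≤ J.restrictScalars 𝕜 := by
  obtain ⟨m, hm⟩ := Ideal.exists_pow_le_of_le_radical_of_fg (I := Ideal.span (Set.range X)) (J := J)
    (by rw [Ideal.span_le]; rintro _ ⟨i, rfl⟩; exact hX i) ⟨Finset.univ.image X, by simp⟩
  exact ⟨m, fun p hp => hm (Ideal.pow_le_pow_right m.le_succ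
    (homogeneousSubmodule_le_span_X_pow (m + 1) hp))⟩

theorem filteredFinite_of_X_mem_radical_cutIdeal {y : MvPolynomial (Fin s) 𝕜} (hy : aeval g y = 1)
    (hy_hom : y.IsHomogeneous 1) {k : ℕ} {l : ℕ → 𝕜}
    (hX : ∀ i, X i ∈ (cutIdeal g y k l).radical) :
    FilteredFinite (Submodule.span 𝕜 (Set.range g))
      (fun i : Fin k => ∑ j : Fin s, l i ^ (j : ℕ) • g j) := by
  obtain ⟨m, hm⟩ := exists_homogeneousSubmodule_le_of_X_mem_radical hX
  have hmem (a : MvPolynomial (Fin s) 𝕜) :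
      aeval g (homogeneousComponent m a) ∈ Submodule.span 𝕜 (Set.range g) ^ m := by
    rw [← map_homogeneousSubmodule_aeval]
    exact Submodule.mem_map_of_mem (homogeneousComponent_isHomogeneous m a)
  refine ⟨m, fun x hx => ?_⟩
  rw [← map_homogeneousSubmodule_aeval] at hx
  obtain ⟨p, hp, rfl⟩ := hx
  obtain ⟨q, hq, w, hw, rfl⟩ := Submodule.mem_sup.mp (hm hp)
  obtain ⟨h, hh, u, hu, rfl⟩ := Submodule.mem_sup.mp hq
  obtain ⟨a, rfl⟩ := Ideal.mem_span_singleton'.mp hu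
  obtain ⟨b, rfl⟩ := Ideal.mem_span_range_iff_exists_fun.mp hw
  have htop : homogeneousComponent (m + 1) (h + a * y + ∑ i, b i * momentForm s (l i))
      = h + a * y + ∑ i, b i * momentForm s (l i) := by
    rw [homogeneousComponent_of_mem hp, if_pos rfl]
  refine ⟨aeval g (homogeneousComponent m a), hmem a,
    fun i => aeval g (homogeneousComponent m (b i)), fun i => hmem (b i), ?_⟩
  rw [RingHom.mem_ker] at hh
  rw [AlgHom.toLinearMap_apply, ← htop]
  simp only [map_add, map_sum, mul_comm _ y, mul_comm _ (momentForm s _),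
    homogeneousComponent_mul_of_isHomogeneous_one hy_hom,
    homogeneousComponent_mul_of_isHomogeneous_one (isHomogeneous_momentForm _),
    aeval_homogeneousComponent_of_reesHom_eq_zero g hh, map_mul, hy, one_mul, zero_add,
    aeval_momentForm]

theorem eventually_filteredFinite [IsDomain B] [Algebra.FiniteType 𝕜 B]
    (h1 : (1 : B) ∈ Submodule.span 𝕜 (Set.range g)) :
    ∀ᶠ l in genericFilter 𝕜 (natTrdeg 𝕜 B), FilteredFinite (Submodule.span 𝕜 (Set.range g))
      (fun i : Fin (natTrdeg 𝕜 B) => ∑ j : Fin s, l i ^ (j : ℕ) • g j) := by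
  obtain ⟨a, ha⟩ := (Submodule.mem_span_range_iff_exists_fun 𝕜).mp h1
  let y : MvPolynomial (Fin s) 𝕜 := ∑ i, a i • X i
  have hy_hom : y.IsHomogeneous 1 := isHomogeneous_sum_smul_X a
  have hy : aeval g y = 1 := by simpa [y] using ha
  have hy_rees : reesHom g y = Polynomial.X := by
    rw [reesHom_of_isHomogeneous g hy_hom, hy, map_one, one_mul, pow_one]
  filter_upwards [eventually_natTrdeg_quotient_add_le g hy_rees (natTrdeg 𝕜 B)] with l hl
  refine filteredFinite_of_X_mem_radical_cutIdeal g hy hy_hom fun i => ?_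
  rw [← Ideal.sInf_minimalPrimes, Ideal.mem_sInf]
  intro P hP
  have hP_prime : P.IsPrime := hP.1.1
  rcases hl P hP with h | h
  · exact h i
  · exact X_mem_of_isHomogeneous_of_natTrdeg_quotient_eq_zero
      (isHomogeneous_of_mem_minimalPrimes (isHomogeneous_cutIdeal g hy_hom _ _) hP) (by omega) i

end GenericNormalization

section IntegralNorm

variable {A B Ω : Type*} [CommRing A] [IsDomain A] [CommRing B] [IsDomain B] [Algebra A B]
  [Module.Finite A B] [Field Ω] [Algebra A Ω] [FaithfulSMul A Ω]

theorem algHom_injective_of_finite (σ : B →ₐ[A] Ω) : Function.Injective σ := by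
  rw [← AlgHom.coe_toRingHom, RingHom.injective_iff_ker_eq_bot]
  refine Ideal.eq_bot_of_comap_eq_bot (R := A) (eq_bot_iff.mpr fun a ha => ?_)
  rw [Ideal.mem_comap, RingHom.mem_ker, AlgHom.coe_toRingHom, AlgHom.commutes] at ha
  exact FaithfulSMul.algebraMap_injective A Ω (ha.trans (map_zero _).symm)

variable [FaithfulSMul A B]

attribute [local instance] FractionRing.liftAlgebra FractionRing.isScalarTower_liftAlgebra

/-- Embeddings of a finite extension of domains are embeddings of the fraction fields. -/
def algHomEquivFractionRing :
    (B →ₐ[A] Ω) ≃ (FractionRing B →ₐ[FractionRing A] Ω) where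
  toFun σ := AlgHom.extendScalarsOfIsLocalization (FractionRing A) (nonZeroDivisors A)
    (IsFractionRing.liftAlgHom (K := FractionRing B) (algHom_injective_of_finite σ))
  invFun τ := (τ.restrictScalars A).comp (IsScalarTower.toAlgHom A B (FractionRing B))
  left_inv σ := by ext x; simp
  right_inv τ := by
    apply AlgHom.coe_ringHom_injective
    apply IsLocalization.ringHom_ext (nonZeroDivisors B)
    ext x; simp

variable (A B Ω) in
theorem finite_algHom_of_finite : Finite (B →ₐ[A] Ω) :=
  Finite.of_equiv _ algHomEquivFractionRing.symm

variable (A B Ω) in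
theorem natCard_algHom_of_finite [CharZero A] [IsAlgClosed Ω] :
    Nat.card (B →ₐ[A] Ω) = Module.finrank A B := by
  rw [Nat.card_congr algHomEquivFractionRing, Nat.card_eq_fintype_card, AlgHom.card,
    IsFractionRing.finrank_eq A (FractionRing A) B (FractionRing B)]

variable (A) in
theorem isIntegral_norm_algebraMap (t : B) :
    IsIntegral A (Algebra.norm (FractionRing A) (algebraMap B (FractionRing B) t)) :=
  Algebra.isIntegral_norm _ (Algebra.IsIntegral.isIntegral (R := A) t).algebraMap

variable [IsIntegrallyClosed A]

variable (A) in
/-- The norm of a finite extension `B` of an integrally closed domain `A`. In contrast to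
`Algebra.intNorm`, the domain `B` need not be integrally closed. -/
def integralNorm : B →* A where
  toFun t := IsIntegralClosure.mk' (R := A) A
    (Algebra.norm (FractionRing A) (algebraMap B (FractionRing B) t))
    (isIntegral_norm_algebraMap A t)
  map_one' := by simp
  map_mul' x y := by simpa using IsIntegralClosure.mk'_mul _ _ _ _ _

theorem algebraMap_integralNorm (t : B) : algebraMap A (FractionRing A) (integralNorm A t)
    = Algebra.norm (FractionRing A) (algebraMap B (FractionRing B) t) :=
  IsIntegralClosure.algebraMap_mk' A _ (isIntegral_norm_algebraMap A t)

theorem integralNorm_ne_zero {t : B} (ht : t ≠ 0) : integralNorm A t ≠ 0 := fun h => by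
  have hnorm := algebraMap_integralNorm (A := A) t
  rw [h, map_zero, eq_comm, Algebra.norm_eq_zero_iff] at hnorm
  exact ht (IsFractionRing.injective B (FractionRing B) (hnorm.trans (map_zero _).symm))

theorem integralNorm_algebraMap (a : A) :
    integralNorm A (algebraMap A B a) = a ^ Module.finrank A B := by
  apply IsFractionRing.injective A (FractionRing A)
  rw [algebraMap_integralNorm, ← IsScalarTower.algebraMap_apply,
    IsScalarTower.algebraMap_apply A (FractionRing A) (FractionRing B), Algebra.norm_algebraMap,
    IsFractionRing.finrank_eq A (FractionRing A) B (FractionRing B), map_pow]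

theorem algebraMap_integralNorm_eq_prod [CharZero A] [IsAlgClosed Ω] [Fintype (B →ₐ[A] Ω)]
    (t : B) : algebraMap A Ω (integralNorm A t) = ∏ σ : B →ₐ[A] Ω, σ t := by
  rw [IsScalarTower.algebraMap_apply A (FractionRing A) Ω, algebraMap_integralNorm,
    Algebra.norm_eq_prod_embeddings (FractionRing A) Ω]
  refine (Fintype.prod_equiv algHomEquivFractionRing _ _ fun σ => ?_).symm
  simp [algHomEquivFractionRing]

theorem exists_integralNorm_eq_coeff_minpoly_pow (t : B) : ∃ m ≠ 0,
    integralNorm A t = ((-1) ^ (minpoly A t).natDegree * (minpoly A t).coeff 0) ^ m := by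
  let x : FractionRing B := algebraMap B (FractionRing B) t
  have hx : IsIntegral (FractionRing A) x := Algebra.IsIntegral.isIntegral x
  have ht : IsIntegral A t := Algebra.IsIntegral.isIntegral t
  have hminpoly : minpoly (FractionRing A) x = (minpoly A t).map (algebraMap A (FractionRing A)) :=
    minpoly.isIntegrallyClosed_eq_field_fractions (FractionRing A) (FractionRing B) ht
  have hnorm_gen := Algebra.PowerBasis.norm_gen_eq_coeff_zero_minpoly
    (IntermediateField.adjoin.powerBasis hx)
  rw [IntermediateField.adjoin.powerBasis_gen, IntermediateField.adjoin.powerBasis_dim,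
    IntermediateField.minpoly_gen, hminpoly, Polynomial.coeff_map,
    (minpoly.monic ht).natDegree_map] at hnorm_gen
  refine ⟨Module.finrank (IntermediateField.adjoin (FractionRing A) {x}) (FractionRing B),
    Module.finrank_pos.ne', IsFractionRing.injective A (FractionRing A) ?_⟩
  rw [algebraMap_integralNorm, Algebra.norm_eq_norm_adjoin, hnorm_gen]
  simp [x]

theorem dvd_algebraMap_integralNorm (t : B) : t ∣ algebraMap A B (integralNorm A t) := by
  obtain ⟨m, hm, hnorm⟩ := exists_integralNorm_eq_coeff_minpoly_pow (A := A) t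
  have hroot := minpoly.aeval A t
  rw [← Polynomial.divX_mul_X_add (minpoly A t), map_add, map_mul, Polynomial.aeval_X,
    Polynomial.aeval_C] at hroot
  rw [hnorm, map_pow, map_mul, eq_neg_of_add_eq_zero_right hroot]
  exact dvd_pow (((Dvd.intro_left _ rfl).neg_right).mul_left _) hm

theorem exists_isPrime_comap_eq_span_of_dvd_integralNorm {t : B} {q : A} (hq : Prime q)
    (hqt : q ∣ integralNorm A t) :
    ∃ Q : Ideal B, Q.IsPrime ∧ t ∈ Q ∧ Q.comap (algebraMap A B) = Ideal.span {q} := by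
  have hprime : (Ideal.span {q}).IsPrime := (Ideal.span_singleton_prime hq.ne_zero).mpr hq
  have hle : (Ideal.span {t}).comap (algebraMap A B) ≤ Ideal.span {q} := fun a ha => by
    obtain ⟨b, hb⟩ := Ideal.mem_span_singleton.mp (Ideal.mem_comap.mp ha)
    have hpow : a ^ Module.finrank A B = integralNorm A t * integralNorm A b := by
      rw [← integralNorm_algebraMap, hb, map_mul]
    exact Ideal.mem_span_singleton.mpr (hq.dvd_of_dvd_pow (hpow ▸ hqt.mul_right _))
  obtain ⟨Q, hQ, hQp, hQc⟩ := Ideal.exists_ideal_over_prime_of_isIntegral (Ideal.span {q})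
    (Ideal.span {t}) hle
  exact ⟨Q, hQp, hQ (Ideal.mem_span_singleton_self t), hQc⟩

theorem natDegree_minpoly_le_finrank (θ : B) :
    (minpoly A θ).natDegree ≤ Module.finrank A B := by
  have hθ : IsIntegral A θ := Algebra.IsIntegral.isIntegral θ
  rw [← IsFractionRing.finrank_eq A (FractionRing A) B (FractionRing B),
    ← (minpoly.monic hθ).natDegree_map (algebraMap A (FractionRing A)),
    ← minpoly.isIntegrallyClosed_eq_field_fractions (FractionRing A) (FractionRing B) hθ]
  exact minpoly.natDegree_le _

variable [CharZero A] [IsAlgClosed Ω]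

theorem map_minpoly_eq_prod_of_injective [Fintype (B →ₐ[A] Ω)] {θ : B}
    (hθ : Function.Injective fun σ : B →ₐ[A] Ω => σ θ) :
    (minpoly A θ).map (algebraMap A Ω)
      = ∏ σ : B →ₐ[A] Ω, (Polynomial.X - Polynomial.C (σ θ)) := by
  have hmonic := minpoly.monic (Algebra.IsIntegral.isIntegral (R := A) θ)
  refine Polynomial.eq_of_monic_of_dvd_of_natDegree_le
    (Polynomial.monic_prod_of_monic _ _ fun σ _ => Polynomial.monic_X_sub_C (σ θ))
    (hmonic.map _) (Finset.prod_dvd_of_coprime ?_ fun σ _ => ?_) ?_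
  · intro σ _ τ _ hne
    exact Polynomial.isCoprime_X_sub_C_of_isUnit_sub (sub_ne_zero.mpr fun h => hne (hθ h)).isUnit
  · rw [Polynomial.dvd_iff_isRoot, Polynomial.IsRoot, Polynomial.eval_map_algebraMap,
      Polynomial.aeval_algHom_apply, minpoly.aeval, map_zero]
  · rw [hmonic.natDegree_map,
      Polynomial.natDegree_prod_of_monic _ _ fun σ _ => Polynomial.monic_X_sub_C _]
    simpa [← natCard_algHom_of_finite A B Ω] using natDegree_minpoly_le_finrank (A := A) θ

theorem natDegree_minpoly_of_injective {θ : B}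
    (hθ : Function.Injective fun σ : B →ₐ[A] Ω => σ θ) :
    (minpoly A θ).natDegree = Module.finrank A B := by
  have : Finite (B →ₐ[A] Ω) := finite_algHom_of_finite A B Ω
  have := Fintype.ofFinite (B →ₐ[A] Ω)
  rw [← (minpoly.monic (Algebra.IsIntegral.isIntegral θ)).natDegree_map (algebraMap A Ω),
    map_minpoly_eq_prod_of_injective hθ,
    Polynomial.natDegree_prod_of_monic _ _ fun σ _ => Polynomial.monic_X_sub_C _]
  simp [← natCard_algHom_of_finite A B Ω]

end IntegralNorm

theorem submodule_pow_le_pow_of_one_mem {R B : Type*} [CommSemiring R] [Semiring B] [Algebra R B]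
    {V : Submodule R B} (h1 : (1 : B) ∈ V) {a b : ℕ} (h : a ≤ b) : V ^ a ≤ V ^ b :=
  pow_le_pow_right₀ (Submodule.one_le.mpr h1) h

/-- The powers of the generating space `V` exhaust the algebra. -/
def ExhaustedByPowers {R B : Type*} [CommSemiring R] [Semiring B] [Algebra R B]
    (V : Submodule R B) : Prop :=
  ∀ x : B, ∃ e : ℕ, x ∈ V ^ e

section FilteredFinite

variable {𝕜 : Type*} [Field 𝕜] {N : ℕ} {B : Type*} [CommRing B] [Algebra 𝕜 B]
  [Algebra (MvPolynomial (Fin N) 𝕜) B] {V : Submodule 𝕜 B}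

theorem exists_totalDegree_le_smul_sum_eq {ι : Type*} [Fintype ι] {m D : ℕ} {b : ι → B}
    (hD : ∀ x ∈ V ^ (m + D), ∃ a : ι → MvPolynomial (Fin N) 𝕜,
      (∀ j, (a j).totalDegree ≤ D) ∧ x = ∑ j, a j • b j)
    {y q : B} {z : Fin N → B} (hq : q ∈ V ^ D) (hy : y ∈ V ^ m) (hz : ∀ i, z i ∈ V ^ m) :
    ∃ a : ι → MvPolynomial (Fin N) 𝕜, (∀ j, (a j).totalDegree ≤ D + 1) ∧
      (y + ∑ i, algebraMap (MvPolynomial (Fin N) 𝕜) B (X i) * z i) * q = ∑ j, a j • b j := by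
  have hmul {w : B} (hw : w ∈ V ^ m) : w * q ∈ V ^ (m + D) :=
    pow_add V m D ▸ Submodule.mul_mem_mul hw hq
  obtain ⟨a, ha, hya⟩ := hD _ (hmul hy)
  choose c hc hzc using fun i => hD _ (hmul (hz i))
  refine ⟨fun j => a j + ∑ i, X i * c i j, fun j => ?_, ?_⟩
  · refine (totalDegree_add _ _).trans (max_le ((ha j).trans (Nat.le_succ D)) ?_)
    refine totalDegree_finsetSum_le fun i _ => (totalDegree_mul _ _).trans ?_
    rw [totalDegree_X, add_comm]
    exact Nat.succ_le_succ (hc i j)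
  · simp only [add_smul, Finset.sum_add_distrib, Finset.sum_smul, mul_smul]
    rw [Finset.sum_comm, add_mul, Finset.sum_mul, ← hya]
    congr 1
    refine Finset.sum_congr rfl fun i _ => ?_
    rw [← Finset.smul_sum, ← hzc, Algebra.smul_def, mul_assoc]

variable [IsScalarTower 𝕜 (MvPolynomial (Fin N) 𝕜) B]

theorem FilteredFinite.exists_generators [FiniteDimensional 𝕜 V]
    (h : FilteredFinite V fun i : Fin N => algebraMap (MvPolynomial (Fin N) 𝕜) B (X i)) :
    ∃ (m s : ℕ) (b : Fin s → B), ∀ D : ℕ, ∀ x ∈ V ^ (m + D),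
      ∃ a : Fin s → MvPolynomial (Fin N) 𝕜, (∀ j, (a j).totalDegree ≤ D) ∧ x = ∑ j, a j • b j := by
  obtain ⟨m, hm⟩ := h
  obtain ⟨s, b, hb⟩ := Submodule.fg_iff_exists_fin_generating_family.mp
    (((Submodule.fg_iff_finiteDimensional V).mpr inferInstance).pow m)
  refine ⟨m, s, b, fun D => ?_⟩
  induction D with
  | zero =>
    intro x hx
    rw [add_zero, ← hb] at hx
    obtain ⟨c, rfl⟩ := (Submodule.mem_span_range_iff_exists_fun 𝕜).mp hx
    refine ⟨fun j => C (c j), fun j => by simp, Finset.sum_congr rfl fun j _ => ?_⟩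
    rw [← MvPolynomial.algebraMap_eq, algebraMap_smul]
  | succ D ih =>
    intro x hx
    rw [show m + (D + 1) = (m + 1) + D by ring, pow_add] at hx
    refine Submodule.mul_induction_on hx (fun p hp q hq => ?_) ?_
    · obtain ⟨y, hy, z, hz, rfl⟩ := hm p hp
      exact exists_totalDegree_le_smul_sum_eq ih hq hy hz
    · rintro x y ⟨a, ha, rfl⟩ ⟨a', ha', rfl⟩
      refine ⟨fun j => a j + a' j, fun j =>
        (totalDegree_add _ _).trans (max_le (ha j) (ha' j)), ?_⟩
      simp only [add_smul, Finset.sum_add_distrib]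

theorem FilteredFinite.module_finite [FiniteDimensional 𝕜 V] (h1 : (1 : B) ∈ V)
    (hV : ExhaustedByPowers V)
    (h : FilteredFinite V fun i : Fin N => algebraMap (MvPolynomial (Fin N) 𝕜) B (X i)) :
    Module.Finite (MvPolynomial (Fin N) 𝕜) B := by
  obtain ⟨m, s, b, hb⟩ := h.exists_generators
  refine ⟨Submodule.fg_iff_exists_fin_generating_family.mpr ⟨s, b, eq_top_iff.mpr fun x _ => ?_⟩⟩
  obtain ⟨e, he⟩ := hV x
  obtain ⟨a, -, rfl⟩ := hb e x (submodule_pow_le_pow_of_one_mem h1 (Nat.le_add_left e m) he)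
  exact Submodule.sum_mem _ fun j _ => Submodule.smul_mem _ _ (Submodule.subset_span ⟨j, rfl⟩)

theorem faithfulSMul_of_finite_of_natTrdeg_eq [IsDomain B]
    [Module.Finite (MvPolynomial (Fin N) 𝕜) B] (hN : natTrdeg 𝕜 B = N) :
    FaithfulSMul (MvPolynomial (Fin N) 𝕜) B := by
  have : Algebra.FiniteType 𝕜 B :=
    (inferInstance : Algebra.FiniteType 𝕜 (MvPolynomial (Fin N) 𝕜)).trans inferInstance
  let f : MvPolynomial (Fin N) 𝕜 →ₐ[𝕜] B := IsScalarTower.toAlgHom 𝕜 _ B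
  rw [faithfulSMul_iff_algebraMap_injective, injective_iff_map_eq_zero]
  by_contra! ⟨y, hy, hy0⟩
  have hlt : natTrdeg 𝕜 f.range < N := by
    simpa [natTrdeg_mvPolynomial] using
      natTrdeg_lt_of_surjective f.rangeRestrict f.rangeRestrict_surjective (Subtype.ext hy) hy0
  have : Algebra.IsIntegral f.range B := ⟨fun x => by
    obtain ⟨p, hp, hpx⟩ := Algebra.IsIntegral.isIntegral (R := MvPolynomial (Fin N) 𝕜) x
    refine ⟨p.map f.rangeRestrict.toRingHom, hp.map _, ?_⟩
    rw [Polynomial.eval₂_map]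
    exact hpx⟩
  have : FaithfulSMul 𝕜 f.range :=
    (faithfulSMul_iff_algebraMap_injective 𝕜 f.range).mpr (algebraMap 𝕜 f.range).injective
  have htrdeg := trdeg_add_eq 𝕜 f.range (A := B)
  rw [trdeg_eq_zero (R := f.range), add_zero] at htrdeg
  have : natTrdeg 𝕜 f.range = natTrdeg 𝕜 B := congrArg Cardinal.toNat htrdeg
  omega

end FilteredFinite

section Coordinates

variable (A B : Type*) [CommRing A] [CommRing B] [Algebra A B]

/-- Coordinates of the elements of a finite extension, with a common denominator `den`, in a
maximal linearly independent family `vec`. -/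
structure FiniteCoordinates where
  den : A
  vec : Fin (Module.finrank A B) → B
  coord : B →ₗ[A] (Fin (Module.finrank A B) → A)
  den_ne_zero : den ≠ 0
  linearIndependent_vec : LinearIndependent A vec
  den_smul : ∀ x, den • x = ∑ i, coord x i • vec i

variable {A B}

namespace FiniteCoordinates

variable (c : FiniteCoordinates A B)

/-- The matrix of multiplication by `den • x` in the coordinates `c`. -/
def mulMatrix (x : B) : Matrix (Fin (Module.finrank A B)) (Fin (Module.finrank A B)) A :=
  Matrix.of fun i j => c.coord (x * c.vec j) i

theorem den_mul_mulMatrix (x : B) (i j : Fin (Module.finrank A B)) :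
    c.den * c.mulMatrix x i j = ∑ k, c.coord x k * c.mulMatrix (c.vec k) i j := by
  suffices h : ∑ i, (c.den * c.coord (x * c.vec j) i) • c.vec i
      = ∑ i, (∑ k, c.coord x k * c.coord (c.vec k * c.vec j) i) • c.vec i from
    congrFun (c.linearIndependent_vec.fintypeLinearCombination_injective
      (by simpa [Fintype.linearCombination_apply] using h)) i
  simp only [mul_smul, Finset.sum_smul]
  rw [← Finset.smul_sum, ← c.den_smul, Finset.sum_comm]
  simp only [← Finset.smul_sum, ← c.den_smul]
  rw [← smul_mul_assoc c.den x, c.den_smul x, Finset.sum_mul, Finset.smul_sum]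
  exact Finset.sum_congr rfl fun k _ => by rw [smul_mul_assoc, smul_comm]

end FiniteCoordinates

attribute [local instance] FractionRing.liftAlgebra FractionRing.isScalarTower_liftAlgebra

variable [IsDomain B] [FaithfulSMul A B]

theorem algebraMap_fractionRing_smul (a : A) (y : B) :
    algebraMap B (FractionRing B) (a • y)
      = algebraMap A (FractionRing A) a • algebraMap B (FractionRing B) y := by
  rw [Algebra.smul_def, map_mul, ← IsScalarTower.algebraMap_apply, algebraMap_smul,
    Algebra.smul_def]

theorem FiniteCoordinates.map_mulMatrix (c : FiniteCoordinates A B)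
    {b : Module.Basis (Fin (Module.finrank A B)) (FractionRing A) (FractionRing B)}
    (hb : ∀ i, b i = algebraMap B (FractionRing B) (c.vec i)) (x : B) :
    (c.mulMatrix x).map (algebraMap A (FractionRing A)) =
      algebraMap A (FractionRing A) c.den •
        Algebra.leftMulMatrix b (algebraMap B (FractionRing B) x) := by
  ext i j
  have hsum : algebraMap A (FractionRing A) c.den •
      (algebraMap B (FractionRing B) x * algebraMap B (FractionRing B) (c.vec j))
        = ∑ i, algebraMap A (FractionRing A) (c.coord (x * c.vec j) i) • b i := by
    rw [← map_mul, ← algebraMap_fractionRing_smul, c.den_smul, map_sum]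
    exact Finset.sum_congr rfl fun i _ => by rw [algebraMap_fractionRing_smul, hb]
  have hrepr := congrArg (fun y => b.repr y i) hsum
  simp only [map_smul, b.repr_sum_self, Finsupp.smul_apply, smul_eq_mul] at hrepr
  rw [Matrix.smul_apply, Algebra.leftMulMatrix_eq_repr_mul, hb, Matrix.map_apply, smul_eq_mul]
  exact hrepr.symm

variable [IsDomain A] [Module.Finite A B]

theorem exists_basis_fractionRing {ω : Fin (Module.finrank A B) → B} (hω : LinearIndependent A ω) :
    ∃ b : Module.Basis (Fin (Module.finrank A B)) (FractionRing A) (FractionRing B),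
      ∀ i, b i = algebraMap B (FractionRing B) (ω i) := by
  have hinj : LinearIndependent A fun i => algebraMap B (FractionRing B) (ω i) :=
    hω.map' (Algebra.linearMap B (FractionRing B) |>.restrictScalars A)
      (LinearMap.ker_eq_bot.mpr (IsFractionRing.injective B (FractionRing B)))
  have hindep := (LinearIndependent.iff_fractionRing A (FractionRing A)).mp hinj
  have : Nonempty (Fin (Module.finrank A B)) := ⟨⟨0, Module.finrank_pos⟩⟩
  have hcard := IsFractionRing.finrank_eq A (FractionRing A) B (FractionRing B)
  exact ⟨basisOfLinearIndependentOfCardEqFinrank hindep (by rw [hcard, Fintype.card_fin]),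
    fun i => by simp⟩

theorem exists_smul_mem_span_range {ω : Fin (Module.finrank A B) → B}
    (hω : LinearIndependent A ω) (x : B) :
    ∃ d : A, d ≠ 0 ∧ d • x ∈ Submodule.span A (Set.range ω) := by
  obtain ⟨b, hb⟩ := exists_basis_fractionRing hω
  obtain ⟨⟨d, hd⟩, hmultiple⟩ := IsLocalization.exist_integer_multiples (nonZeroDivisors A)
    Finset.univ fun i => b.repr (algebraMap B (FractionRing B) x) i
  choose c hc using fun i => hmultiple i (Finset.mem_univ i)
  have hsum : d • x = ∑ i, c i • ω i := by
    apply IsFractionRing.injective B (FractionRing B)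
    rw [algebraMap_fractionRing_smul, ← b.sum_repr (algebraMap B (FractionRing B) x), map_sum,
      Finset.smul_sum]
    refine Finset.sum_congr rfl fun i _ => ?_
    rw [algebraMap_fractionRing_smul, hc, hb, ← smul_assoc, ← algebraMap_smul (FractionRing A) d]
  exact ⟨d, nonZeroDivisors.ne_zero hd,
    hsum ▸ Submodule.sum_mem _ fun i _ => Submodule.smul_mem _ _ (Submodule.subset_span ⟨i, rfl⟩)⟩

theorem exists_forall_smul_mem_span_range {ω : Fin (Module.finrank A B) → B}
    (hω : LinearIndependent A ω) :
    ∃ d : A, d ≠ 0 ∧ ∀ x : B, d • x ∈ Submodule.span A (Set.range ω) := by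
  choose d hd0 hd using exists_smul_mem_span_range hω
  obtain ⟨S, hS⟩ := Module.Finite.fg_top (R := A) (M := B)
  refine ⟨∏ y ∈ S, d y, Finset.prod_ne_zero_iff.mpr fun y _ => hd0 y, fun x => ?_⟩
  have hxS : x ∈ Submodule.span A (S : Set B) := hS ▸ Submodule.mem_top
  induction hxS using Submodule.span_induction with
  | mem y hy =>
    rw [← Finset.prod_erase_mul S d hy, mul_smul]
    exact Submodule.smul_mem _ _ (hd y)
  | zero => simp
  | add y z _ _ hy hz => rw [smul_add]; exact add_mem hy hz
  | smul a y _ hy => rw [smul_comm]; exact Submodule.smul_mem _ _ hy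

variable (A B) in
theorem nonempty_finiteCoordinates : Nonempty (FiniteCoordinates A B) := by
  obtain ⟨ω, hω⟩ := exists_linearIndependent_of_le_finrank (R := A) (M := B) le_rfl
  obtain ⟨d, hd0, hd⟩ := exists_forall_smul_mem_span_range hω
  let basis := Module.Basis.span hω
  let mul : B →ₗ[A] Submodule.span A (Set.range ω) :=
    LinearMap.codRestrict _ (LinearMap.lsmul A B d) hd
  refine ⟨⟨d, ω, basis.equivFun.toLinearMap ∘ₗ mul, hd0, hω, fun x => ?_⟩⟩
  have hsum := congrArg Subtype.val (basis.sum_equivFun (mul x))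
  rw [AddSubmonoidClass.coe_finsetSum] at hsum
  refine hsum.symm.trans (Finset.sum_congr rfl fun i _ => ?_)
  rw [Submodule.coe_smul, Module.Basis.span_apply hω i]
  rfl

theorem FiniteCoordinates.det_mulMatrix [IsIntegrallyClosed A] (c : FiniteCoordinates A B) (x : B) :
    (c.mulMatrix x).det = c.den ^ Module.finrank A B * integralNorm A x := by
  obtain ⟨b, hb⟩ := exists_basis_fractionRing c.linearIndependent_vec
  apply IsFractionRing.injective A (FractionRing A)
  rw [RingHom.map_det, RingHom.mapMatrix_apply, c.map_mulMatrix hb, Matrix.det_smul,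
    ← Algebra.norm_eq_matrix_det, ← algebraMap_integralNorm, Fintype.card_fin, map_mul, map_pow]

end Coordinates

theorem pow_dvd_det_of_forall_dvd {R n : Type*} [CommRing R] [Fintype n] [DecidableEq n]
    {M : Matrix n n R} {a : R} (h : ∀ i j, a ∣ M i j) : a ^ Fintype.card n ∣ M.det := by
  choose M' hM' using h
  have hM : M = a • Matrix.of M' := Matrix.ext fun i j => by simp [hM']
  rw [hM, Matrix.det_smul]
  exact Dvd.intro _ rfl

theorem totalDegree_det_le {σ R n : Type*} [CommRing R] [Fintype n] [DecidableEq n] {E : ℕ}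
    (M : Matrix n n (MvPolynomial σ R)) (hM : ∀ i j, (M i j).totalDegree ≤ E) :
    M.det.totalDegree ≤ Fintype.card n * E := by
  rw [Matrix.det_apply]
  refine totalDegree_finsetSum_le fun τ _ => ?_
  have hprod : (∏ i, M (τ i) i).totalDegree ≤ Fintype.card n * E := by
    refine (totalDegree_finsetProd _ _).trans ?_
    simpa using Finset.sum_le_card_nsmul Finset.univ _ E fun i _ => hM (τ i) i
  rcases Int.units_eq_one_or (Equiv.Perm.sign τ) with hτ | hτ <;> simpa [hτ] using hprod

theorem totalDegree_pow_of_isDomain {σ R : Type*} [CommRing R] [IsDomain R] {p : MvPolynomial σ R}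
    (hp : p ≠ 0) (k : ℕ) : (p ^ k).totalDegree = k * p.totalDegree := by
  induction k with
  | zero => simp
  | succ k ih => rw [pow_succ, totalDegree_mul_of_isDomain (pow_ne_zero k hp) hp, ih]; ring

section LineExpansion

variable {𝕜 : Type*} [Field 𝕜] {N : ℕ} (pt : Fin N → 𝕜)

/-- The expansion `p(pt + X T)` of a polynomial along the generic line through the point `pt`. -/
def lineExpansion : MvPolynomial (Fin N) 𝕜 →ₐ[𝕜] Polynomial (MvPolynomial (Fin N) 𝕜) :=
  (reesHom (X : Fin N → MvPolynomial (Fin N) 𝕜)).comp (aeval fun i => X i + C (pt i))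

theorem lineExpansion_X (i : Fin N) :
    lineExpansion pt (X i) = Polynomial.C (X i) * Polynomial.X + Polynomial.C (C (pt i)) := by
  simp only [lineExpansion, AlgHom.comp_apply, aeval_X, map_add, reesHom]
  congr 1
  rw [← MvPolynomial.algebraMap_eq, AlgHom.commutes]
  rfl

theorem lineExpansion_injective : Function.Injective (lineExpansion pt) := by
  let evalOne : Polynomial (MvPolynomial (Fin N) 𝕜) →ₐ[𝕜] MvPolynomial (Fin N) 𝕜 :=
    (aeval fun i => X i - C (pt i)).comp
      ((Polynomial.aeval (1 : MvPolynomial (Fin N) 𝕜)).restrictScalars 𝕜)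
  have hinv : evalOne.comp (lineExpansion pt) = AlgHom.id 𝕜 _ := by
    ext i : 1
    simp only [evalOne, AlgHom.comp_apply, lineExpansion_X]
    simp [← MvPolynomial.algebraMap_eq]
  exact Function.LeftInverse.injective (g := evalOne) fun x => DFunLike.congr_fun hinv x

theorem natDegree_lineExpansion_le (p : MvPolynomial (Fin N) 𝕜) :
    (lineExpansion pt p).natDegree ≤ p.totalDegree := by
  conv_lhs => rw [p.as_sum, map_sum]
  refine Polynomial.natDegree_sum_le_of_forall_le _ _ fun α hα => ?_
  have hC : (lineExpansion pt (C (coeff α p))).natDegree = 0 := by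
    rw [← MvPolynomial.algebraMap_eq, AlgHom.commutes]
    exact Polynomial.natDegree_C _
  have hX (i : Fin N) : (lineExpansion pt (X i ^ α i)).natDegree ≤ α i := by
    rw [map_pow, lineExpansion_X]
    exact Polynomial.natDegree_pow_le_of_le _ Polynomial.natDegree_linear_le |>.trans_eq (mul_one _)
  rw [monomial_eq, map_mul, Finsupp.prod_fintype _ _ (by simp), map_prod]
  calc _ ≤ ∑ i, α i := by
        refine Polynomial.natDegree_mul_le.trans ?_
        rw [hC, zero_add]
        exact (Polynomial.natDegree_prod_le _ _).trans (Finset.sum_le_sum fun i _ => hX i)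
    _ ≤ p.totalDegree := by
        simpa [Finsupp.sum_fintype] using le_totalDegree hα

variable {pt}

theorem not_X_dvd_lineExpansion {p : MvPolynomial (Fin N) 𝕜} (hp : eval pt p ≠ 0) :
    ¬ Polynomial.X ∣ lineExpansion pt p := by
  rw [Polynomial.X_dvd_iff, Polynomial.coeff_zero_eq_aeval_zero]
  intro h
  have hconst : ((Polynomial.aeval (0 : MvPolynomial (Fin N) 𝕜)).restrictScalars 𝕜).comp
      (lineExpansion pt) = (Algebra.ofId 𝕜 _).comp (aeval pt) := by
    ext i : 1
    simp only [AlgHom.comp_apply, lineExpansion_X]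
    simp [Algebra.ofId_apply]
  have heval : C (aeval pt p) = (0 : MvPolynomial (Fin N) 𝕜) :=
    (DFunLike.congr_fun hconst p).symm.trans h
  exact hp (by simpa [aeval_eq_eval] using heval)

theorem X_pow_dvd_lineExpansion {D : ℕ} {p : MvPolynomial (Fin N) 𝕜}
    (hp : ∀ α : Fin N →₀ ℕ, α.degree ≤ D →
      coeff α (aeval (fun i => X i + C (pt i)) p : MvPolynomial (Fin N) 𝕜) = 0) :
    Polynomial.X ^ (D + 1) ∣ lineExpansion pt p := by
  rw [lineExpansion, AlgHom.comp_apply]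
  set q : MvPolynomial (Fin N) 𝕜 := aeval (fun i => X i + C (pt i)) p
  rw [← sum_homogeneousComponent q, map_sum]
  refine Finset.dvd_sum fun d _ => ?_
  rw [reesHom_of_isHomogeneous _ (homogeneousComponent_isHomogeneous d q)]
  rcases le_or_gt d D with hd | hd
  · have hcomp : homogeneousComponent d q = 0 := by
      ext α
      rw [coeff_homogeneousComponent, coeff_zero]
      split_ifs with hα
      · exact hp α (hα.le.trans hd)
      · rfl
    simp [hcomp]
  · exact (pow_dvd_pow _ hd).mul_left _

end LineExpansion

section MonomialCount

/-- The exponents of the monomials of degree at most `D` in `N` variables. -/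
abbrev ExponentSimplex (N D : ℕ) : Type := {α : Fin N →₀ ℕ // α.degree ≤ D}

/-- The Hilbert function of affine `N`-space: the dimension of the space of polynomials of degree
at most `D` in `N` variables. -/
def affineHilbert (N D : ℕ) : ℕ := Nat.card (ExponentSimplex N D)

theorem ExponentSimplex.exists_injective (N D : ℕ) :
    ∃ f : ExponentSimplex N D → (Fin N → Fin (D + 1)), Function.Injective f :=
  ⟨fun α i => ⟨α.1 i, Nat.lt_succ_of_le ((Finsupp.le_degree i α.1).trans α.2)⟩, fun α β hαβ =>
    Subtype.ext (Finsupp.ext fun i => by simpa using congrFun hαβ i)⟩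

instance ExponentSimplex.finite (N D : ℕ) : Finite (ExponentSimplex N D) :=
  let ⟨_, hf⟩ := ExponentSimplex.exists_injective N D
  Finite.of_injective _ hf

theorem affineHilbert_pos (N D : ℕ) : 0 < affineHilbert N D :=
  have : Nonempty (ExponentSimplex N D) := ⟨⟨0, by simp⟩⟩
  Nat.card_pos

theorem affineHilbert_le (N D : ℕ) : affineHilbert N D ≤ (D + 1) ^ N := by
  obtain ⟨_, hf⟩ := ExponentSimplex.exists_injective N D
  exact (Nat.card_le_card_of_injective _ hf).trans_eq (by simp)

theorem pow_le_affineHilbert (N E : ℕ) : (E + 1) ^ N ≤ affineHilbert N (N * E) := by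
  have hcard : Nat.card (Fin N → Fin (E + 1)) ≤ affineHilbert N (N * E) := by
    refine Nat.card_le_card_of_injective
      (fun a => ⟨Finsupp.equivFunOnFinite.symm fun i => (a i : ℕ), ?_⟩) fun a b hab => ?_
    · rw [Finsupp.degree_eq_sum]
      simpa using Finset.sum_le_card_nsmul Finset.univ (fun i => (a i : ℕ)) E
        fun i _ => Nat.le_of_lt_succ (a i).2
    · ext i
      simpa using DFunLike.congr_fun (congrArg Subtype.val hab) i
  simpa [Nat.card_eq_fintype_card] using hcard

theorem exists_mul_pow_mul_pow_lt_pow {a b : ℕ} (hba : b < a) (c N : ℕ) :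
    ∃ j, 1 ≤ j ∧ c * j ^ N * b ^ j < a ^ j := by
  rcases Nat.eq_zero_or_pos b with rfl | hb
  · exact ⟨1, le_rfl, by simpa using hba⟩
  have hratio : (1 : ℝ) < a / b := by
    rw [one_lt_div (by exact_mod_cast hb)]
    exact_mod_cast hba
  have hlim := (tendsto_pow_const_div_const_pow_of_one_lt N hratio).const_mul (c : ℝ)
  rw [mul_zero] at hlim
  obtain ⟨j, hj, hj1⟩ := ((hlim.eventually (gt_mem_nhds one_pos)).and
    (Filter.eventually_ge_atTop 1)).exists
  rw [mul_div_assoc', div_lt_one (by positivity), div_pow, lt_div_iff₀ (by positivity)] at hj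
  exact ⟨j, hj1, by exact_mod_cast hj⟩

theorem le_of_forall_mul_le_mul_shift {h : ℕ → ℕ} {N a b k : ℕ} (hpos : ∀ D, 0 < h D)
    (hpoly : ∀ D, h D ≤ (D + 1) ^ N) (hab : ∀ D, a * h D ≤ b * h (D + k)) : a ≤ b := by
  by_contra! hlt
  have hexp (j : ℕ) : a ^ j ≤ b ^ j * h (j * k) := by
    induction j with
    | zero => simpa using Nat.succ_le_of_lt (hpos 0)
    | succ j ih =>
      calc a ^ (j + 1) = a * a ^ j := pow_succ' a j
        _ ≤ a * (b ^ j * h (j * k)) := Nat.mul_le_mul_left _ ih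
        _ = b ^ j * (a * h (j * k)) := by ring
        _ ≤ b ^ j * (b * h (j * k + k)) := Nat.mul_le_mul_left _ (hab (j * k))
        _ = b ^ (j + 1) * h ((j + 1) * k) := by rw [Nat.succ_mul]; ring
  obtain ⟨j, hj1, hj⟩ := exists_mul_pow_mul_pow_lt_pow hlt ((k + 1) ^ N) N
  have hgrowth : h (j * k) ≤ (k + 1) ^ N * j ^ N := by
    refine (hpoly _).trans ?_
    rw [← mul_pow]
    exact Nat.pow_le_pow_left (by nlinarith) N
  have := (hexp j).trans (Nat.mul_le_mul_left (b ^ j) hgrowth)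
  linarith

end MonomialCount

theorem X_pow_dvd_lineExpansion_integralNorm {𝕜 : Type*} [Field 𝕜] {N : ℕ} {B : Type*}
    [CommRing B] [IsDomain B] [Algebra (MvPolynomial (Fin N) 𝕜) B]
    [Module.Finite (MvPolynomial (Fin N) 𝕜) B] [FaithfulSMul (MvPolynomial (Fin N) 𝕜) B]
    {c : FiniteCoordinates (MvPolynomial (Fin N) 𝕜) B} {pt : Fin N → 𝕜} (hpt : eval pt c.den ≠ 0)
    {x : B} {D : ℕ} (hx : ∀ i, Polynomial.X ^ D ∣ lineExpansion pt (c.coord x i)) :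
    Polynomial.X ^ (D * Module.finrank (MvPolynomial (Fin N) 𝕜) B)
      ∣ lineExpansion pt (integralNorm (MvPolynomial (Fin N) 𝕜) x) := by
  have hprime : Prime (Polynomial.X : Polynomial (MvPolynomial (Fin N) 𝕜)) := Polynomial.prime_X
  have hentry (i j) : Polynomial.X ^ D ∣ lineExpansion pt (c.mulMatrix x i j) := by
    refine hprime.pow_dvd_of_dvd_mul_left _ (not_X_dvd_lineExpansion hpt) ?_
    rw [← map_mul, c.den_mul_mulMatrix, map_sum]
    exact Finset.dvd_sum fun k _ => by
      rw [map_mul]; exact (hx k).mul_right _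
  have hdet : (Polynomial.X ^ D) ^ Fintype.card (Fin (Module.finrank (MvPolynomial (Fin N) 𝕜) B)) ∣
      lineExpansion pt (c.mulMatrix x).det :=
    AlgHom.map_det (lineExpansion pt) (c.mulMatrix x) ▸ pow_dvd_det_of_forall_dvd hentry
  rw [c.det_mulMatrix, map_mul, ← pow_mul, Fintype.card_fin] at hdet
  refine hprime.pow_dvd_of_dvd_mul_left _ (fun hd => ?_) hdet
  rw [map_pow] at hd
  exact not_X_dvd_lineExpansion hpt (hprime.dvd_of_dvd_pow hd)

section Filtration

variable {𝕜 : Type*} [Field 𝕜] {N : ℕ} {B : Type*} [CommRing B] [Algebra 𝕜 B]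
  {V : Submodule 𝕜 B}

theorem ExhaustedByPowers.exists_forall_mem (hV : ExhaustedByPowers V) (h1 : (1 : B) ∈ V)
    {ι : Type*} [Finite ι] (b : ι → B) : ∃ e, ∀ j, b j ∈ V ^ e := by
  have := Fintype.ofFinite ι
  choose e he using fun j => hV (b j)
  exact ⟨Finset.univ.sup e, fun j =>
    submodule_pow_le_pow_of_one_mem h1 (Finset.le_sup (Finset.mem_univ j)) (he j)⟩

theorem finiteDimensional_pow (V : Submodule 𝕜 B) [FiniteDimensional 𝕜 V] (n : ℕ) :
    FiniteDimensional 𝕜 (V ^ n : Submodule 𝕜 B) :=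
  (Submodule.fg_iff_finiteDimensional _).mp
    (((Submodule.fg_iff_finiteDimensional V).mpr inferInstance).pow _)

variable [Algebra (MvPolynomial (Fin N) 𝕜) B]

theorem algebraMap_monomial_one_mem_pow (h1 : (1 : B) ∈ V)
    (hX : ∀ i, algebraMap (MvPolynomial (Fin N) 𝕜) B (X i) ∈ V) {α : Fin N →₀ ℕ} {D : ℕ}
    (hα : α.degree ≤ D) : algebraMap (MvPolynomial (Fin N) 𝕜) B (monomial α 1) ∈ V ^ D := by
  refine submodule_pow_le_pow_of_one_mem h1 hα ?_
  rw [monomial_eq, map_one, one_mul, Finsupp.prod_fintype _ _ (by simp), Finsupp.degree_eq_sum,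
    map_prod]
  induction (Finset.univ : Finset (Fin N)) using Finset.induction_on with
  | empty => simpa using ⟨1, map_one (algebraMap 𝕜 B)⟩
  | insert i s hi ih =>
    rw [Finset.prod_insert hi, Finset.sum_insert hi, pow_add, map_pow]
    exact Submodule.mul_mem_mul (Submodule.pow_mem_pow _ (hX i) _) ih

variable [IsScalarTower 𝕜 (MvPolynomial (Fin N) 𝕜) B]

theorem FilteredFinite.exists_totalDegree_coord_le [FiniteDimensional 𝕜 V] (h1 : (1 : B) ∈ V)
    (h : FilteredFinite V fun i : Fin N => algebraMap (MvPolynomial (Fin N) 𝕜) B (X i))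
    (c : FiniteCoordinates (MvPolynomial (Fin N) 𝕜) B) :
    ∃ k : ℕ, ∀ D : ℕ, ∀ x ∈ V ^ D, ∀ i, (c.coord x i).totalDegree ≤ D + k := by
  obtain ⟨m, s, b, hb⟩ := h.exists_generators
  let deg (p : Fin s × Fin (Module.finrank (MvPolynomial (Fin N) 𝕜) B)) : ℕ :=
    (c.coord (b p.1) p.2).totalDegree
  refine ⟨Finset.univ.sup deg, fun D x hx i => ?_⟩
  obtain ⟨a, ha, rfl⟩ := hb D x (submodule_pow_le_pow_of_one_mem h1 (Nat.le_add_left D m) hx)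
  rw [map_sum, Finset.sum_apply]
  refine totalDegree_finsetSum_le fun j _ => ?_
  rw [map_smul, Pi.smul_apply, smul_eq_mul]
  exact (totalDegree_mul _ _).trans
    (add_le_add (ha j) (Finset.le_sup (f := deg) (Finset.mem_univ (j, i))))

variable [IsDomain B] [Module.Finite (MvPolynomial (Fin N) 𝕜) B]
  [FaithfulSMul (MvPolynomial (Fin N) 𝕜) B] [FiniteDimensional 𝕜 V]

-- Comparing `N(t ^ j)` with `N(t) ^ j` and letting `j → ∞` removes the bounded error terms.
theorem totalDegree_integralNorm_le (h1 : (1 : B) ∈ V) (hV : ExhaustedByPowers V)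
    (h : FilteredFinite V fun i : Fin N => algebraMap (MvPolynomial (Fin N) 𝕜) B (X i))
    {e : ℕ} {t : B} (ht : t ∈ V ^ e) :
    (integralNorm (MvPolynomial (Fin N) 𝕜) t).totalDegree
      ≤ e * Module.finrank (MvPolynomial (Fin N) 𝕜) B := by
  set δ := Module.finrank (MvPolynomial (Fin N) 𝕜) B
  set ν := integralNorm (MvPolynomial (Fin N) 𝕜) t with hν
  by_cases hν0 : ν = 0
  · simp [hν0]
  obtain ⟨c⟩ := nonempty_finiteCoordinates (MvPolynomial (Fin N) 𝕜) B
  obtain ⟨k, hk⟩ := h.exists_totalDegree_coord_le h1 c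
  obtain ⟨f, hf⟩ := hV.exists_forall_mem h1 c.vec
  have hpow (j : ℕ) : j * ν.totalDegree ≤ δ * (e * j + f + k) := by
    have hdet := totalDegree_det_le (c.mulMatrix (t ^ j)) (E := e * j + f + k) fun i i' => by
      refine hk _ _ ?_ i
      rw [pow_add, pow_mul]
      exact Submodule.mul_mem_mul (Submodule.pow_mem_pow _ ht j) (hf i')
    rw [c.det_mulMatrix, map_pow, ← hν, totalDegree_mul_of_isDomain
      (pow_ne_zero _ c.den_ne_zero) (pow_ne_zero _ hν0), totalDegree_pow_of_isDomain hν0,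
      Fintype.card_fin] at hdet
    exact (Nat.le_add_left _ _).trans hdet
  by_contra! hlt
  nlinarith [hpow (δ * (f + k) + 1), Nat.mul_le_mul_left (δ * (f + k) + 1) hlt]

-- An element of `V ^ D` is determined by the Taylor coefficients of degree at most `D` of its
-- coordinates at a point where the denominator does not vanish: its norm would otherwise vanish
-- there to an order exceeding its degree.
theorem eq_zero_of_X_pow_dvd_lineExpansion_coord (h1 : (1 : B) ∈ V) (hV : ExhaustedByPowers V)
    (h : FilteredFinite V fun i : Fin N => algebraMap (MvPolynomial (Fin N) 𝕜) B (X i))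
    {c : FiniteCoordinates (MvPolynomial (Fin N) 𝕜) B} {pt : Fin N → 𝕜} (hpt : eval pt c.den ≠ 0)
    {x : B} {D : ℕ} (hxD : x ∈ V ^ D)
    (hx : ∀ i, Polynomial.X ^ (D + 1) ∣ lineExpansion pt (c.coord x i)) : x = 0 := by
  by_contra hx0
  have hν0 : lineExpansion pt (integralNorm (MvPolynomial (Fin N) 𝕜) x) ≠ 0 := fun h0 =>
    integralNorm_ne_zero (A := MvPolynomial (Fin N) 𝕜) hx0
      (lineExpansion_injective pt (h0.trans (map_zero _).symm))
  have hle := Polynomial.natDegree_le_of_dvd (X_pow_dvd_lineExpansion_integralNorm hpt hx) hν0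
  rw [Polynomial.natDegree_X_pow] at hle
  have hδ : 0 < Module.finrank (MvPolynomial (Fin N) 𝕜) B := Module.finrank_pos
  have := (hle.trans (natDegree_lineExpansion_le pt _)).trans
    (totalDegree_integralNorm_le h1 hV h hxD)
  nlinarith

theorem finrank_pow_le_mul_affineHilbert [Infinite 𝕜] (h1 : (1 : B) ∈ V)
    (hV : ExhaustedByPowers V)
    (h : FilteredFinite V fun i : Fin N => algebraMap (MvPolynomial (Fin N) 𝕜) B (X i)) (D : ℕ) :
    Module.finrank 𝕜 (V ^ D : Submodule 𝕜 B)
      ≤ Module.finrank (MvPolynomial (Fin N) 𝕜) B * affineHilbert N D := by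
  obtain ⟨c⟩ := nonempty_finiteCoordinates (MvPolynomial (Fin N) 𝕜) B
  obtain ⟨pt, hpt⟩ : ∃ pt, eval pt c.den ≠ 0 := by
    by_contra! hall
    exact c.den_ne_zero (MvPolynomial.funext fun x => by simpa using hall x)
  have : Fintype (ExponentSimplex N D) := Fintype.ofFinite _
  let taylor : (V ^ D : Submodule 𝕜 B) →ₗ[𝕜] (Fin _ → ExponentSimplex N D → 𝕜) :=
    LinearMap.pi fun i => LinearMap.pi fun α =>
      lcoeff 𝕜 α.1 ∘ₗ
        (aeval (R := 𝕜) fun i => (X i + C (pt i) : MvPolynomial (Fin N) 𝕜)).toLinearMap ∘ₗ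
      LinearMap.proj i ∘ₗ c.coord.restrictScalars 𝕜 ∘ₗ (V ^ D : Submodule 𝕜 B).subtype
  have htaylor : Function.Injective taylor := by
    refine (injective_iff_map_eq_zero taylor).mpr fun x hx => Subtype.ext ?_
    exact eq_zero_of_X_pow_dvd_lineExpansion_coord h1 hV h hpt x.2 fun i =>
      X_pow_dvd_lineExpansion fun α hα => congrFun (congrFun hx i) ⟨α, hα⟩
  have hfinrank := LinearMap.finrank_le_finrank_of_injective htaylor
  rwa [Module.finrank_pi_fintype, Finset.sum_const, Module.finrank_fintype_fun_eq_card,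
    Finset.card_univ, Fintype.card_fin, smul_eq_mul, ← Nat.card_eq_fintype_card] at hfinrank

theorem exists_mul_affineHilbert_le_finrank_pow (h1 : (1 : B) ∈ V) (hV : ExhaustedByPowers V)
    (hX : ∀ i, algebraMap (MvPolynomial (Fin N) 𝕜) B (X i) ∈ V) :
    ∃ k : ℕ, ∀ D : ℕ, Module.finrank (MvPolynomial (Fin N) 𝕜) B * affineHilbert N D
      ≤ Module.finrank 𝕜 (V ^ (D + k) : Submodule 𝕜 B) := by
  obtain ⟨c⟩ := nonempty_finiteCoordinates (MvPolynomial (Fin N) 𝕜) B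
  obtain ⟨k, hk⟩ := hV.exists_forall_mem h1 c.vec
  refine ⟨k, fun D => ?_⟩
  have : Fintype (ExponentSimplex N D) := Fintype.ofFinite _
  have hmonomial : LinearIndependent 𝕜 fun α : ExponentSimplex N D =>
      (monomial α.1 (1 : 𝕜) : MvPolynomial (Fin N) 𝕜) :=
    (basisMonomials (Fin N) 𝕜).linearIndependent.comp _ Subtype.val_injective
  have hindep := linearIndependent_smul hmonomial c.linearIndependent_vec
  have hspan : Submodule.span 𝕜 (Set.range fun p : ExponentSimplex N D × Fin _ =>
      (monomial p.1.1 (1 : 𝕜) : MvPolynomial (Fin N) 𝕜) • c.vec p.2) ≤ V ^ (D + k) := by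
    rw [Submodule.span_le]
    rintro _ ⟨p, rfl⟩
    simp only [SetLike.mem_coe, Algebra.smul_def, pow_add]
    exact Submodule.mul_mem_mul (algebraMap_monomial_one_mem_pow h1 hX p.1.2) (hk p.2)
  have := finiteDimensional_pow V (D + k)
  have hfinrank := Submodule.finrank_mono hspan
  rwa [finrank_span_eq_card hindep, Fintype.card_prod, Fintype.card_fin,
    ← Nat.card_eq_fintype_card, mul_comm] at hfinrank

end Filtration

section FiltrationDegree

variable {𝕜 : Type*} [Field 𝕜] {B : Type*} [CommRing B] [Algebra 𝕜 B]

/-- The degree of the filtration of `B` by the powers of `V`: the smallest `δ` for which the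
Hilbert function of the filtration is at most `δ` times a shift of the Hilbert function of the
affine space of the same dimension. -/
def filtrationDegree (V : Submodule 𝕜 B) : ℕ :=
  sInf {δ | ∃ k, ∀ D, Module.finrank 𝕜 (V ^ D : Submodule 𝕜 B)
    ≤ δ * affineHilbert (natTrdeg 𝕜 B) (D + k)}

variable [Infinite 𝕜] [IsDomain B]

theorem finrank_eq_filtrationDegree {N : ℕ} [Algebra (MvPolynomial (Fin N) 𝕜) B]
    [IsScalarTower 𝕜 (MvPolynomial (Fin N) 𝕜) B] [Module.Finite (MvPolynomial (Fin N) 𝕜) B]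
    [FaithfulSMul (MvPolynomial (Fin N) 𝕜) B] {V : Submodule 𝕜 B} [FiniteDimensional 𝕜 V]
    (h1 : (1 : B) ∈ V) (hV : ExhaustedByPowers V)
    (h : FilteredFinite V fun i : Fin N => algebraMap (MvPolynomial (Fin N) 𝕜) B (X i))
    (hX : ∀ i, algebraMap (MvPolynomial (Fin N) 𝕜) B (X i) ∈ V) (hN : natTrdeg 𝕜 B = N) :
    Module.finrank (MvPolynomial (Fin N) 𝕜) B = filtrationDegree V := by
  have hmem : Module.finrank (MvPolynomial (Fin N) 𝕜) B ∈ {δ | ∃ k, ∀ D,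
      Module.finrank 𝕜 (V ^ D : Submodule 𝕜 B) ≤ δ * affineHilbert (natTrdeg 𝕜 B) (D + k)} :=
    ⟨0, fun D => by rw [add_zero, hN]; exact finrank_pow_le_mul_affineHilbert h1 hV h D⟩
  refine le_antisymm (le_csInf ⟨_, hmem⟩ ?_) (Nat.sInf_le hmem)
  rintro δ ⟨k', hk'⟩
  obtain ⟨k, hk⟩ := exists_mul_affineHilbert_le_finrank_pow h1 hV hX
  refine le_of_forall_mul_le_mul_shift (k := k + k') (affineHilbert_pos N) (affineHilbert_le N)
    fun D => ?_
  simpa [hN, add_assoc] using (hk D).trans (hk' (D + k))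

variable [Algebra.FiniteType 𝕜 B]

theorem exists_filteredFinite (V : Submodule 𝕜 B) [FiniteDimensional 𝕜 V] (h1 : (1 : B) ∈ V) :
    ∃ Y : Fin (natTrdeg 𝕜 B) → B, (∀ i, Y i ∈ V) ∧ FilteredFinite V Y := by
  let b := Module.finBasis 𝕜 V
  have hspan : Submodule.span 𝕜 (Set.range fun j => (b j : B)) = V := by
    have := congrArg (Submodule.map V.subtype) b.span_eq
    rwa [Submodule.map_span, ← Set.range_comp, Submodule.map_top, Submodule.range_subtype] at this
  obtain ⟨l, hl⟩ := (eventually_filteredFinite (fun j => (b j : B)) (hspan ▸ h1)).exists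
  rw [hspan] at hl
  exact ⟨_, fun i => Submodule.sum_mem _ fun j _ => Submodule.smul_mem _ _ (b j).2, hl⟩

theorem filtrationDegree_asymptotics (V : Submodule 𝕜 B) [FiniteDimensional 𝕜 V] (h1 : (1 : B) ∈ V)
    (hV : ExhaustedByPowers V) :
    0 < filtrationDegree V ∧
    (∀ D, Module.finrank 𝕜 (V ^ D : Submodule 𝕜 B)
      ≤ filtrationDegree V * affineHilbert (natTrdeg 𝕜 B) D) ∧
    ∃ k : ℕ, ∀ D : ℕ, filtrationDegree V * affineHilbert (natTrdeg 𝕜 B) D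
      ≤ Module.finrank 𝕜 (V ^ (D + k) : Submodule 𝕜 B) := by
  obtain ⟨Y, hYV, hY⟩ := exists_filteredFinite V h1
  let _ := (aeval (R := 𝕜) Y).toAlgebra
  have hmap (i) : algebraMap (MvPolynomial (Fin (natTrdeg 𝕜 B)) 𝕜) B (X i) = Y i := aeval_X Y i
  have : IsScalarTower 𝕜 (MvPolynomial (Fin (natTrdeg 𝕜 B)) 𝕜) B :=
    IsScalarTower.of_algebraMap_eq fun z => ((aeval (R := 𝕜) Y).commutes z).symm
  have hX (i) : algebraMap (MvPolynomial (Fin (natTrdeg 𝕜 B)) 𝕜) B (X i) ∈ V := hmap i ▸ hYV i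
  have hY' : FilteredFinite V fun i =>
      algebraMap (MvPolynomial (Fin (natTrdeg 𝕜 B)) 𝕜) B (X i) := by
    simpa only [hmap] using hY
  have : Module.Finite (MvPolynomial (Fin (natTrdeg 𝕜 B)) 𝕜) B := hY'.module_finite h1 hV
  have : FaithfulSMul (MvPolynomial (Fin (natTrdeg 𝕜 B)) 𝕜) B :=
    faithfulSMul_of_finite_of_natTrdeg_eq rfl
  rw [← finrank_eq_filtrationDegree h1 hV hY' hX rfl]
  exact ⟨Module.finrank_pos, finrank_pow_le_mul_affineHilbert h1 hV hY',
    exists_mul_affineHilbert_le_finrank_pow h1 hV hX⟩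

theorem filtrationDegree_mono {V W : Submodule 𝕜 B} [FiniteDimensional 𝕜 V]
    [FiniteDimensional 𝕜 W] (h1 : (1 : B) ∈ V) (hV : ExhaustedByPowers V)
    (hW : ExhaustedByPowers W) (hVW : V ≤ W) : filtrationDegree V ≤ filtrationDegree W := by
  obtain ⟨-, -, k, hk⟩ := filtrationDegree_asymptotics V h1 hV
  obtain ⟨-, hle, -⟩ := filtrationDegree_asymptotics W (hVW h1) hW
  refine le_of_forall_mul_le_mul_shift (k := k) (affineHilbert_pos (natTrdeg 𝕜 B))
    (affineHilbert_le _) fun D => ?_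
  have := finiteDimensional_pow W (D + k)
  exact ((hk D).trans (Submodule.finrank_mono (pow_le_pow_left' hVW _))).trans (hle _)

end FiltrationDegree

section Box

/-- The space of polynomials of degree at most `c i` in the `i`-th variable, for each `i`. -/
def box (𝕜 : Type*) [Field 𝕜] {r : ℕ} (c : Fin r → ℕ) : Submodule 𝕜 (MvPolynomial (Fin r) 𝕜) :=
  restrictSupport 𝕜 {s | ∀ i, s i ≤ c i}

variable {𝕜 : Type*} [Field 𝕜] {r : ℕ}

theorem mem_box_iff {c : Fin r → ℕ} {p : MvPolynomial (Fin r) 𝕜} :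
    p ∈ box 𝕜 c ↔ ∀ s ∈ p.support, ∀ i, s i ≤ c i := Iff.rfl

theorem finrank_box (c : Fin r → ℕ) : Module.finrank 𝕜 (box 𝕜 c) = ∏ i, (c i + 1) := by
  let e : {s : Fin r →₀ ℕ | ∀ i, s i ≤ c i} ≃ ((i : Fin r) → Fin (c i + 1)) :=
    { toFun := fun s i => ⟨s.1 i, Nat.lt_succ_of_le (s.2 i)⟩
      invFun := fun a => ⟨Finsupp.equivFunOnFinite.symm fun i => (a i : ℕ),
        fun i => Nat.le_of_lt_succ (a i).2⟩
      left_inv := fun s => Subtype.ext (Finsupp.ext fun i => rfl)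
      right_inv := fun a => rfl }
  rw [box, Module.finrank_eq_nat_card_basis (basisRestrictSupport 𝕜 _), Nat.card_congr e]
  simp [Nat.card_eq_fintype_card]

instance finiteDimensional_box (c : Fin r → ℕ) : FiniteDimensional 𝕜 (box 𝕜 c) :=
  Module.finite_of_finrank_pos (by rw [finrank_box]; positivity)

theorem box_mul (c c' : Fin r → ℕ) : box 𝕜 c * box 𝕜 c' = box 𝕜 (c + c') := by
  rw [box, box, box, ← restrictSupport_add]
  congr 1
  ext s
  constructor
  · rintro ⟨a, ha, b, hb, rfl⟩ i
    exact add_le_add (ha i) (hb i)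
  · intro hs
    refine ⟨Finsupp.equivFunOnFinite.symm fun i => min (s i) (c i), fun i => min_le_right _ _,
      Finsupp.equivFunOnFinite.symm fun i => s i - c i, fun i => ?_, ?_⟩
    · exact Nat.sub_le_iff_le_add'.mpr (hs i)
    · ext i
      change min (s i) (c i) + (s i - c i) = s i
      omega

theorem box_zero : box 𝕜 (0 : Fin r → ℕ) = 1 := by
  rw [box, ← restrictSupport_zero]
  congr 1
  ext s
  simp [Finsupp.ext_iff]

theorem box_pow (c : Fin r → ℕ) (e : ℕ) : box 𝕜 c ^ e = box 𝕜 (e • c) := by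
  induction e with
  | zero => rw [pow_zero, zero_smul, box_zero]
  | succ e ih => rw [pow_succ, ih, box_mul, succ_nsmul]

theorem box_mono {c c' : Fin r → ℕ} (h : c ≤ c') : box 𝕜 c ≤ box 𝕜 c' :=
  restrictSupport_mono 𝕜 fun _ hs i => (hs i).trans (h i)

theorem one_mem_box (c : Fin r → ℕ) : (1 : MvPolynomial (Fin r) 𝕜) ∈ box 𝕜 c :=
  Submodule.one_le.mp (box_zero (𝕜 := 𝕜) (r := r) ▸ box_mono fun i => Nat.zero_le (c i))

theorem X_mem_box {c : Fin r → ℕ} (hc : ∀ i, 1 ≤ c i) (i : Fin r) :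
    (X i : MvPolynomial (Fin r) 𝕜) ∈ box 𝕜 c := by
  refine (monomial_mem_restrictSupport 𝕜).mpr (Or.inl fun k => ?_)
  rw [Finsupp.single_apply]
  split_ifs
  exacts [hc k, Nat.zero_le _]

theorem exhaustedByPowers_box {c : Fin r → ℕ} (hc : ∀ i, 1 ≤ c i) :
    ExhaustedByPowers (box 𝕜 c) := by
  refine fun p => ⟨p.totalDegree, ?_⟩
  rw [box_pow, mem_box_iff]
  intro s hs i
  calc s i ≤ s.sum fun _ e => e := by
        rw [Finsupp.sum_fintype _ _ fun _ => rfl]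
        exact Finset.single_le_sum (fun _ _ => Nat.zero_le _) (Finset.mem_univ i)
    _ ≤ p.totalDegree := le_totalDegree hs
    _ ≤ p.totalDegree * c i := Nat.le_mul_of_pos_right _ (hc i)

end Box

section QuotientBox

variable {𝕜 : Type*} [Field 𝕜] {r : ℕ}

/-- The dimension of the zero set of an ideal, as the transcendence degree of the coordinate
ring. -/
abbrev zeroLocusDim (I : Ideal (MvPolynomial (Fin r) 𝕜)) : ℕ :=
  natTrdeg 𝕜 (MvPolynomial (Fin r) 𝕜 ⧸ I)

/-- The image of a box in a quotient of the polynomial ring. -/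
def quotientBox (c : Fin r → ℕ) (I : Ideal (MvPolynomial (Fin r) 𝕜)) :
    Submodule 𝕜 (MvPolynomial (Fin r) 𝕜 ⧸ I) :=
  (box 𝕜 c).map (Ideal.Quotient.mkₐ 𝕜 I).toLinearMap

/-- The multidegree of the zero set of an ideal: the degree of the filtration of the coordinate
ring by the images of the boxes `box 𝕜 (e • c)`. -/
def boxDegree (c : Fin r → ℕ) (I : Ideal (MvPolynomial (Fin r) 𝕜)) : ℕ :=
  filtrationDegree (quotientBox c I)

variable {c : Fin r → ℕ} {I : Ideal (MvPolynomial (Fin r) 𝕜)}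

instance finiteDimensional_quotientBox : FiniteDimensional 𝕜 (quotientBox c I) := by
  unfold quotientBox; infer_instance

theorem one_mem_quotientBox (c : Fin r → ℕ) (I : Ideal (MvPolynomial (Fin r) 𝕜)) :
    (1 : MvPolynomial (Fin r) 𝕜 ⧸ I) ∈ quotientBox c I :=
  ⟨1, one_mem_box c, map_one (Ideal.Quotient.mkₐ 𝕜 I)⟩

theorem quotientBox_pow (e : ℕ) :
    quotientBox c I ^ e = (box 𝕜 c ^ e).map (Ideal.Quotient.mkₐ 𝕜 I).toLinearMap :=
  (Submodule.map_pow (box 𝕜 c) (Ideal.Quotient.mkₐ 𝕜 I) e).symm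

theorem mk_mem_quotientBox_pow {e : ℕ} {t : MvPolynomial (Fin r) 𝕜} (ht : t ∈ box 𝕜 c ^ e) :
    Ideal.Quotient.mk I t ∈ quotientBox c I ^ e := by
  rw [quotientBox_pow]; exact ⟨t, ht, rfl⟩

theorem exhaustedByPowers_quotientBox (hc : ∀ i, 1 ≤ c i) :
    ExhaustedByPowers (quotientBox c I) := by
  intro x
  obtain ⟨p, rfl⟩ := Ideal.Quotient.mk_surjective x
  obtain ⟨e, he⟩ := exhaustedByPowers_box hc p
  exact ⟨e, mk_mem_quotientBox_pow he⟩

theorem zeroLocusDim_le (I : Ideal (MvPolynomial (Fin r) 𝕜)) : zeroLocusDim I ≤ r :=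
  (natTrdeg_le_of_surjective (Ideal.Quotient.mkₐ 𝕜 I)
    (Ideal.Quotient.mkₐ_surjective 𝕜 I)).trans_eq (natTrdeg_mvPolynomial r)

theorem zeroLocusDim_lt [I.IsPrime] (hI : I ≠ ⊥) : zeroLocusDim I < r := by
  have : (⊥ : Ideal (MvPolynomial (Fin r) 𝕜)).IsPrime := Ideal.isPrime_bot
  exact (natTrdeg_quotient_lt (𝕜 := 𝕜) (bot_lt_iff_ne_bot.mpr hI)).trans_le (zeroLocusDim_le ⊥)

theorem finrank_quotientBox_pow_le (e : ℕ) :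
    Module.finrank 𝕜 (quotientBox c I ^ e : Submodule 𝕜 (MvPolynomial (Fin r) 𝕜 ⧸ I))
      ≤ ∏ i, (e * c i + 1) := by
  rw [quotientBox_pow, box_pow]
  exact (Submodule.finrank_map_le _ _).trans_eq (by simp [finrank_box])

theorem finrank_quotientBox_pow_of_forall_eq_zero {e : ℕ} (h : ∀ t ∈ I, t ∈ box 𝕜 c ^ e → t = 0) :
    Module.finrank 𝕜 (quotientBox c I ^ e : Submodule 𝕜 (MvPolynomial (Fin r) 𝕜 ⧸ I))
      = ∏ i, (e * c i + 1) := by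
  rw [quotientBox_pow, ← LinearMap.range_domRestrict, LinearMap.finrank_range_of_inj, box_pow,
    finrank_box]
  · simp
  · refine (injective_iff_map_eq_zero _).mpr fun x hx => Subtype.ext (h _ ?_ x.2)
    exact Ideal.Quotient.eq_zero_iff_mem.mp hx

variable [Infinite 𝕜] [I.IsPrime]

theorem boxDegree_pos (hc : ∀ i, 1 ≤ c i) : 0 < boxDegree c I :=
  (filtrationDegree_asymptotics _ (one_mem_quotientBox c I) (exhaustedByPowers_quotientBox hc)).1

theorem boxDegree_mono {c' : Fin r → ℕ} (hc : ∀ i, 1 ≤ c i) (h : c ≤ c') :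
    boxDegree c I ≤ boxDegree c' I :=
  filtrationDegree_mono (one_mem_quotientBox c I) (exhaustedByPowers_quotientBox hc)
    (exhaustedByPowers_quotientBox fun i => (hc i).trans (h i)) (Submodule.map_mono (box_mono h))

theorem boxDegree_le_of_zeroLocusDim_eq (hc : ∀ i, 1 ≤ c i) (hr : 1 ≤ r) (hI : zeroLocusDim I = r) :
    boxDegree c I ≤ (2 * r) ^ r * ∏ i, c i := by
  obtain ⟨-, -, k, hk⟩ := filtrationDegree_asymptotics _ (one_mem_quotientBox c I)
    (exhaustedByPowers_quotientBox hc)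
  rw [show natTrdeg 𝕜 (MvPolynomial (Fin r) 𝕜 ⧸ I) = r from hI] at hk
  have hlower : boxDegree c I * (k + 1) ^ r ≤ ∏ i, ((r * k + k) * c i + 1) :=
    (Nat.mul_le_mul_left _ (pow_le_affineHilbert r k)).trans
      ((hk (r * k)).trans (finrank_quotientBox_pow_le _))
  have hupper : ∏ i, ((r * k + k) * c i + 1) ≤ ((2 * r) * (k + 1)) ^ r * ∏ i, c i := by
    calc ∏ i, ((r * k + k) * c i + 1) ≤ ∏ i, ((2 * r) * (k + 1)) * c i := by
          refine Finset.prod_le_prod' fun i _ => ?_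
          have hk : k ≤ r * k := Nat.le_mul_of_pos_left k (by omega)
          nlinarith [Nat.mul_le_mul_right (c i) hk, Nat.mul_le_mul_left r (hc i), hc i]
      _ = _ := by rw [Finset.prod_mul_distrib]; simp
  refine Nat.le_of_mul_le_mul_right (c := (k + 1) ^ r) ?_ (by positivity)
  calc _ ≤ _ := hlower.trans hupper
    _ = _ := by rw [mul_pow, mul_right_comm]

theorem exists_mem_box_pow_of_boxDegree_le (hc : ∀ i, 1 ≤ c i) (hI : I ≠ ⊥) {Λ : ℕ} (hΛ : 1 ≤ Λ)
    (hd : boxDegree c I ≤ Λ * ∏ i, c i) : ∃ t ∈ I, t ≠ 0 ∧ t ∈ box 𝕜 c ^ (Λ * 2 ^ r) := by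
  have hdim := zeroLocusDim_lt hI
  obtain ⟨r, rfl⟩ : ∃ s, r = s + 1 := ⟨r - 1, by omega⟩
  set E := Λ * 2 ^ (r + 1) with hE
  have hE1 : 1 ≤ E := Nat.mul_pos hΛ (by positivity)
  by_contra! hno
  have hlower : E ^ (r + 1) * ∏ i, c i
      ≤ Module.finrank 𝕜 (quotientBox c I ^ E : Submodule 𝕜 (MvPolynomial (Fin (r + 1)) 𝕜 ⧸ I)) :=
    calc E ^ (r + 1) * ∏ i, c i = ∏ i, E * c i := by rw [Finset.prod_mul_distrib]; simp
      _ ≤ ∏ i, (E * c i + 1) := Finset.prod_le_prod' fun i _ => Nat.le_succ _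
      _ = _ := (finrank_quotientBox_pow_of_forall_eq_zero fun t htI htE =>
        of_not_not fun ht0 => hno t htI ht0 htE).symm
  have hupper : Module.finrank 𝕜
      (quotientBox c I ^ E : Submodule 𝕜 (MvPolynomial (Fin (r + 1)) 𝕜 ⧸ I))
      ≤ Λ * (∏ i, c i) * (2 * E) ^ r :=
    ((filtrationDegree_asymptotics _ (one_mem_quotientBox c I)
      (exhaustedByPowers_quotientBox hc)).2.1 E).trans (Nat.mul_le_mul hd
        ((affineHilbert_le _ _).trans ((Nat.pow_le_pow_right E.succ_pos
          (Nat.lt_succ_iff.mp hdim)).trans (Nat.pow_le_pow_left (by omega) _))))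
  have hprod : 0 < ∏ i, c i := Finset.prod_pos fun i _ => hc i
  have hcontra : E ^ r * (∏ i, c i) * E ≤ E ^ r * (∏ i, c i) * (Λ * 2 ^ r) := by
    calc _ = E ^ (r + 1) * ∏ i, c i := by ring
      _ ≤ _ := hlower.trans hupper
      _ = _ := by rw [mul_pow]; ring
  have hpos : 0 < Λ * 2 ^ r := by positivity
  have hE_le := Nat.le_of_mul_le_mul_left hcontra (by positivity)
  rw [hE, pow_succ, ← mul_assoc] at hE_le
  omega

end QuotientBox

section Fiber

variable {𝕜 A R Ω : Type*} [Field 𝕜] [CommRing A] [CommRing R] [Field Ω] [Algebra 𝕜 A]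
  [Algebra 𝕜 R] [Algebra 𝕜 Ω]

/-- The points `σ` of the zero set of `I` which have the same image as `φ` under the morphism
given by `ι`. -/
def fiberPoints (φ : R →ₐ[𝕜] Ω) (I : Ideal R) (ι : A →ₐ[𝕜] R) : Set (R →ₐ[𝕜] Ω) :=
  {σ | (∀ x ∈ I, σ x = 0) ∧ ∀ a, σ (ι a) = φ (ι a)}

/-- The set `fiberPoints φ I ι` as a finset; it is empty by convention if the fiber is infinite. -/
def fiberFinset (φ : R →ₐ[𝕜] Ω) (I : Ideal R) (ι : A →ₐ[𝕜] R) : Finset (R →ₐ[𝕜] Ω) :=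
  if h : (fiberPoints φ I ι).Finite then h.toFinset else ∅

theorem mem_fiberFinset {φ : R →ₐ[𝕜] Ω} {I : Ideal R} {ι : A →ₐ[𝕜] R}
    (h : (fiberPoints φ I ι).Finite) {σ : R →ₐ[𝕜] Ω} :
    σ ∈ fiberFinset φ I ι ↔ σ ∈ fiberPoints φ I ι := by
  rw [fiberFinset, dif_pos h, h.mem_toFinset]

theorem valuation_le_one_of_monic {A Ω Γ : Type*} [CommRing A] [Field Ω]
    [LinearOrderedCommGroupWithZero Γ] (v : Valuation Ω Γ) (f : A →+* Ω) (hf : ∀ a, v (f a) ≤ 1)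
    {p : Polynomial A} (hp : p.Monic) {x : Ω} (hx : p.eval₂ f x = 0) : v x ≤ 1 := by
  let f' : A →+* v.integer := f.codRestrict v.integer fun a =>
    (Valuation.mem_integer_iff v _).mpr (hf a)
  have hx_int : IsIntegral v.integer x :=
    ⟨p.map f', hp.map _, by rw [Polynomial.eval₂_map]; exact hx⟩
  exact (Valuation.mem_integer_iff v _).mp ((Valuation.integer.integers v).mem_of_integral hx_int)

variable {B : Type*} [CommRing B] [Algebra 𝕜 B] [Algebra A B] [Algebra A Ω]

/-- The homomorphism `mk` identifies `B` with the coordinate ring `R ⧸ I` of the zero set of `I`,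
in such a way that the `A`-algebra `B` is induced by `ι` and the `A`-algebra `Ω` by the image of
the point `φ`. -/
structure IsFiberModel (φ : R →ₐ[𝕜] Ω) (I : Ideal R) (ι : A →ₐ[𝕜] R) (mk : R →ₐ[𝕜] B) : Prop where
  surjective : Function.Surjective mk
  apply_eq_zero_iff (g : R) : mk g = 0 ↔ g ∈ I
  algebraMap_coordinateRing (a : A) : algebraMap A B a = mk (ι a)
  algebraMap_field (a : A) : algebraMap A Ω a = φ (ι a)

namespace IsFiberModel

variable {φ : R →ₐ[𝕜] Ω} {I : Ideal R} {ι : A →ₐ[𝕜] R} {mk : R →ₐ[𝕜] B}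

theorem mk_eval₂ (h : IsFiberModel φ I ι mk) (θ : R) (p : Polynomial A) :
    mk (p.eval₂ ι.toRingHom θ) = Polynomial.aeval (mk θ) p := by
  have hcomp : algebraMap A B = mk.toRingHom.comp ι.toRingHom :=
    RingHom.ext h.algebraMap_coordinateRing
  rw [Polynomial.aeval_def, hcomp]
  exact Polynomial.hom_eval₂ p ι.toRingHom mk.toRingHom θ

section IntegrallyClosed

variable [IsDomain A] [IsIntegrallyClosed A] [IsDomain B] [Module.Finite A B] [FaithfulSMul A B]

theorem integralNorm_mem_sup (h : IsFiberModel φ I ι mk) (t : R) :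
    ι (integralNorm A (mk t)) ∈ I ⊔ Ideal.span {t} := by
  obtain ⟨b, hb⟩ := dvd_algebraMap_integralNorm (A := A) (mk t)
  obtain ⟨g, rfl⟩ := h.surjective b
  rw [h.algebraMap_coordinateRing, ← map_mul, ← sub_eq_zero, ← map_sub, h.apply_eq_zero_iff] at hb
  rw [← sub_add_cancel (ι (integralNorm A (mk t))) (t * g)]
  exact Ideal.add_mem _ (Ideal.mem_sup_left hb)
    (Ideal.mem_sup_right (Ideal.mul_mem_right _ _ (Ideal.mem_span_singleton_self t)))

theorem exists_isPrime_comap_eq_span (h : IsFiberModel φ I ι mk) {t : R} {q : A} (hq : Prime q)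
    (hqt : q ∣ integralNorm A (mk t)) :
    ∃ Q : Ideal R, Q.IsPrime ∧ I ≤ Q ∧ t ∈ Q ∧ Q.comap ι = Ideal.span {q} := by
  obtain ⟨Q, hQ, htQ, hQq⟩ := exists_isPrime_comap_eq_span_of_dvd_integralNorm hq hqt
  refine ⟨Q.comap mk, hQ.comap _, fun x hx => ?_, htQ, ?_⟩
  · rw [Ideal.mem_comap, (h.apply_eq_zero_iff x).mpr hx]; exact Q.zero_mem
  · ext a
    rw [← hQq, Ideal.mem_comap, Ideal.mem_comap, Ideal.mem_comap, h.algebraMap_coordinateRing]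

theorem eval₂_mem_iff (h : IsFiberModel φ I ι mk) (θ : R) (p : Polynomial A) :
    p.eval₂ ι.toRingHom θ ∈ I ↔ minpoly A (mk θ) ∣ p := by
  rw [← minpoly.isIntegrallyClosed_dvd_iff (Algebra.IsIntegral.isIntegral _), ← h.mk_eval₂,
    h.apply_eq_zero_iff]

end IntegrallyClosed

variable [IsScalarTower 𝕜 A B] [IsScalarTower 𝕜 A Ω]

theorem exists_algHom_comp_eq (h : IsFiberModel φ I ι mk) {σ : R →ₐ[𝕜] Ω}
    (hσ : σ ∈ fiberPoints φ I ι) : ∃ τ : B →ₐ[A] Ω, (τ.restrictScalars 𝕜).comp mk = σ := by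
  have hker (x : R) (hx : mk x = 0) : σ x = 0 := hσ.1 x ((h.apply_eq_zero_iff x).mp hx)
  have hlift (g : R) : AlgHom.liftOfSurjective mk h.surjective σ hker (mk g) = σ g :=
    AlgHom.liftOfSurjective_apply ..
  exact ⟨{ AlgHom.liftOfSurjective mk h.surjective σ hker with
    commutes' := fun a => by
      rw [h.algebraMap_coordinateRing, h.algebraMap_field, ← hσ.2]; exact hlift _ },
    AlgHom.ext hlift⟩

/-- The points of the fiber are the homomorphisms from the coordinate ring `B` of the zero set over
the coordinate ring `A` of the base. -/
def equivFiberPoints (h : IsFiberModel φ I ι mk) : (B →ₐ[A] Ω) ≃ fiberPoints φ I ι :=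
  Equiv.ofBijective
    (fun τ => ⟨(τ.restrictScalars 𝕜).comp mk, fun x hx => by
      simp [(h.apply_eq_zero_iff x).mpr hx], fun a => by
      simp [← h.algebraMap_coordinateRing, ← h.algebraMap_field]⟩)
    ⟨fun τ τ' hτ => by
      ext x
      obtain ⟨g, rfl⟩ := h.surjective x
      exact DFunLike.congr_fun (congrArg Subtype.val hτ) g,
    fun σ => (h.exists_algHom_comp_eq σ.2).imp fun _ => Subtype.ext⟩

theorem injective_apply_mk (h : IsFiberModel φ I ι mk) {θ : R}
    (hθ : Set.InjOn (fun σ => σ θ) (fiberPoints φ I ι)) :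
    Function.Injective fun τ : B →ₐ[A] Ω => τ (mk θ) := fun τ τ' hτ =>
  h.equivFiberPoints.injective (Subtype.ext
    (hθ (h.equivFiberPoints τ).2 (h.equivFiberPoints τ').2 hτ))

theorem valuation_le_one {Γ : Type*} [LinearOrderedCommGroupWithZero Γ] {v : Valuation Ω Γ}
    [Algebra.IsIntegral A B] (h : IsFiberModel φ I ι mk) (hφ : ∀ a, v (φ (ι a)) ≤ 1)
    {σ : R →ₐ[𝕜] Ω} (hσ : σ ∈ fiberPoints φ I ι) (g : R) : v (σ g) ≤ 1 := by
  obtain ⟨τ, rfl⟩ := h.exists_algHom_comp_eq hσ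
  have hg : IsIntegral A (mk g) := Algebra.IsIntegral.isIntegral _
  refine valuation_le_one_of_monic v (algebraMap A Ω)
    (fun a => (h.algebraMap_field a).symm ▸ hφ a) (minpoly.monic hg) ?_
  rw [← Polynomial.aeval_def]
  exact (Polynomial.aeval_algHom_apply τ (mk g) _).trans (by rw [minpoly.aeval, map_zero])

variable [IsDomain A] [IsDomain B] [Module.Finite A B] [FaithfulSMul A B] [FaithfulSMul A Ω]

theorem finite_fiberPoints (h : IsFiberModel φ I ι mk) : (fiberPoints φ I ι).Finite :=
  have := finite_algHom_of_finite A B Ω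
  Finite.of_equiv _ h.equivFiberPoints

theorem prod_fiberFinset [Fintype (B →ₐ[A] Ω)] {M : Type*} [CommMonoid M]
    (h : IsFiberModel φ I ι mk) (f : (R →ₐ[𝕜] Ω) → M) :
    ∏ σ ∈ fiberFinset φ I ι, f σ = ∏ τ, f (h.equivFiberPoints τ) := by
  have : Fintype (fiberPoints φ I ι) := h.finite_fiberPoints.fintype
  rw [Fintype.prod_equiv h.equivFiberPoints (fun τ => f (h.equivFiberPoints τ)) (fun σ => f σ)
    fun _ => rfl]
  exact Finset.prod_subtype _ (fun σ => mem_fiberFinset h.finite_fiberPoints) f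

variable [CharZero A] [IsAlgClosed Ω]

theorem card_fiberFinset (h : IsFiberModel φ I ι mk) :
    (fiberFinset φ I ι).card = Module.finrank A B := by
  rw [fiberFinset, dif_pos h.finite_fiberPoints,
    ← Set.ncard_eq_toFinset_card _ h.finite_fiberPoints, ← natCard_algHom_of_finite A B Ω]
  exact (Nat.card_congr h.equivFiberPoints).symm

variable [IsIntegrallyClosed A]

theorem apply_integralNorm (h : IsFiberModel φ I ι mk) (t : R) :
    φ (ι (integralNorm A (mk t))) = ∏ σ ∈ fiberFinset φ I ι, σ t := by
  have := finite_algHom_of_finite A B Ω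
  have := Fintype.ofFinite (B →ₐ[A] Ω)
  rw [← h.algebraMap_field, algebraMap_integralNorm_eq_prod, h.prod_fiberFinset]
  rfl

theorem natDegree_minpoly (h : IsFiberModel φ I ι mk) {θ : R}
    (hθ : Set.InjOn (fun σ => σ θ) (fiberPoints φ I ι)) :
    (minpoly A (mk θ)).natDegree = Module.finrank A B :=
  natDegree_minpoly_of_injective (h.injective_apply_mk hθ)

theorem map_minpoly (h : IsFiberModel φ I ι mk) {θ : R}
    (hθ : Set.InjOn (fun σ => σ θ) (fiberPoints φ I ι)) :
    (minpoly A (mk θ)).map (φ.comp ι).toRingHom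
      = ∏ σ ∈ fiberFinset φ I ι, (Polynomial.X - Polynomial.C (σ θ)) := by
  have := finite_algHom_of_finite A B Ω
  have := Fintype.ofFinite (B →ₐ[A] Ω)
  have hcomp : algebraMap A Ω = (φ.comp ι).toRingHom := RingHom.ext h.algebraMap_field
  rw [← hcomp, map_minpoly_eq_prod_of_injective (h.injective_apply_mk hθ), h.prod_fiberFinset]
  rfl

end IsFiberModel

end Fiber

section GenericPoint

variable {𝕜 : Type*} [Field 𝕜] {r : ℕ} {Ω Γ : Type*} [Field Ω] [Algebra 𝕜 Ω]
  [LinearOrderedCommGroupWithZero Γ]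

/-- The homomorphism `φ` is an integral point of affine space over the valued field `Ω` which lies
on no proper subvariety defined over `𝕜`. -/
structure IsIntegralGenericPoint (v : Valuation Ω Γ) (φ : MvPolynomial (Fin r) 𝕜 →ₐ[𝕜] Ω) :
    Prop where
  injective : Function.Injective φ
  valuation_le_one (g : MvPolynomial (Fin r) 𝕜) : v (φ g) ≤ 1

/-- The distance between two points of affine space over a valued field. -/
def pointDist (v : Valuation Ω Γ) (φ σ : MvPolynomial (Fin r) 𝕜 →ₐ[𝕜] Ω) : Γ :=
  Finset.univ.sup fun i : Fin r => v (σ (X i) - φ (X i))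

variable {v : Valuation Ω Γ} {φ σ : MvPolynomial (Fin r) 𝕜 →ₐ[𝕜] Ω}

theorem IsIntegralGenericPoint.valuation_algebraMap_le_one (hφ : IsIntegralGenericPoint v φ)
    (z : 𝕜) : v (algebraMap 𝕜 Ω z) ≤ 1 :=
  φ.commutes z ▸ hφ.valuation_le_one _

theorem valuation_sub_le_pointDist (hφ : ∀ g, v (φ g) ≤ 1) (hσ : ∀ g, v (σ g) ≤ 1)
    (g : MvPolynomial (Fin r) 𝕜) : v (σ g - φ g) ≤ pointDist v φ σ := by
  induction g using MvPolynomial.induction_on with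
  | C a => simp [← MvPolynomial.algebraMap_eq]
  | add p q hp hq =>
    rw [map_add, map_add, add_sub_add_comm]
    exact v.map_add_le hp hq
  | mul_X p i hp =>
    have hsplit : σ (p * X i) - φ (p * X i)
        = (σ p - φ p) * σ (X i) + φ p * (σ (X i) - φ (X i)) := by
      rw [map_mul, map_mul]; ring
    rw [hsplit]
    refine v.map_add_le ?_ ?_
    · rw [map_mul]
      exact (mul_le_of_le_one_right' (hσ _)).trans hp
    · rw [map_mul]
      refine (mul_le_of_le_one_left' (hφ _)).trans ?_
      exact Finset.le_sup (f := fun i : Fin r => v (σ (X i) - φ (X i))) (Finset.mem_univ i)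

theorem pointDist_le_one (hφ : ∀ g, v (φ g) ≤ 1) (hσ : ∀ g, v (σ g) ≤ 1) :
    pointDist v φ σ ≤ 1 :=
  Finset.sup_le fun _ _ => v.map_sub_le (hσ _) (hφ _)

theorem pointDist_self (v : Valuation Ω Γ) (φ : MvPolynomial (Fin r) 𝕜 →ₐ[𝕜] Ω) :
    pointDist v φ φ = 0 :=
  le_antisymm (Finset.sup_le fun _ _ => by simp) zero_le

theorem valuation_le_pointDist_of_apply_eq_zero (hφ : ∀ g, v (φ g) ≤ 1) (hσ : ∀ g, v (σ g) ≤ 1)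
    {g : MvPolynomial (Fin r) 𝕜} (hg : σ g = 0) : v (φ g) ≤ pointDist v φ σ := by
  simpa [hg] using valuation_sub_le_pointDist hφ hσ g

end GenericPoint

section NormalizingFamily

variable {𝕜 : Type*} [Field 𝕜] {r : ℕ}

/-- The elements `Y` of the box form a Noether normalization of the zero set of `𝔭` which is
compatible with the degree filtration defined by the box. -/
structure IsNormalizingFamily (c : Fin r → ℕ) (𝔭 : Ideal (MvPolynomial (Fin r) 𝕜)) {N : ℕ}
    (Y : Fin N → MvPolynomial (Fin r) 𝕜) : Prop where
  zeroLocusDim_eq : zeroLocusDim 𝔭 = N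
  mem_box (i : Fin N) : Y i ∈ box 𝕜 c
  filteredFinite : FilteredFinite (quotientBox c 𝔭) fun i => Ideal.Quotient.mk 𝔭 (Y i)

variable {Ω Γ : Type*} [Field Ω] [Algebra 𝕜 Ω] [LinearOrderedCommGroupWithZero Γ]

/-- The fiber through `φ` of the finite projection `Y` of the zero set of `𝔭` to affine space: its
cardinality, the norm of a polynomial `t` along the projection, and the minimal polynomial of an
element `θ` separating the points of the fiber. -/
structure FiberDescription (v : Valuation Ω Γ) (φ : MvPolynomial (Fin r) 𝕜 →ₐ[𝕜] Ω)
    (c : Fin r → ℕ) (𝔭 : Ideal (MvPolynomial (Fin r) 𝕜)) {N : ℕ}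
    (Y : Fin N → MvPolynomial (Fin r) 𝕜) : Prop where
  finite : (fiberPoints φ 𝔭 (aeval Y)).Finite
  card_eq : (fiberFinset φ 𝔭 (aeval Y)).card = boxDegree c 𝔭
  valuation_le_one {σ : MvPolynomial (Fin r) 𝕜 →ₐ[𝕜] Ω} (hσ : σ ∈ fiberPoints φ 𝔭 (aeval Y))
    (g : MvPolynomial (Fin r) 𝕜) : v (σ g) ≤ 1
  exists_norm {t : MvPolynomial (Fin r) 𝕜} (ht : t ∉ 𝔭) {e : ℕ} (hte : t ∈ box 𝕜 c ^ e) :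
    ∃ ν : MvPolynomial (Fin N) 𝕜, ν ≠ 0 ∧ ν.totalDegree ≤ e * boxDegree c 𝔭 ∧
      φ (aeval Y ν) = ∏ σ ∈ fiberFinset φ 𝔭 (aeval Y), σ t ∧ aeval Y ν ∈ 𝔭 ⊔ Ideal.span {t} ∧
      ∀ q, Prime q → q ∣ ν → ∃ Q : Ideal (MvPolynomial (Fin r) 𝕜), Q.IsPrime ∧ 𝔭 ≤ Q ∧ t ∈ Q ∧
        Q.comap (aeval Y : MvPolynomial (Fin N) 𝕜 →ₐ[𝕜] _) = Ideal.span {q}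
  exists_minpoly {θ : MvPolynomial (Fin r) 𝕜}
    (hθ : Set.InjOn (fun σ => σ θ) (fiberPoints φ 𝔭 (aeval Y))) :
    ∃ h : Polynomial (MvPolynomial (Fin N) 𝕜), h.Monic ∧ h.natDegree = boxDegree c 𝔭 ∧
      h.map (φ.comp (aeval Y)).toRingHom
        = ∏ σ ∈ fiberFinset φ 𝔭 (aeval Y), (Polynomial.X - Polynomial.C (σ θ)) ∧
      ∀ p : Polynomial (MvPolynomial (Fin N) 𝕜),
        p.eval₂ (aeval Y : MvPolynomial (Fin N) 𝕜 →ₐ[𝕜] _).toRingHom θ ∈ 𝔭 ↔ h ∣ p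

variable [CharZero 𝕜] [IsAlgClosed Ω] {v : Valuation Ω Γ} {φ : MvPolynomial (Fin r) 𝕜 →ₐ[𝕜] Ω}
  {c : Fin r → ℕ} {𝔭 : Ideal (MvPolynomial (Fin r) 𝕜)} {N : ℕ}
  {Y : Fin N → MvPolynomial (Fin r) 𝕜}

theorem FiberDescription.of_surjective (hφ : IsIntegralGenericPoint v φ) {B : Type*} [CommRing B]
    [IsDomain B] [Algebra 𝕜 B] (mk : MvPolynomial (Fin r) 𝕜 →ₐ[𝕜] B)
    (hsurj : Function.Surjective mk) (hmk : ∀ g, mk g = 0 ↔ g ∈ 𝔭) {V : Submodule 𝕜 B}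
    [FiniteDimensional 𝕜 V] (h1 : 1 ∈ V) (hV : ExhaustedByPowers V)
    (hVdeg : filtrationDegree V = boxDegree c 𝔭) (hVc : ∀ e, ∀ t ∈ box 𝕜 c ^ e, mk t ∈ V ^ e)
    (hN : natTrdeg 𝕜 B = N) (hYV : ∀ i, mk (Y i) ∈ V) (hYF : FilteredFinite V fun i => mk (Y i)) :
    FiberDescription v φ c 𝔭 Y := by
  let A := MvPolynomial (Fin N) 𝕜
  let _ : Algebra A B := (mk.comp (aeval Y)).toAlgebra
  let _ : Algebra A Ω := (φ.comp (aeval Y)).toAlgebra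
  have hmodel : IsFiberModel φ 𝔭 (aeval Y : A →ₐ[𝕜] _) mk :=
    ⟨hsurj, hmk, fun _ => rfl, fun _ => rfl⟩
  have : IsScalarTower 𝕜 A B :=
    IsScalarTower.of_algebraMap_eq fun z => ((mk.comp (aeval Y)).commutes z).symm
  have : IsScalarTower 𝕜 A Ω :=
    IsScalarTower.of_algebraMap_eq fun z => ((φ.comp (aeval Y)).commutes z).symm
  have hX (i) : algebraMap A B (X i) = mk (Y i) := congrArg mk (aeval_X Y i)
  have hY : FilteredFinite V fun i => algebraMap A B (X i) := by simpa only [hX] using hYF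
  have hXV (i) : algebraMap A B (X i) ∈ V := (hX i).symm ▸ hYV i
  have : Module.Finite A B := hY.module_finite h1 hV
  have : FaithfulSMul A B := faithfulSMul_of_finite_of_natTrdeg_eq hN
  have : FaithfulSMul A Ω := by
    rw [faithfulSMul_iff_algebraMap_injective]
    refine hφ.injective.comp fun a b hab => ?_
    exact FaithfulSMul.algebraMap_injective A B (congrArg mk hab)
  have : Infinite 𝕜 := CharZero.infinite 𝕜
  have hrank : Module.finrank A B = boxDegree c 𝔭 :=
    (finrank_eq_filtrationDegree h1 hV hY hXV hN).trans hVdeg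
  exact
  { finite := hmodel.finite_fiberPoints
    card_eq := hmodel.card_fiberFinset.trans hrank
    valuation_le_one := hmodel.valuation_le_one fun a => hφ.valuation_le_one _
    exists_norm := fun {t} ht {e} hte => ⟨integralNorm A (mk t),
      integralNorm_ne_zero fun h => ht ((hmk t).mp h),
      hrank ▸ totalDegree_integralNorm_le h1 hV hY (hVc e t hte), hmodel.apply_integralNorm t,
      hmodel.integralNorm_mem_sup t, fun _ => hmodel.exists_isPrime_comap_eq_span⟩
    exists_minpoly := fun {θ} hθ => ⟨minpoly A (mk θ),
      minpoly.monic (Algebra.IsIntegral.isIntegral _), (hmodel.natDegree_minpoly hθ).trans hrank,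
      hmodel.map_minpoly hθ, hmodel.eval₂_mem_iff θ⟩ }

theorem IsNormalizingFamily.fiberDescription (h : IsNormalizingFamily c 𝔭 Y) [𝔭.IsPrime]
    (hφ : IsIntegralGenericPoint v φ) (hc : ∀ i, 1 ≤ c i) : FiberDescription v φ c 𝔭 Y :=
  FiberDescription.of_surjective hφ (Ideal.Quotient.mkₐ 𝕜 𝔭) (Ideal.Quotient.mkₐ_surjective 𝕜 𝔭)
    (fun _ => Ideal.Quotient.eq_zero_iff_mem) (one_mem_quotientBox c 𝔭)
    (exhaustedByPowers_quotientBox hc) rfl (fun _ _ ht => mk_mem_quotientBox_pow ht)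
    h.zeroLocusDim_eq (fun i => ⟨_, h.mem_box i, rfl⟩) h.filteredFinite

end NormalizingFamily

section GenericFamily

variable {𝕜 : Type*} [Field 𝕜] {r : ℕ}

theorem FilteredFinite.comp_equiv {B : Type*} [CommRing B] [Algebra 𝕜 B] {V : Submodule 𝕜 B}
    {N : ℕ} {Y : Fin N → B} (h : FilteredFinite V Y) (e : Equiv.Perm (Fin N)) :
    FilteredFinite V fun i => Y (e i) := by
  obtain ⟨m, hm⟩ := h
  refine ⟨m, fun x hx => ?_⟩
  obtain ⟨a, ha, b, hb, rfl⟩ := hm x hx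
  exact ⟨a, ha, fun i => b (e i), fun i => hb _, by
    rw [Equiv.sum_comp e fun i => Y i * b i]⟩

/-- A basis of the box. -/
def boxBasis (𝕜 : Type*) [Field 𝕜] {r : ℕ} (c : Fin r → ℕ)
    (j : Fin (Module.finrank 𝕜 (box 𝕜 c))) : MvPolynomial (Fin r) 𝕜 :=
  Module.finBasis 𝕜 (box 𝕜 c) j

theorem boxBasis_mem (c : Fin r → ℕ) (j) : boxBasis 𝕜 c j ∈ box 𝕜 c :=
  (Module.finBasis 𝕜 (box 𝕜 c) j).2

theorem span_boxBasis (c : Fin r → ℕ) : Submodule.span 𝕜 (Set.range (boxBasis 𝕜 c)) = box 𝕜 c := by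
  have hspan := congrArg (Submodule.map (box 𝕜 c).subtype) (Module.finBasis 𝕜 (box 𝕜 c)).span_eq
  rwa [Submodule.map_span, ← Set.range_comp, Submodule.map_top, Submodule.range_subtype] at hspan

/-- The combination of the basis of the box with coefficients the powers of `x`, a curve in the box
which lies in no hyperplane. -/
def powerCombination (c : Fin r → ℕ) (x : 𝕜) : MvPolynomial (Fin r) 𝕜 :=
  ∑ j : Fin (Module.finrank 𝕜 (box 𝕜 c)), x ^ (j : ℕ) • boxBasis 𝕜 c j

/-- The first `N` power combinations attached to a sequence of parameters, in decreasing order, so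
that the family for `N + 1` is the family for `N` with a new element in front. -/
def genericFamily (c : Fin r → ℕ) (l : ℕ → 𝕜) (N : ℕ) (i : Fin N) : MvPolynomial (Fin r) 𝕜 :=
  powerCombination c (l (Fin.rev i))

theorem powerCombination_mem (c : Fin r → ℕ) (x : 𝕜) : powerCombination c x ∈ box 𝕜 c :=
  Submodule.sum_mem _ fun j _ => Submodule.smul_mem _ _ (boxBasis_mem c j)

theorem genericFamily_zero (c : Fin r → ℕ) (l : ℕ → 𝕜) (N : ℕ) :
    genericFamily c l (N + 1) 0 = powerCombination c (l N) := by
  simp [genericFamily]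

theorem genericFamily_succ (c : Fin r → ℕ) (l : ℕ → 𝕜) (N : ℕ) (i : Fin N) :
    genericFamily c l (N + 1) i.succ = genericFamily c l N i := by
  simp [genericFamily, Fin.rev_succ]

theorem genericFamily_congr (c : Fin r → ℕ) {l l' : ℕ → 𝕜} {N : ℕ} (h : ∀ i < N, l i = l' i) :
    genericFamily c l N = genericFamily c l' N := by
  ext1 i
  rw [genericFamily, genericFamily, h _ (Fin.is_lt _)]

theorem eventually_isNormalizingFamily [IsAlgClosed 𝕜] (c : Fin r → ℕ)
    (𝔭 : Ideal (MvPolynomial (Fin r) 𝕜)) [𝔭.IsPrime] :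
    ∀ᶠ l in genericFilter 𝕜 (zeroLocusDim 𝔭),
      IsNormalizingFamily c 𝔭 (genericFamily c l (zeroLocusDim 𝔭)) := by
  have hspan : Submodule.span 𝕜 (Set.range fun j => Ideal.Quotient.mkₐ 𝕜 𝔭 (boxBasis 𝕜 c j))
      = quotientBox c 𝔭 := by
    have hmap := congrArg (Submodule.map (Ideal.Quotient.mkₐ 𝕜 𝔭).toLinearMap) (span_boxBasis c)
    rwa [Submodule.map_span, ← Set.range_comp] at hmap
  have hfinite := eventually_filteredFinite (fun j => Ideal.Quotient.mkₐ 𝕜 𝔭 (boxBasis 𝕜 c j))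
    (by rw [hspan]; exact one_mem_quotientBox c 𝔭)
  rw [hspan] at hfinite
  filter_upwards [hfinite] with l hl
  refine ⟨rfl, fun i => powerCombination_mem _ _, ?_⟩
  convert hl.comp_equiv Fin.revPerm using 2 with i
  change Ideal.Quotient.mkₐ 𝕜 𝔭 _ = _
  simp only [genericFamily, powerCombination, map_sum, map_smul]
  rfl

variable {Ω Γ : Type*} [Field Ω] [Algebra 𝕜 Ω] [LinearOrderedCommGroupWithZero Γ]

theorem map_sub_map_powerCombination (σ τ : MvPolynomial (Fin r) 𝕜 →ₐ[𝕜] Ω) (c : Fin r → ℕ)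
    (x : 𝕜) : σ (powerCombination c x) - τ (powerCombination c x)
      = ∑ j : Fin (Module.finrank 𝕜 (box 𝕜 c)),
          x ^ (j : ℕ) • (σ (boxBasis 𝕜 c j) - τ (boxBasis 𝕜 c j)) := by
  simp [powerCombination, map_sum, smul_sub]

theorem exists_map_boxBasis_ne {c : Fin r → ℕ} (hc : ∀ i, 1 ≤ c i)
    {σ τ : MvPolynomial (Fin r) 𝕜 →ₐ[𝕜] Ω} (h : σ ≠ τ) :
    ∃ j, σ (boxBasis 𝕜 c j) ≠ τ (boxBasis 𝕜 c j) := by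
  by_contra! hj
  refine h (MvPolynomial.algHom_ext fun i => ?_)
  have heq : Set.EqOn σ.toLinearMap τ.toLinearMap
      (Submodule.span 𝕜 (Set.range (boxBasis 𝕜 c))) :=
    LinearMap.eqOn_span (by rintro _ ⟨j, rfl⟩; exact hj j)
  exact heq (by rw [span_boxBasis]; exact X_mem_box hc i)

theorem eventually_map_powerCombination_ne {c : Fin r → ℕ} (hc : ∀ i, 1 ≤ c i)
    {σ τ : MvPolynomial (Fin r) 𝕜 →ₐ[𝕜] Ω} (h : σ ≠ τ) :
    ∀ᶠ x : 𝕜 in Filter.cofinite, σ (powerCombination c x) ≠ τ (powerCombination c x) := by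
  obtain ⟨j, hj⟩ := exists_map_boxBasis_ne hc h
  filter_upwards [eventually_sum_pow_smul_ne_zero
    (fun i => σ (boxBasis 𝕜 c i) - τ (boxBasis 𝕜 c i)) ⟨j, sub_ne_zero.mpr hj⟩] with x hx
  rwa [← map_sub_map_powerCombination, sub_ne_zero] at hx

theorem eventually_pointDist_le {v : Valuation Ω Γ} (hv : ∀ z : 𝕜, v (algebraMap 𝕜 Ω z) ≤ 1)
    {c : Fin r → ℕ} (hc : ∀ i, 1 ≤ c i) (φ σ : MvPolynomial (Fin r) 𝕜 →ₐ[𝕜] Ω) :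
    ∀ᶠ x in Filter.cofinite,
      pointDist v φ σ ≤ v (σ (powerCombination c x) - φ (powerCombination c x)) := by
  have hbasis : ∀ᶠ x : 𝕜 in Filter.cofinite, ∀ j, v (σ (boxBasis 𝕜 c j) - φ (boxBasis 𝕜 c j))
      ≤ v (σ (powerCombination c x) - φ (powerCombination c x)) := by
    simp only [map_sub_map_powerCombination]
    exact Filter.eventually_all.mpr
      (eventually_valuation_le_valuation_sum_pow_smul hv fun i =>
        σ (boxBasis 𝕜 c i) - φ (boxBasis 𝕜 c i))
  filter_upwards [hbasis] with x hx
  refine Finset.sup_le fun i _ => ?_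
  have hX := X_mem_box (𝕜 := 𝕜) hc i
  rw [← span_boxBasis, Submodule.mem_span_range_iff_exists_fun] at hX
  obtain ⟨a, ha⟩ := hX
  rw [← ha, map_sum, map_sum, ← Finset.sum_sub_distrib]
  refine v.map_sum_le fun j _ => ?_
  rw [map_smul, map_smul, ← smul_sub, Algebra.smul_def, map_mul]
  exact (mul_le_of_le_one_left' (hv _)).trans (hx j)

/-- The parameters `l` are generic with respect to the zero set of `𝔭` and the point `φ`: they
define a normalizing family, and the next element of the generic family separates the points of the
fiber through `φ` and measures their distances to `φ`. -/
structure IsGenericFor (v : Valuation Ω Γ) (φ : MvPolynomial (Fin r) 𝕜 →ₐ[𝕜] Ω) (c : Fin r → ℕ)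
    (𝔭 : Ideal (MvPolynomial (Fin r) 𝕜)) (l : ℕ → 𝕜) : Prop where
  isNormalizingFamily : IsNormalizingFamily c 𝔭 (genericFamily c l (zeroLocusDim 𝔭))
  injOn : Set.InjOn (fun σ => σ (powerCombination c (l (zeroLocusDim 𝔭))))
    (fiberPoints φ 𝔭 (aeval (genericFamily c l (zeroLocusDim 𝔭))))
  valuation_eq_pointDist : ∀ σ ∈ fiberPoints φ 𝔭 (aeval (genericFamily c l (zeroLocusDim 𝔭))),
    v (σ (powerCombination c (l (zeroLocusDim 𝔭))) - φ (powerCombination c (l (zeroLocusDim 𝔭))))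
      = pointDist v φ σ

variable {v : Valuation Ω Γ} {φ : MvPolynomial (Fin r) 𝕜 →ₐ[𝕜] Ω} {c : Fin r → ℕ}
  {𝔭 : Ideal (MvPolynomial (Fin r) 𝕜)}

theorem IsGenericFor.congr {l l' : ℕ → 𝕜} (h : ∀ i < zeroLocusDim 𝔭 + 1, l i = l' i)
    (H : IsGenericFor v φ c 𝔭 l) : IsGenericFor v φ c 𝔭 l' := by
  obtain ⟨hnorm, hinj, hval⟩ := H
  rw [genericFamily_congr c fun i hi => h i (by omega)] at hnorm hinj hval
  rw [h _ (Nat.lt_succ_self _)] at hinj hval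
  exact ⟨hnorm, hinj, hval⟩

variable [CharZero 𝕜] [IsAlgClosed 𝕜] [IsAlgClosed Ω]

theorem eventually_isGenericFor (hφ : IsIntegralGenericPoint v φ) (hc : ∀ i, 1 ≤ c i)
    (𝔭 : Ideal (MvPolynomial (Fin r) 𝕜)) [𝔭.IsPrime] :
    ∀ᶠ l in genericFilter 𝕜 (r + 1), IsGenericFor v φ c 𝔭 l := by
  refine eventually_genericFilter_of_lt (Nat.lt_succ_of_le (zeroLocusDim_le 𝔭))
    (fun l l' h => IsGenericFor.congr h) ?_
  filter_upwards [eventually_isNormalizingFamily c 𝔭] with l hl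
  have hfiber := hl.fiberDescription hφ hc
  set N := zeroLocusDim 𝔭 with hN
  set S := fiberFinset φ 𝔭 (aeval (genericFamily c l N))
  have hseparates : ∀ᶠ x : 𝕜 in Filter.cofinite, ∀ σ ∈ S, ∀ τ ∈ S, σ ≠ τ →
      σ (powerCombination c x) ≠ τ (powerCombination c x) := by
    simp only [Filter.eventually_all_finset, Filter.eventually_imp_distrib_left]
    exact fun σ _ τ _ => eventually_map_powerCombination_ne hc
  have hdist : ∀ᶠ x : 𝕜 in Filter.cofinite, ∀ σ ∈ S,
      pointDist v φ σ ≤ v (σ (powerCombination c x) - φ (powerCombination c x)) := by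
    simp only [Filter.eventually_all_finset]
    exact fun σ _ => eventually_pointDist_le hφ.valuation_algebraMap_le_one hc φ σ
  filter_upwards [hseparates, hdist] with x hx_separates hx_dist
  have hY : genericFamily c (Function.update l N x) N = genericFamily c l N :=
    genericFamily_congr c fun i hi => Function.update_of_ne (by omega) _ _
  refine ⟨?_, ?_, ?_⟩ <;> rw [← hN, hY]
  · exact hl
  · rw [Function.update_self]
    intro σ hσ τ hτ
    exact not_imp_not.mp (hx_separates σ ((mem_fiberFinset hfiber.finite).mpr hσ) τ
      ((mem_fiberFinset hfiber.finite).mpr hτ))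
  · rw [Function.update_self]
    exact fun σ hσ => le_antisymm
      (valuation_sub_le_pointDist hφ.valuation_le_one (hfiber.valuation_le_one hσ) _)
      (hx_dist σ ((mem_fiberFinset hfiber.finite).mpr hσ))

end GenericFamily

section Hypersurface

theorem valuation_eq_of_associated {R Γ : Type*} [CommRing R] [LinearOrderedCommMonoidWithZero Γ]
    (v : Valuation R Γ) (hv : ∀ x, v x ≤ 1) {a b : R} (h : Associated a b) : v a = v b := by
  have valuation_le_of_dvd {x y : R} (hxy : x ∣ y) : v y ≤ v x := by
    obtain ⟨z, rfl⟩ := hxy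
    exact (map_mul v x z).trans_le (mul_le_of_le_one_right' (hv z))
  exact le_antisymm (valuation_le_of_dvd h.symm.dvd) (valuation_le_of_dvd h.dvd)

theorem algHom_eval₂_toRingHom {𝕜 A R S : Type*} [CommSemiring 𝕜] [CommRing A] [CommRing R]
    [CommRing S] [Algebra 𝕜 A] [Algebra 𝕜 R] [Algebra 𝕜 S] (φ : R →ₐ[𝕜] S) (ι : A →ₐ[𝕜] R) (θ : R)
    (p : Polynomial A) :
    φ (p.eval₂ ι.toRingHom θ) = (p.map (φ.comp ι).toRingHom).eval (φ θ) := by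
  rw [Polynomial.eval_map]
  exact Polynomial.hom_eval₂ p ι.toRingHom φ.toRingHom θ

theorem exists_minimalPrimes_comap_eq_span {A R : Type*} [CommRing A] [IsDomain A]
    [UniqueFactorizationMonoid A] [CommRing R] (ι : A →+* R) {J Q : Ideal R} [Q.IsPrime]
    (hJQ : J ≤ Q) {ν : A} (hν0 : ν ≠ 0) (hν : ι ν ∈ J) {q : A} (hq : Prime q)
    (hQ : Q.comap ι = Ideal.span {q}) : ∃ 𝔮 ∈ J.minimalPrimes, 𝔮.comap ι = Ideal.span {q} := by
  obtain ⟨𝔮, h𝔮, h𝔮Q⟩ := Ideal.exists_minimalPrimes_le hJQ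
  have hprime : (𝔮.comap ι).IsPrime := h𝔮.1.1.comap ι
  have hle : 𝔮.comap ι ≤ Ideal.span {q} := hQ ▸ Ideal.comap_mono h𝔮Q
  have hne : 𝔮.comap ι ≠ ⊥ := (Submodule.ne_bot_iff _).mpr ⟨ν, h𝔮.1.2 hν, hν0⟩
  obtain ⟨x, hx, hxprime⟩ := hprime.exists_mem_prime_of_ne_bot hne
  have hqx : Associated q x :=
    hq.associated_of_dvd hxprime (Ideal.mem_span_singleton.mp (hle hx))
  exact ⟨𝔮, h𝔮, le_antisymm hle ((Ideal.span_singleton_le_iff_mem _).mpr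
    (Ideal.mem_of_dvd _ hqx.symm.dvd hx))⟩

theorem exists_degreeOf_pos_of_prime {𝕜 τ : Type*} [Field 𝕜] {q : MvPolynomial τ 𝕜}
    (hq : Prime q) : ∃ j, 0 < q.degreeOf j := by
  by_contra! h
  have hC : q = C (q.coeff 0) := vars_eq_empty_iff_eq_C.mp
    (Finset.eq_empty_of_forall_notMem fun j hj =>
      mem_vars_iff_degreeOf_ne_zero.mp hj (Nat.le_zero.mp (h j)))
  have h0 : q.coeff 0 ≠ 0 := fun h0 => hq.ne_zero (by rw [hC, h0, map_zero])
  exact hq.not_isUnit (hC ▸ (isUnit_iff_ne_zero.mpr h0).map C)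

theorem degreeOf_rename_succAbove {R : Type*} [CommSemiring R] {M : ℕ} (j : Fin (M + 1))
    (p : MvPolynomial (Fin M) R) : (rename j.succAbove p).degreeOf j = 0 := by
  by_contra hne
  obtain ⟨i, -, hi⟩ := mem_vars_rename _ _ (mem_vars_iff_degreeOf_ne_zero.mpr hne)
  exact Fin.succAbove_ne j i hi

theorem totalDegree_multiset_prod_of_ne_zero {R τ : Type*} [CommRing R] [IsDomain R]
    (f : Multiset (MvPolynomial τ R)) (hf : ∀ q ∈ f, q ≠ 0) :
    f.prod.totalDegree = (f.map totalDegree).sum := by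
  induction f using Multiset.induction_on with
  | empty => simp
  | cons a f ih =>
    rw [Multiset.forall_mem_cons] at hf
    rw [Multiset.prod_cons, Multiset.map_cons, Multiset.sum_cons, ← ih hf.2]
    exact totalDegree_mul_of_isDomain hf.1 (Multiset.prod_ne_zero fun h0 => hf.2 0 h0 rfl)

variable {𝕜 : Type*} [Field 𝕜] {r : ℕ}

theorem le_zeroLocusDim_add_one_of_comap_eq_span {N : ℕ}
    {ι : MvPolynomial (Fin N) 𝕜 →ₐ[𝕜] MvPolynomial (Fin r) 𝕜}
    {𝔮 : Ideal (MvPolynomial (Fin r) 𝕜)} {q : MvPolynomial (Fin N) 𝕜} (hq : Prime q)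
    (h𝔮 : 𝔮.comap ι = Ideal.span {q}) : N ≤ zeroLocusDim 𝔮 + 1 := by
  obtain ⟨j, hj⟩ := exists_degreeOf_pos_of_prime hq
  obtain ⟨M, rfl⟩ : ∃ M, N = M + 1 := ⟨N - 1, by have := j.pos; omega⟩
  let f : MvPolynomial (Fin M) 𝕜 →ₐ[𝕜] MvPolynomial (Fin r) 𝕜 ⧸ 𝔮 :=
    (Ideal.Quotient.mkₐ 𝕜 𝔮).comp (ι.comp (rename j.succAbove))
  have hf : Function.Injective f := by
    rw [injective_iff_map_eq_zero]
    intro p hp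
    have hmem : rename j.succAbove p ∈ 𝔮.comap ι :=
      (Ideal.Quotient.eq_zero_iff_mem (I := 𝔮)).mp hp
    rw [h𝔮, Ideal.mem_span_singleton] at hmem
    obtain ⟨w, hw⟩ := hmem
    by_contra hp0
    have hw0 : w ≠ 0 := by
      rintro rfl
      exact hp0 (rename_injective _ Fin.succAbove_right_injective (by simpa using hw))
    have hdeg := degreeOf_rename_succAbove j p
    rw [hw, degreeOf_mul_eq hq.ne_zero hw0] at hdeg
    omega
  have hM := natTrdeg_le_of_injective f hf
  rw [natTrdeg_mvPolynomial] at hM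
  exact Nat.succ_le_succ hM

theorem zeroLocusDim_add_one_eq_of_comap_eq_span {𝔭 𝔮 : Ideal (MvPolynomial (Fin r) 𝕜)}
    [𝔭.IsPrime] [𝔮.IsPrime] (hlt : 𝔭 < 𝔮)
    {ι : MvPolynomial (Fin (zeroLocusDim 𝔭)) 𝕜 →ₐ[𝕜] MvPolynomial (Fin r) 𝕜}
    {q : MvPolynomial (Fin (zeroLocusDim 𝔭)) 𝕜} (hq : Prime q)
    (h𝔮 : 𝔮.comap ι = Ideal.span {q}) : zeroLocusDim 𝔮 + 1 = zeroLocusDim 𝔭 :=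
  le_antisymm (natTrdeg_quotient_lt (𝕜 := 𝕜) hlt)
    (le_zeroLocusDim_add_one_of_comap_eq_span hq h𝔮)

theorem eval₂_finSuccEquiv_genericFamily {M : ℕ} (c : Fin r → ℕ) (l : ℕ → 𝕜)
    (q : MvPolynomial (Fin (M + 1)) 𝕜) :
    (finSuccEquiv 𝕜 M q).eval₂
        (aeval (genericFamily c l M) : MvPolynomial (Fin M) 𝕜 →ₐ[𝕜] _).toRingHom
        (powerCombination c (l M))
      = aeval (genericFamily c l (M + 1)) q := by
  let E : Polynomial (MvPolynomial (Fin M) 𝕜) →ₐ[𝕜] MvPolynomial (Fin r) 𝕜 :=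
    Polynomial.eval₂AlgHom (aeval (genericFamily c l M)) (powerCombination c (l M))
      fun _ => Commute.all _ _
  have hE : E.comp (finSuccEquiv 𝕜 M).toAlgHom = aeval (genericFamily c l (M + 1)) := by
    ext i : 1
    refine Fin.cases ?_ (fun i => ?_) i
    · simp [E, genericFamily_zero, finSuccEquiv_X_zero]
    · simp [E, genericFamily_succ, finSuccEquiv_X_succ]
  exact DFunLike.congr_fun hE q

variable {Ω Γ : Type*} [Field Ω] [Algebra 𝕜 Ω] [LinearOrderedCommGroupWithZero Γ]

theorem valuation_apply_le_max_pointDist {v : Valuation Ω Γ}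
    {φ σ : MvPolynomial (Fin r) 𝕜 →ₐ[𝕜] Ω} (hφ : ∀ g, v (φ g) ≤ 1) (hσ : ∀ g, v (σ g) ≤ 1)
    (t : MvPolynomial (Fin r) 𝕜) : v (σ t) ≤ max (pointDist v φ σ) (v (φ t)) := by
  have hadd := v.map_add (σ t - φ t) (φ t)
  rw [sub_add_cancel] at hadd
  exact hadd.trans (max_le_max_right _ (valuation_sub_le_pointDist hφ hσ t))

/-- The distance from the point `φ` to the zero set of `𝔮`: the product of the distances from `φ`
to the points of the zero set that lie in the same fiber of the generic projection. -/
def fiberDist (v : Valuation Ω Γ) (φ : MvPolynomial (Fin r) 𝕜 →ₐ[𝕜] Ω) (c : Fin r → ℕ) (l : ℕ → 𝕜)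
    (𝔮 : Ideal (MvPolynomial (Fin r) 𝕜)) : Γ :=
  ∏ σ ∈ fiberFinset φ 𝔮 (aeval (genericFamily c l (zeroLocusDim 𝔮))), pointDist v φ σ

variable [CharZero 𝕜] [IsAlgClosed Ω] {v : Valuation Ω Γ}
  {φ : MvPolynomial (Fin r) 𝕜 →ₐ[𝕜] Ω} {c : Fin r → ℕ} {l : ℕ → 𝕜}
  {𝔭 𝔮 : Ideal (MvPolynomial (Fin r) 𝕜)} [𝔭.IsPrime] [𝔮.IsPrime]

theorem IsGenericFor.exists_associated_finSuccEquiv (h𝔮 : IsGenericFor v φ c 𝔮 l)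
    (hφ : IsIntegralGenericPoint v φ) (hc : ∀ i, 1 ≤ c i)
    {q : MvPolynomial (Fin (zeroLocusDim 𝔮 + 1)) 𝕜} (hq : Prime q)
    (hq𝔮 : aeval (genericFamily c l (zeroLocusDim 𝔮 + 1)) q ∈ 𝔮) :
    ∃ h : Polynomial (MvPolynomial (Fin (zeroLocusDim 𝔮)) 𝕜), h.natDegree = boxDegree c 𝔮 ∧
      h.map (φ.comp (aeval (genericFamily c l (zeroLocusDim 𝔮)))).toRingHom
        = ∏ σ ∈ fiberFinset φ 𝔮 (aeval (genericFamily c l (zeroLocusDim 𝔮))),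
            (Polynomial.X - Polynomial.C (σ (powerCombination c (l (zeroLocusDim 𝔮))))) ∧
      Associated h (finSuccEquiv 𝕜 _ q) := by
  have : Infinite 𝕜 := CharZero.infinite 𝕜
  obtain ⟨h, hmonic, hdeg, hmap, hdvd⟩ :=
    (h𝔮.isNormalizingFamily.fiberDescription hφ hc).exists_minpoly h𝔮.injOn
  have hirr : Irreducible (finSuccEquiv 𝕜 _ q) :=
    (MulEquiv.irreducible_iff (finSuccEquiv 𝕜 _).toMulEquiv).mpr hq.irreducible
  have hnotUnit : ¬IsUnit h := fun hunit => by
    have hpos := boxDegree_pos (I := 𝔮) hc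
    rw [← hdeg, hmonic.isUnit_iff.mp hunit, Polynomial.natDegree_one] at hpos
    exact hpos.false
  refine ⟨h, hdeg, hmap, ?_⟩
  obtain ⟨u, hu⟩ := (hdvd _).mp (by rwa [eval₂_finSuccEquiv_genericFamily])
  exact ⟨((hirr.isUnit_or_isUnit hu).resolve_left hnotUnit).unit, hu.symm⟩

theorem IsGenericFor.boxDegree_le_totalDegree (h𝔮 : IsGenericFor v φ c 𝔮 l)
    (hφ : IsIntegralGenericPoint v φ) (hc : ∀ i, 1 ≤ c i)
    {q : MvPolynomial (Fin (zeroLocusDim 𝔮 + 1)) 𝕜} (hq : Prime q)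
    (hq𝔮 : aeval (genericFamily c l (zeroLocusDim 𝔮 + 1)) q ∈ 𝔮) :
    boxDegree c 𝔮 ≤ q.totalDegree := by
  obtain ⟨h, hdeg, -, hassoc⟩ := h𝔮.exists_associated_finSuccEquiv hφ hc hq hq𝔮
  rw [← hdeg, Polynomial.natDegree_eq_of_degree_eq
    (Polynomial.degree_eq_degree_of_associated hassoc), natDegree_finSuccEquiv]
  exact degreeOf_le_totalDegree q 0

theorem IsGenericFor.fiberDist_eq_valuation (h𝔮 : IsGenericFor v φ c 𝔮 l)
    (hφ : IsIntegralGenericPoint v φ) (hc : ∀ i, 1 ≤ c i)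
    {q : MvPolynomial (Fin (zeroLocusDim 𝔮 + 1)) 𝕜} (hq : Prime q)
    (hq𝔮 : aeval (genericFamily c l (zeroLocusDim 𝔮 + 1)) q ∈ 𝔮) :
    fiberDist v φ c l 𝔮 = v (φ (aeval (genericFamily c l (zeroLocusDim 𝔮 + 1)) q)) := by
  obtain ⟨h, -, hmap, hassoc⟩ := h𝔮.exists_associated_finSuccEquiv hφ hc hq hq𝔮
  have hfiber := h𝔮.isNormalizingFamily.fiberDescription hφ hc
  let ev := Polynomial.eval₂RingHom
    (aeval (genericFamily c l (zeroLocusDim 𝔮)) : MvPolynomial _ 𝕜 →ₐ[𝕜] _).toRingHom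
    (powerCombination c (l (zeroLocusDim 𝔮)))
  let w : Valuation (Polynomial (MvPolynomial (Fin (zeroLocusDim 𝔮)) 𝕜)) Γ :=
    v.comap (φ.toRingHom.comp ev)
  calc fiberDist v φ c l 𝔮 = w h := by
        refine Eq.trans ?_ (congrArg v (algHom_eval₂_toRingHom φ (aeval _) _ h)).symm
        rw [hmap, Polynomial.eval_prod, map_prod]
        refine Finset.prod_congr rfl fun σ hσ => ?_
        rw [← h𝔮.valuation_eq_pointDist σ ((mem_fiberFinset hfiber.finite).mp hσ),
          Valuation.map_sub_swap, Polynomial.eval_sub, Polynomial.eval_X, Polynomial.eval_C]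
    _ = w (finSuccEquiv 𝕜 _ q) :=
        valuation_eq_of_associated w (fun _ => hφ.valuation_le_one _) hassoc
    _ = _ := congrArg (fun g => v (φ g)) (eval₂_finSuccEquiv_genericFamily c l q)

theorem exists_component_of_prime (hφ : IsIntegralGenericPoint v φ) (hc : ∀ i, 1 ≤ c i) {N : ℕ}
    (hN : zeroLocusDim 𝔭 = N) {t : MvPolynomial (Fin r) 𝕜} (ht : t ∉ 𝔭)
    (hgen : ∀ 𝔮 ∈ (𝔭 ⊔ Ideal.span {t}).minimalPrimes, IsGenericFor v φ c 𝔮 l)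
    {ν q : MvPolynomial (Fin N) 𝕜} (hν0 : ν ≠ 0)
    (hν : aeval (genericFamily c l N) ν ∈ 𝔭 ⊔ Ideal.span {t}) (hq : Prime q)
    (hQ : ∃ Q : Ideal (MvPolynomial (Fin r) 𝕜), Q.IsPrime ∧ 𝔭 ≤ Q ∧ t ∈ Q ∧
      Q.comap (aeval (genericFamily c l N) : MvPolynomial (Fin N) 𝕜 →ₐ[𝕜] _) = Ideal.span {q}) :
    ∃ 𝔮 ∈ (𝔭 ⊔ Ideal.span {t}).minimalPrimes, zeroLocusDim 𝔮 + 1 = N ∧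
      boxDegree c 𝔮 ≤ q.totalDegree ∧
      fiberDist v φ c l 𝔮 = v (φ (aeval (genericFamily c l N) q)) := by
  subst hN
  obtain ⟨Q, _, h𝔭Q, htQ, hQ⟩ := hQ
  obtain ⟨𝔮, h𝔮, hcomap⟩ := exists_minimalPrimes_comap_eq_span _
    (sup_le h𝔭Q ((Ideal.span_singleton_le_iff_mem _).mpr htQ)) hν0 hν hq hQ
  have : 𝔮.IsPrime := h𝔮.1.1
  have ht𝔮 : t ∈ 𝔮 := h𝔮.1.2 (Ideal.mem_sup_right (Ideal.mem_span_singleton_self t))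
  have hlt : 𝔭 < 𝔮 :=
    SetLike.lt_iff_le_and_exists.mpr ⟨le_sup_left.trans h𝔮.1.2, t, ht𝔮, ht⟩
  have hdim := zeroLocusDim_add_one_eq_of_comap_eq_span hlt hq hcomap
  have hq𝔮 : aeval (genericFamily c l (zeroLocusDim 𝔭)) q ∈ 𝔮 := by
    rw [← AlgHom.coe_toRingHom, ← Ideal.mem_comap]
    exact hcomap ▸ Ideal.mem_span_singleton_self q
  clear hcomap hQ hν hν0 ν
  refine ⟨𝔮, h𝔮, hdim, ?_⟩
  generalize zeroLocusDim 𝔭 = N at *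
  subst hdim
  exact ⟨(hgen 𝔮 h𝔮).boxDegree_le_totalDegree hφ hc hq hq𝔮,
    (hgen 𝔮 h𝔮).fiberDist_eq_valuation hφ hc hq hq𝔮⟩

/- The components are listed along the prime factors of the norm of `t` to the base of the generic
projection, so that the degree and the valuation of the norm bound the sum of their degrees and the
product of their distances. -/
theorem exists_components (hφ : IsIntegralGenericPoint v φ) (hc : ∀ i, 1 ≤ c i)
    (h𝔭 : IsGenericFor v φ c 𝔭 l) {t : MvPolynomial (Fin r) 𝕜} (ht : t ∉ 𝔭) {e : ℕ}
    (hte : t ∈ box 𝕜 c ^ e)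
    (hgen : ∀ 𝔮 ∈ (𝔭 ⊔ Ideal.span {t}).minimalPrimes, IsGenericFor v φ c 𝔮 l) :
    ∃ s : Multiset (Ideal (MvPolynomial (Fin r) 𝕜)),
      (∀ 𝔮 ∈ s, 𝔮 ∈ (𝔭 ⊔ Ideal.span {t}).minimalPrimes ∧ zeroLocusDim 𝔮 + 1 = zeroLocusDim 𝔭) ∧
      (s.map (boxDegree c)).sum ≤ e * boxDegree c 𝔭 ∧
      (s.map (fiberDist v φ c l)).prod
        ≤ ∏ σ ∈ fiberFinset φ 𝔭 (aeval (genericFamily c l (zeroLocusDim 𝔭))),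
            max (pointDist v φ σ) (v (φ t)) := by
  have hfiber := h𝔭.isNormalizingFamily.fiberDescription hφ hc
  obtain ⟨ν, hν0, hνdeg, hνφ, hνmem, hνq⟩ := hfiber.exists_norm ht hte
  obtain ⟨f, hf, hfν⟩ := UniqueFactorizationMonoid.exists_prime_factors ν hν0
  have hcomponent : ∀ q ∈ f, ∃ 𝔮 ∈ (𝔭 ⊔ Ideal.span {t}).minimalPrimes,
      zeroLocusDim 𝔮 + 1 = zeroLocusDim 𝔭 ∧ boxDegree c 𝔮 ≤ q.totalDegree ∧
      fiberDist v φ c l 𝔮 = v (φ (aeval (genericFamily c l _) q)) := fun q hqf =>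
    exists_component_of_prime hφ hc rfl ht hgen hν0 hνmem (hf q hqf)
      (hνq q (hf q hqf) ((Multiset.dvd_prod hqf).trans hfν.dvd))
  choose! F hFmem hFdim hFdeg hFdist using hcomponent
  refine ⟨f.map F, ?_, ?_, ?_⟩
  · rw [Multiset.forall_mem_map_iff]
    exact fun q hq => ⟨hFmem q hq, hFdim q hq⟩
  · calc ((f.map F).map (boxDegree c)).sum ≤ (f.map totalDegree).sum := by
          rw [Multiset.map_map]
          exact Multiset.sum_map_le_sum_map _ _ hFdeg
      _ = f.prod.totalDegree :=
          (totalDegree_multiset_prod_of_ne_zero f fun q hq => (hf q hq).ne_zero).symm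
      _ ≤ ν.totalDegree := totalDegree_le_of_dvd_of_isDomain hfν.dvd hν0
      _ ≤ e * boxDegree c 𝔭 := hνdeg
  · let w : Valuation (MvPolynomial (Fin (zeroLocusDim 𝔭)) 𝕜) Γ :=
      v.comap (φ.comp (aeval (genericFamily c l _))).toRingHom
    calc ((f.map F).map (fiberDist v φ c l)).prod = (f.map w).prod := by
          rw [Multiset.map_map]
          exact congrArg _ (Multiset.map_congr rfl hFdist)
      _ = w f.prod := (map_multiset_prod w f).symm
      _ = w ν := valuation_eq_of_associated w (fun _ => hφ.valuation_le_one _) hfν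
      _ = ∏ σ ∈ fiberFinset φ 𝔭 (aeval (genericFamily c l _)), v (σ t) :=
          (congrArg v hνφ).trans (map_prod v _ _)
      _ ≤ _ := Finset.prod_le_prod' fun σ hσ => valuation_apply_le_max_pointDist
          hφ.valuation_le_one
          (hfiber.valuation_le_one ((mem_fiberFinset hfiber.finite).mp hσ)) t

end Hypersurface

section PowerSeries

variable {E : Type*} [Field E]

section

variable {Γ : Type*} [LinearOrderedCommMonoidWithZero Γ] {v : Valuation (PowerSeries E) Γ}

theorem valuation_le_pow_of_X_pow_dvd (hv : ∀ f, v f ≤ 1) {f : PowerSeries E} {k : ℕ}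
    (hf : PowerSeries.X ^ k ∣ f) : v f ≤ v PowerSeries.X ^ k := by
  obtain ⟨g, rfl⟩ := hf
  rw [map_mul, map_pow]
  exact mul_le_of_le_one_right' (hv g)

theorem pow_le_valuation_of_coeff_ne_zero (hv : ∀ f, v f ≤ 1) {f : PowerSeries E} {k : ℕ}
    (hk : PowerSeries.coeff k f ≠ 0) : v PowerSeries.X ^ k ≤ v f := by
  have hf : f ≠ 0 := by
    rintro rfl
    exact hk (map_zero _)
  have hassoc : Associated (PowerSeries.X ^ f.order.toNat) f :=
    ⟨(PowerSeries.isUnit_divided_by_X_pow_order hf).unit,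
      PowerSeries.X_pow_order_mul_divXPowOrder⟩
  rw [← valuation_eq_of_associated v hv hassoc, map_pow]
  exact pow_le_pow_right_of_le_one' (hv _)
    (ENat.toNat_le_of_le_natCast (PowerSeries.order_le k hk))

end

theorem exists_valuationSubring_powerSeries (E : Type*) [Field E] :
    ∃ A : ValuationSubring (AlgebraicClosure (FractionRing (PowerSeries E))),
      (∀ f : PowerSeries E, A.valuation (algebraMap _ _ f) ≤ 1) ∧
      A.valuation (algebraMap (PowerSeries E) _ PowerSeries.X) < 1 := by
  let ι := algebraMap (PowerSeries E) (AlgebraicClosure (FractionRing (PowerSeries E)))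
  obtain ⟨A, hA, hloc⟩ := IsLocalRing.exists_factor_valuationRing ι
  refine ⟨A, fun f => (A.valuation_le_one_iff _).mpr (hA f),
    (A.valuation_lt_one_iff (ι.codRestrict A.toSubring hA PowerSeries.X)).mp ?_⟩
  rw [IsLocalRing.mem_maximalIdeal, mem_nonunits_iff]
  exact fun h => PowerSeries.X_prime.not_isUnit (hloc.map_nonunit _ h)

end PowerSeries

section Flow

variable {𝕜 R E : Type*} [Field 𝕜] [CommRing R] [Algebra 𝕜 R] [Field E] [Algebra 𝕜 E]

/-- The formal integral curve of the derivation `D` through the point `α`: its coefficients are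
the ones that make `derivative_flowSeries` hold. -/
def flowSeries (D : Derivation 𝕜 R R) (α : R →ₐ[𝕜] E) (Q : R) : PowerSeries E :=
  PowerSeries.mk fun j => ((j.factorial : 𝕜)⁻¹) • α (D^[j] Q)

variable (D : Derivation 𝕜 R R) (α : R →ₐ[𝕜] E)

theorem flowSeries_add (P Q : R) :
    flowSeries D α (P + Q) = flowSeries D α P + flowSeries D α Q := by
  ext j
  simp [flowSeries, iterate_map_add]

theorem constantCoeff_flowSeries (Q : R) :
    PowerSeries.constantCoeff (flowSeries D α Q) = α Q := by
  simp [flowSeries, ← PowerSeries.coeff_zero_eq_constantCoeff_apply]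

theorem flowSeries_algebraMap (z : 𝕜) :
    flowSeries D α (algebraMap 𝕜 R z) = algebraMap 𝕜 (PowerSeries E) z := by
  ext j
  rcases j with _ | j
  · simp [constantCoeff_flowSeries, PowerSeries.algebraMap_apply]
  · simp [flowSeries, PowerSeries.algebraMap_apply, iterate_map_zero]

variable [CharZero 𝕜]

theorem derivative_flowSeries (Q : R) :
    PowerSeries.derivative E (flowSeries D α Q) = flowSeries D α (D Q) := by
  ext j
  have hcast : ((j : E) + 1) = algebraMap 𝕜 E (j + 1) := by simp
  have hfactorial : (j.factorial : 𝕜) ≠ 0 := Nat.cast_ne_zero.mpr j.factorial_ne_zero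
  have hsucc : (j : 𝕜) + 1 ≠ 0 := Nat.cast_add_one_ne_zero j
  rw [PowerSeries.coeff_derivative, flowSeries, flowSeries, PowerSeries.coeff_mk,
    PowerSeries.coeff_mk, hcast, mul_comm, ← Algebra.smul_def, smul_smul,
    Function.iterate_succ_apply, Nat.factorial_succ]
  congr 1
  push_cast
  field_simp

theorem flowSeries_mul (P Q : R) :
    flowSeries D α (P * Q) = flowSeries D α P * flowSeries D α Q := by
  let defect (P Q : R) := flowSeries D α (P * Q) - flowSeries D α P * flowSeries D α Q
  have derivative_defect (P Q : R) :
      PowerSeries.derivative E (defect P Q) = defect (D P) Q + defect P (D Q) := by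
    simp only [defect, map_sub, Derivation.leibniz, derivative_flowSeries, flowSeries_add,
      smul_eq_mul, mul_comm Q (D P)]
    ring
  suffices h : ∀ k P Q, PowerSeries.coeff k (defect P Q) = 0 from
    sub_eq_zero.mp (PowerSeries.ext fun k => h k P Q)
  have : CharZero E := charZero_of_injective_algebraMap (algebraMap 𝕜 E).injective
  intro k
  induction k with
  | zero => simp [defect, constantCoeff_flowSeries]
  | succ k ih =>
    intro P Q
    have hcoeff := PowerSeries.coeff_derivative (defect P Q) k
    rw [derivative_defect, map_add, ih, ih, add_zero] at hcoeff
    exact (mul_eq_zero.mp hcoeff.symm).resolve_right (Nat.cast_add_one_ne_zero k)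

/-- The formal integral curve of the derivation `D` through the point `α`, as a point with values in
the ring of formal power series. -/
def flow : R →ₐ[𝕜] PowerSeries E where
  toFun := flowSeries D α
  map_one' := by simpa using flowSeries_algebraMap D α 1
  map_mul' := flowSeries_mul D α
  map_zero' := by simpa using flowSeries_algebraMap D α 0
  map_add' := flowSeries_add D α
  commutes' := flowSeries_algebraMap D α

theorem coeff_flow_eq_zero_iff (Q : R) (j : ℕ) :
    PowerSeries.coeff j (flow D α Q) = 0 ↔ α (D^[j] Q) = 0 := by
  have hcoeff : PowerSeries.coeff j (flow D α Q) = ((j.factorial : 𝕜)⁻¹) • α (D^[j] Q) :=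
    PowerSeries.coeff_mk j fun j => ((j.factorial : 𝕜)⁻¹) • α (D^[j] Q)
  rw [hcoeff, smul_eq_zero, inv_eq_zero,
    or_iff_right (Nat.cast_ne_zero.mpr j.factorial_ne_zero)]

/-- No nonzero prime ideal contained in `I` is `D`-stable. -/
def NoStablePrimeLE (D : Derivation 𝕜 R R) (I : Ideal R) : Prop :=
  ∀ 𝔮 : Ideal R, 𝔮.IsPrime → 𝔮 ≤ I → 𝔮 ≠ ⊥ → ∃ x ∈ 𝔮, D x ∉ 𝔮

variable {D α}

/- The kernel of the flow is a `D`-stable prime ideal contained in the kernel of `α`. -/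
theorem flow_injective (h : NoStablePrimeLE D (RingHom.ker α)) :
    Function.Injective (flow D α) := by
  have mem_ker (y : R) : y ∈ RingHom.ker (flow D α) ↔ ∀ j, α (D^[j] y) = 0 := by
    rw [RingHom.mem_ker, PowerSeries.ext_iff]
    simp [coeff_flow_eq_zero_iff]
  rw [RingHom.injective_iff_ker_eq_bot]
  by_contra hne
  obtain ⟨y, hy, hDy⟩ := h _ (RingHom.ker_isPrime _) (fun y hy => (mem_ker y).mp hy 0) hne
  refine hDy ((mem_ker _).mpr fun j => ?_)
  rw [← Function.iterate_succ_apply]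
  exact (mem_ker y).mp hy (j + 1)

end Flow

section FlowCurve

variable {𝕜 : Type*} [Field 𝕜] {r : ℕ}

/-- An integral point `ψ`, generic in the ambient space and specializing to the generic point of
`𝔭`, which moves along the vector field `D`. The value `π` is the one of the time parameter. -/
structure IsFlowCurve {Ω Γ : Type*} [Field Ω] [Algebra 𝕜 Ω] [LinearOrderedCommGroupWithZero Γ]
    (D : Derivation 𝕜 (MvPolynomial (Fin r) 𝕜) (MvPolynomial (Fin r) 𝕜))
    (𝔭 : Ideal (MvPolynomial (Fin r) 𝕜)) (v : Valuation Ω Γ)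
    (ψ : MvPolynomial (Fin r) 𝕜 →ₐ[𝕜] Ω) (π : Γ) : Prop where
  isIntegralGenericPoint : IsIntegralGenericPoint v ψ
  pos : 0 < π
  lt_one : π < 1
  valuation_lt_one_iff (g : MvPolynomial (Fin r) 𝕜) : v (ψ g) < 1 ↔ g ∈ 𝔭
  exists_mem_le_valuation : ∃ g ∈ 𝔭, π ≤ v (ψ g)
  valuation_le_pow (g : MvPolynomial (Fin r) 𝕜) (k : ℕ) (h : ∀ j < k, D^[j] g ∈ 𝔭) :
    v (ψ g) ≤ π ^ k

section

variable [CharZero 𝕜] {D : Derivation 𝕜 (MvPolynomial (Fin r) 𝕜) (MvPolynomial (Fin r) 𝕜)}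

theorem isFlowCurve_comp_flow {E Ω Γ : Type*} [Field E] [Algebra 𝕜 E] [Field Ω] [Algebra 𝕜 Ω]
    [LinearOrderedCommGroupWithZero Γ] {v : Valuation Ω Γ} {ι : PowerSeries E →ₐ[𝕜] Ω}
    (hι : Function.Injective ι) (hv : ∀ f, v (ι f) ≤ 1) (hX : v (ι PowerSeries.X) < 1)
    {α : MvPolynomial (Fin r) 𝕜 →ₐ[𝕜] E} (h0 : RingHom.ker α ≠ ⊥)
    (hD : NoStablePrimeLE D (RingHom.ker α)) :
    IsFlowCurve D (RingHom.ker α) v (ι.comp (flow D α)) (v (ι PowerSeries.X)) := by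
  have le_pow (g : MvPolynomial (Fin r) 𝕜) (k : ℕ) (h : ∀ j < k, D^[j] g ∈ RingHom.ker α) :
      v (ι (flow D α g)) ≤ v (ι PowerSeries.X) ^ k :=
    valuation_le_pow_of_X_pow_dvd (v := v.comap ι.toRingHom) hv
      (PowerSeries.X_pow_dvd_iff.mpr fun j hj => (coeff_flow_eq_zero_iff D α g j).mpr (h j hj))
  have pow_le (g : MvPolynomial (Fin r) 𝕜) (k : ℕ) (h : D^[k] g ∉ RingHom.ker α) :
      v (ι PowerSeries.X) ^ k ≤ v (ι (flow D α g)) :=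
    pow_le_valuation_of_coeff_ne_zero (v := v.comap ι.toRingHom) hv
      ((coeff_flow_eq_zero_iff D α g k).not.mpr h)
  refine ⟨⟨hι.comp (flow_injective hD), fun g => hv _⟩, ?_, hX, fun g => ⟨fun h => ?_, fun h => ?_⟩,
    ?_, le_pow⟩
  · exact zero_lt_iff.mpr ((Valuation.ne_zero_iff v).mpr
      ((map_ne_zero_iff ι hι).mpr PowerSeries.X_ne_zero))
  · by_contra hg
    simpa using (pow_le g 0 hg).trans_lt h
  · exact (le_pow g 1 (by simpa using h)).trans_lt (by simpa using hX)
  · obtain ⟨g, hg, hDg⟩ := hD _ (RingHom.ker_isPrime α) le_rfl h0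
    exact ⟨g, hg, by simpa using pow_le g 1 hDg⟩

theorem exists_isFlowCurve {𝔭 : Ideal (MvPolynomial (Fin r) 𝕜)} [𝔭.IsPrime] (h0 : 𝔭 ≠ ⊥)
    (hD : NoStablePrimeLE D 𝔭) :
    ∃ (A : ValuationSubring (AlgebraicClosure (FractionRing
        (PowerSeries (FractionRing (MvPolynomial (Fin r) 𝕜 ⧸ 𝔭)))))) (ψ : _ →ₐ[𝕜] _) (π : _),
      IsFlowCurve D 𝔭 A.valuation ψ π := by
  let B := MvPolynomial (Fin r) 𝕜 ⧸ 𝔭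
  let S := PowerSeries (FractionRing B)
  let ι : S →ₐ[𝕜] AlgebraicClosure (FractionRing S) := IsScalarTower.toAlgHom 𝕜 S _
  have hι : Function.Injective ι :=
    (algebraMap (FractionRing S) _).injective.comp (IsFractionRing.injective S (FractionRing S))
  obtain ⟨A, hA, hX⟩ := exists_valuationSubring_powerSeries (FractionRing B)
  let α : MvPolynomial (Fin r) 𝕜 →ₐ[𝕜] FractionRing B :=
    (IsScalarTower.toAlgHom 𝕜 B (FractionRing B)).comp (Ideal.Quotient.mkₐ 𝕜 𝔭)
  have hker : RingHom.ker α = 𝔭 := Ideal.ext fun g =>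
    (map_eq_zero_iff _ (IsFractionRing.injective B (FractionRing B))).trans
      (Ideal.Quotient.eq_zero_iff_mem (I := 𝔭))
  have hcurve := isFlowCurve_comp_flow (α := α) hι hA hX (by rwa [hker]) (by rwa [hker])
  rw [hker] at hcurve
  exact ⟨A, _, _, hcurve⟩

end

end FlowCurve

section FiberDist

variable {𝕜 : Type*} [Field 𝕜] {r : ℕ}

theorem valuation_eval_derivative_prod_lt_one {Ω Γ ι : Type*} [Field Ω]
    [LinearOrderedCommGroupWithZero Γ] {v : Valuation Ω Γ} {s : Finset ι} {a : ι → Ω} {x : Ω}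
    (hle : ∀ i ∈ s, v (x - a i) ≤ 1) {i j : ι} (hi : i ∈ s) (hj : j ∈ s) (hij : i ≠ j)
    (hvi : v (x - a i) < 1) (hvj : v (x - a j) < 1) :
    v ((Polynomial.derivative (∏ k ∈ s, (Polynomial.X - Polynomial.C (a k)))).eval x) < 1 := by
  rw [Polynomial.derivative_prod_finset, Polynomial.eval_finsetSum]
  refine v.map_sum_lt one_ne_zero fun k _ => ?_
  rw [Polynomial.derivative_X_sub_C, mul_one, Polynomial.eval_prod, map_prod]
  obtain ⟨m, hm, hvm⟩ : ∃ m ∈ s.erase k, v (x - a m) < 1 := by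
    by_cases hki : k = i
    · exact ⟨j, Finset.mem_erase.mpr ⟨fun hjk => hij (hki.symm.trans hjk.symm), hj⟩, hvj⟩
    · exact ⟨i, Finset.mem_erase.mpr ⟨Ne.symm hki, hi⟩, hvi⟩
  rw [← Finset.mul_prod_erase _ _ hm]
  refine (mul_le_of_le_one_right' (Finset.prod_le_one' fun n hn => ?_)).trans_lt
      (by simpa using hvm)
  simpa using hle n (Finset.mem_of_mem_erase (Finset.mem_of_mem_erase hn))

variable {Ω Γ : Type*} [Field Ω] [Algebra 𝕜 Ω] [LinearOrderedCommGroupWithZero Γ]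
  [CharZero 𝕜] [IsAlgClosed Ω] {v : Valuation Ω Γ} {c : Fin r → ℕ} {l : ℕ → 𝕜}

section

variable {φ σ : MvPolynomial (Fin r) 𝕜 →ₐ[𝕜] Ω} {𝔮 : Ideal (MvPolynomial (Fin r) 𝕜)} [𝔮.IsPrime]

theorem IsGenericFor.fiberDescription (h : IsGenericFor v φ c 𝔮 l)
    (hφ : IsIntegralGenericPoint v φ) (hc : ∀ i, 1 ≤ c i) :
    FiberDescription v φ c 𝔮 (genericFamily c l (zeroLocusDim 𝔮)) :=
  h.isNormalizingFamily.fiberDescription hφ hc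

theorem IsGenericFor.valuation_le_pointDist (h : IsGenericFor v φ c 𝔮 l)
    (hφ : IsIntegralGenericPoint v φ) (hc : ∀ i, 1 ≤ c i)
    (hσ : σ ∈ fiberFinset φ 𝔮 (aeval (genericFamily c l (zeroLocusDim 𝔮))))
    {g : MvPolynomial (Fin r) 𝕜} (hg : g ∈ 𝔮) : v (φ g) ≤ pointDist v φ σ := by
  have hfiber := h.fiberDescription hφ hc
  have hσ_mem := (mem_fiberFinset hfiber.finite).mp hσ
  exact valuation_le_pointDist_of_apply_eq_zero hφ.valuation_le_one
    (hfiber.valuation_le_one hσ_mem) (hσ_mem.1 g hg)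

theorem IsGenericFor.pointDist_le_one (h : IsGenericFor v φ c 𝔮 l)
    (hφ : IsIntegralGenericPoint v φ) (hc : ∀ i, 1 ≤ c i)
    (hσ : σ ∈ fiberFinset φ 𝔮 (aeval (genericFamily c l (zeroLocusDim 𝔮)))) :
    pointDist v φ σ ≤ 1 := by
  have hfiber := h.fiberDescription hφ hc
  exact _root_.pointDist_le_one hφ.valuation_le_one
    (hfiber.valuation_le_one ((mem_fiberFinset hfiber.finite).mp hσ))

theorem IsGenericFor.pow_boxDegree_le_fiberDist (h : IsGenericFor v φ c 𝔮 l)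
    (hφ : IsIntegralGenericPoint v φ) (hc : ∀ i, 1 ≤ c i) {g : MvPolynomial (Fin r) 𝕜}
    (hg : g ∈ 𝔮) {a : Γ} (ha : a ≤ v (φ g)) : a ^ boxDegree c 𝔮 ≤ fiberDist v φ c l 𝔮 := by
  rw [fiberDist, ← (h.fiberDescription hφ hc).card_eq, ← Finset.prod_const]
  exact Finset.prod_le_prod' fun σ hσ => ha.trans (h.valuation_le_pointDist hφ hc hσ hg)

end

theorem IsGenericFor.self_mem_fiberFinset_bot {φ : MvPolynomial (Fin r) 𝕜 →ₐ[𝕜] Ω}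
    (h : IsGenericFor v φ c ⊥ l) (hφ : IsIntegralGenericPoint v φ) (hc : ∀ i, 1 ≤ c i) :
    φ ∈ fiberFinset φ ⊥
      (aeval (genericFamily c l (zeroLocusDim (⊥ : Ideal (MvPolynomial (Fin r) 𝕜))))) := by
  refine (mem_fiberFinset (h.fiberDescription hφ hc).finite).mpr ⟨fun x hx => ?_, fun _ => rfl⟩
  rw [(Submodule.mem_bot _).mp hx, map_zero]

theorem IsGenericFor.fiberDist_bot {φ : MvPolynomial (Fin r) 𝕜 →ₐ[𝕜] Ω}
    (h : IsGenericFor v φ c ⊥ l) (hφ : IsIntegralGenericPoint v φ) (hc : ∀ i, 1 ≤ c i) :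
    fiberDist v φ c l ⊥ = 0 :=
  Finset.prod_eq_zero (h.self_mem_fiberFinset_bot hφ hc) (pointDist_self v φ)

variable {D : Derivation 𝕜 (MvPolynomial (Fin r) 𝕜) (MvPolynomial (Fin r) 𝕜)}
  {𝔭 𝔮 : Ideal (MvPolynomial (Fin r) 𝕜)} {ψ : MvPolynomial (Fin r) 𝕜 →ₐ[𝕜] Ω} {π : Γ}

theorem IsFlowCurve.one_le_fiberDist [𝔮.IsPrime] (hψ : IsFlowCurve D 𝔭 v ψ π)
    (hc : ∀ i, 1 ≤ c i) (h : IsGenericFor v ψ c 𝔮 l) (hle : ¬𝔮 ≤ 𝔭) :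
    1 ≤ fiberDist v ψ c l 𝔮 := by
  obtain ⟨g, hg𝔮, hg𝔭⟩ := Set.not_subset.mp hle
  have hg : 1 ≤ v (ψ g) := not_lt.mp fun hlt => hg𝔭 ((hψ.valuation_lt_one_iff g).mp hlt)
  simpa using h.pow_boxDegree_le_fiberDist hψ.isIntegralGenericPoint hc hg𝔮 hg

/- Two points of the fiber at distance less than `1` from `ψ` make the minimal polynomial of the
separating element have a multiple root modulo `𝔭`, contradicting separability over the base. -/
theorem IsFlowCurve.eq_of_pointDist_lt_one [𝔭.IsPrime] (hψ : IsFlowCurve D 𝔭 v ψ π)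
    (hc : ∀ i, 1 ≤ c i) (h : IsGenericFor v ψ c 𝔭 l)
    {σ τ : MvPolynomial (Fin r) 𝕜 →ₐ[𝕜] Ω}
    (hσ : σ ∈ fiberFinset ψ 𝔭 (aeval (genericFamily c l (zeroLocusDim 𝔭))))
    (hτ : τ ∈ fiberFinset ψ 𝔭 (aeval (genericFamily c l (zeroLocusDim 𝔭))))
    (hσ_lt : pointDist v ψ σ < 1) (hτ_lt : pointDist v ψ τ < 1) : σ = τ := by
  have hfiber := h.fiberDescription hψ.isIntegralGenericPoint hc
  obtain ⟨m, -, hdeg, hmap, hdvd⟩ := hfiber.exists_minpoly h.injOn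
  have hdist : ∀ ρ ∈ fiberFinset ψ 𝔭 (aeval (genericFamily c l (zeroLocusDim 𝔭))),
      v (ψ (powerCombination c (l (zeroLocusDim 𝔭)))
        - ρ (powerCombination c (l (zeroLocusDim 𝔭)))) = pointDist v ψ ρ := fun ρ hρ => by
    rw [Valuation.map_sub_swap]
    exact h.valuation_eq_pointDist ρ ((mem_fiberFinset hfiber.finite).mp hρ)
  by_contra hne
  have hlt := valuation_eval_derivative_prod_lt_one
    (fun ρ hρ => (hdist ρ hρ).trans_le (h.pointDist_le_one hψ.isIntegralGenericPoint hc hρ))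
    hσ hτ hne (by rwa [hdist σ hσ]) (by rwa [hdist τ hτ])
  rw [← hmap, Polynomial.derivative_map, ← algHom_eval₂_toRingHom, hψ.valuation_lt_one_iff,
    hdvd] at hlt
  have hpos : 0 < m.natDegree := hdeg ▸ boxDegree_pos hc
  have hderiv : Polynomial.derivative m ≠ 0 := fun h0 =>
    hpos.ne' (Polynomial.derivative_eq_zero.mp h0)
  exact (Polynomial.natDegree_le_of_dvd hlt hderiv).not_gt
    (Polynomial.natDegree_derivative_lt hpos.ne')

theorem IsFlowCurve.le_fiberDist [𝔭.IsPrime] (hψ : IsFlowCurve D 𝔭 v ψ π) (hc : ∀ i, 1 ≤ c i)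
    (h : IsGenericFor v ψ c 𝔭 l) : π ≤ fiberDist v ψ c l 𝔭 := by
  by_cases hclose : ∃ σ ∈ fiberFinset ψ 𝔭 (aeval (genericFamily c l (zeroLocusDim 𝔭))),
      pointDist v ψ σ < 1
  · obtain ⟨σ, hσ, hσ_lt⟩ := hclose
    obtain ⟨g, hg, hπg⟩ := hψ.exists_mem_le_valuation
    rw [fiberDist, Finset.prod_eq_single_of_mem σ hσ fun τ hτ hne => ?_]
    · exact hπg.trans (h.valuation_le_pointDist hψ.isIntegralGenericPoint hc hσ hg)
    · refine (h.pointDist_le_one hψ.isIntegralGenericPoint hc hτ).antisymm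
        (not_lt.mp fun hτ_lt => ?_)
      exact hne (hψ.eq_of_pointDist_lt_one hc h hτ hσ hτ_lt hσ_lt)
  · push Not at hclose
    exact hψ.lt_one.le.trans (Finset.one_le_prod' hclose)

end FiberDist

theorem exists_lt_prod_le_two_mul_prod {ι : Type*} [Fintype ι] {c : ι → ℕ} (hc : ∀ i, 1 ≤ c i)
    (hprod : 1 < ∏ i, c i) : ∃ c' < c, (∀ i, 1 ≤ c' i) ∧ ∏ i, c i ≤ 2 * ∏ i, c' i := by
  obtain ⟨i, hi⟩ : ∃ i, 2 ≤ c i := by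
    by_contra! hle
    exact hprod.ne' (Finset.prod_eq_one fun i _ => le_antisymm (Nat.le_of_lt_succ (hle i)) (hc i))
  refine ⟨Function.update c i (c i - 1), ?_, fun j => ?_, ?_⟩
  · rw [update_lt_self_iff]
    omega
  · rcases eq_or_ne j i with rfl | hj
    · rw [Function.update_self]; omega
    · rw [Function.update_of_ne hj]; exact hc j
  · rw [Finset.prod_update_of_mem (Finset.mem_univ i), Finset.sdiff_singleton_eq_erase,
      ← Finset.mul_prod_erase _ _ (Finset.mem_univ i), ← mul_assoc]
    exact Nat.mul_le_mul_right _ (by omega)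

theorem pow_multiset_sum_map_le {ι M : Type*} [CommMonoid M] [PartialOrder M]
    [IsOrderedMonoid M] {s : Multiset ι} {d : ι → ℕ} {f : ι → M} {a : M} {m : ℕ}
    (h : ∀ i ∈ s, a ^ d i ≤ f i ^ m) : a ^ (s.map d).sum ≤ (s.map f).prod ^ m := by
  induction s using Multiset.induction_on with
  | empty => simp
  | cons i s ih =>
    rw [Multiset.map_cons, Multiset.map_cons, Multiset.sum_cons, Multiset.prod_cons, pow_add,
      mul_pow]
    exact mul_le_mul' (h i (Multiset.mem_cons_self i s))
      (ih fun j hj => h j (Multiset.mem_cons_of_mem hj))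

theorem prod_max_eq_prod_or_le {ι M : Type*} [CommMonoid M] [LinearOrder M] [IsOrderedMonoid M]
    {s : Finset ι} {f : ι → M} {b : M} (hf : ∀ i ∈ s, f i ≤ 1) (hb : b ≤ 1) :
    ∏ i ∈ s, max (f i) b = ∏ i ∈ s, f i ∨ ∏ i ∈ s, max (f i) b ≤ b := by
  by_cases h : ∀ i ∈ s, b ≤ f i
  · exact Or.inl (Finset.prod_congr rfl fun i hi => max_eq_left (h i hi))
  · push Not at h
    obtain ⟨i, hi, hlt⟩ := h
    refine Or.inr ?_
    rw [← Finset.mul_prod_erase _ _ hi, max_eq_right hlt.le]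
    exact mul_le_of_le_one_right' (Finset.prod_le_one' fun j hj =>
      max_le (hf j (Finset.mem_of_mem_erase hj)) hb)

section Tangency

universe u

variable {𝕜 : Type u} [Field 𝕜] {r : ℕ}

theorem box_pow_mono {c c' : Fin r → ℕ} (h : c ≤ c') (e : ℕ) : box 𝕜 c ^ e ≤ box 𝕜 c' ^ e := by
  rw [box_pow, box_pow]
  exact box_mono fun i => Nat.mul_le_mul_left e (h i)

theorem box_pow_le_box_pow (c : Fin r → ℕ) {a b : ℕ} (h : a ≤ b) : box 𝕜 c ^ a ≤ box 𝕜 c ^ b :=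
  submodule_pow_le_pow_of_one_mem (one_mem_box c) h

theorem zeroLocusDim_bot : zeroLocusDim (⊥ : Ideal (MvPolynomial (Fin r) 𝕜)) = r :=
  (natTrdeg_eq_of_algEquiv (AlgEquiv.quotientBot 𝕜 (MvPolynomial (Fin r) 𝕜))).trans
    (natTrdeg_mvPolynomial r)

/-- The derivation `D` raises multidegrees by at most `c₀` boxes, for all boxes of positive side
lengths. -/
def RaisesBoxDegreeBy (D : Derivation 𝕜 (MvPolynomial (Fin r) 𝕜) (MvPolynomial (Fin r) 𝕜))
    (c₀ : ℕ) : Prop :=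
  ∀ c : Fin r → ℕ, (∀ i, 1 ≤ c i) → ∀ e, ∀ Q ∈ box 𝕜 c ^ e, D Q ∈ box 𝕜 c ^ (e + c₀)

/-- If `boxDegree c 𝔭` is at most `Λ` times the volume of `c`, then some element of `𝔭` of bounded
degree leaves `𝔭` after a bounded number of differentiations; the bounds do not depend on the prime
ideal `𝔭` of dimension `N`. -/
def TangencyBound (D : Derivation 𝕜 (MvPolynomial (Fin r) 𝕜) (MvPolynomial (Fin r) 𝕜)) (N : ℕ) :
    Prop :=
  ∀ Λ : ℕ, ∃ C k : ℕ, ∀ 𝔭 : Ideal (MvPolynomial (Fin r) 𝕜), 𝔭.IsPrime → 𝔭 ≠ ⊥ →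
    NoStablePrimeLE D 𝔭 → zeroLocusDim 𝔭 = N → ∀ c : Fin r → ℕ, (∀ i, 1 ≤ c i) →
    boxDegree c 𝔭 ≤ Λ * ∏ i, c i → ∃ Q ∈ 𝔭, Q ∈ box 𝕜 c ^ C ∧ ∃ j ≤ k, D^[j] Q ∉ 𝔭

/-- Elements of `𝔭` of bounded degree stay in `𝔭` under a bounded number of differentiations: the
flow of `D` is tangent to the zero set of `𝔭` to high order. -/
def IsFlat (D : Derivation 𝕜 (MvPolynomial (Fin r) 𝕜) (MvPolynomial (Fin r) 𝕜))
    (𝔭 : Ideal (MvPolynomial (Fin r) 𝕜)) (c : Fin r → ℕ) (C k : ℕ) : Prop :=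
  ∀ Q ∈ 𝔭, Q ∈ box 𝕜 c ^ C → ∀ j ≤ k, D^[j] Q ∈ 𝔭

/-- A lower bound, for generic projections, for the distances from `ψ` to the varieties of dimension
`N` and of bounded degree that contain the zero set of `𝔭`. -/
def FiberDistBound {Ω Γ : Type*} [Field Ω] [Algebra 𝕜 Ω] [LinearOrderedCommGroupWithZero Γ]
    (v : Valuation Ω Γ) (ψ : MvPolynomial (Fin r) 𝕜 →ₐ[𝕜] Ω) (a : Γ)
    (𝔭 : Ideal (MvPolynomial (Fin r) 𝕜)) (c : Fin r → ℕ) (N Λ : ℕ) : Prop :=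
  ∀ 𝔮 : Ideal (MvPolynomial (Fin r) 𝕜), 𝔮.IsPrime → 𝔮 ≤ 𝔭 → zeroLocusDim 𝔮 = N →
    boxDegree c 𝔮 ≤ Λ * ∏ i, c i →
    ∀ᶠ l in genericFilter 𝕜 (r + 1),
      a ^ boxDegree c 𝔮 ≤ fiberDist v ψ c l 𝔮 ^ (2 * Λ * ∏ i, c i)

variable {D : Derivation 𝕜 (MvPolynomial (Fin r) 𝕜) (MvPolynomial (Fin r) 𝕜)} {c : Fin r → ℕ}

theorem RaisesBoxDegreeBy.iterate_mem_box_pow {c₀ : ℕ} (hD : RaisesBoxDegreeBy D c₀)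
    (hc : ∀ i, 1 ≤ c i) {e : ℕ} {Q : MvPolynomial (Fin r) 𝕜} (hQ : Q ∈ box 𝕜 c ^ e) (j : ℕ) :
    D^[j] Q ∈ box 𝕜 c ^ (e + j * c₀) := by
  induction j with
  | zero => simpa using hQ
  | succ j ih =>
    rw [Function.iterate_succ_apply', Nat.succ_mul, ← Nat.add_assoc]
    exact hD c hc _ _ ih

variable {𝔭 𝔮 : Ideal (MvPolynomial (Fin r) 𝕜)}

theorem exists_le_prod_le_boxDegree [Infinite 𝕜] [𝔭.IsPrime] {Λ : ℕ} (hΛ : 2 ≤ Λ)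
    (hc : ∀ i, 1 ≤ c i) (h : boxDegree c 𝔭 ≤ Λ * ∏ i, c i) :
    ∃ c' ≤ c, (∀ i, 1 ≤ c' i) ∧ boxDegree c' 𝔭 ≤ Λ * ∏ i, c' i ∧ ∏ i, c' i ≤ boxDegree c' 𝔭 := by
  induction c using WellFoundedLT.induction with
  | _ c ih =>
    by_cases hle : ∏ i, c i ≤ boxDegree c 𝔭
    · exact ⟨c, le_rfl, hc, h, hle⟩
    push Not at hle
    obtain ⟨c', hlt, hc', hprod⟩ :=
      exists_lt_prod_le_two_mul_prod hc (Nat.lt_of_le_of_lt (boxDegree_pos hc) hle)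
    have hdeg : boxDegree c' 𝔭 ≤ Λ * ∏ i, c' i :=
      calc boxDegree c' 𝔭 ≤ boxDegree c 𝔭 := boxDegree_mono hc' hlt.le
        _ ≤ ∏ i, c i := hle.le
        _ ≤ 2 * ∏ i, c' i := hprod
        _ ≤ Λ * ∏ i, c' i := Nat.mul_le_mul_right _ hΛ
    obtain ⟨c'', hle', hc''⟩ := ih c' hlt hc' hdeg
    exact ⟨c'', hle'.trans hlt.le, hc''⟩

theorem IsFlat.exists_mem_notMem [Infinite 𝕜] [𝔭.IsPrime] {c₀ Λ C k : ℕ}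
    (hflat : IsFlat D 𝔭 c C k) (hD : RaisesBoxDegreeBy D c₀) (h0 : 𝔭 ≠ ⊥) (hc : ∀ i, 1 ≤ c i)
    (hdeg : boxDegree c 𝔭 ≤ Λ * ∏ i, c i) (hle : 𝔮 ≤ 𝔭)
    (h𝔮 : 𝔮 ≠ ⊥ → ∃ Q ∈ 𝔮, Q ∈ box 𝕜 c ^ C ∧ ∃ j ≤ k, D^[j] Q ∉ 𝔮) :
    ∃ t ∈ 𝔭, t ∉ 𝔮 ∧ t ∈ box 𝕜 c ^ max ((Λ + 1) * 2 ^ r) (C + k * c₀) := by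
  by_cases hbot : 𝔮 = ⊥
  · obtain ⟨t, ht, ht0, htb⟩ := exists_mem_box_pow_of_boxDegree_le hc h0 (Nat.le_add_left 1 Λ)
      (hdeg.trans (Nat.mul_le_mul_right _ (Nat.le_succ _)))
    exact ⟨t, ht, hbot ▸ ht0, box_pow_le_box_pow c (le_max_left _ _) htb⟩
  · obtain ⟨Q, hQ, hQC, j, hj, hDQ⟩ := h𝔮 hbot
    refine ⟨D^[j] Q, hflat Q (hle hQ) hQC j hj, hDQ,
      box_pow_le_box_pow c (le_max_of_le_right ?_) (hD.iterate_mem_box_pow hc hQC j)⟩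
    exact Nat.add_le_add_left (Nat.mul_le_mul_right c₀ hj) C

section Intersection

variable [CharZero 𝕜] {Ω Γ : Type*} [Field Ω] [Algebra 𝕜 Ω] [IsAlgClosed Ω]
  [LinearOrderedCommGroupWithZero Γ] {v : Valuation Ω Γ} {φ : MvPolynomial (Fin r) 𝕜 →ₐ[𝕜] Ω}

section

variable [𝔮.IsPrime] {l : ℕ → 𝕜} {t : MvPolynomial (Fin r) 𝕜} {a : Γ} {e m : ℕ}

theorem IsGenericFor.pow_mul_boxDegree_le_prod_max_pow (h𝔮 : IsGenericFor v φ c 𝔮 l)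
    (hφ : IsIntegralGenericPoint v φ) (hc : ∀ i, 1 ≤ c i) (ht : t ∉ 𝔮) (hte : t ∈ box 𝕜 c ^ e)
    (ha : a ≤ 1)
    (hgen : ∀ 𝔯 ∈ (𝔮 ⊔ Ideal.span {t}).minimalPrimes, IsGenericFor v φ c 𝔯 l)
    (hlow : ∀ 𝔯 ∈ (𝔮 ⊔ Ideal.span {t}).minimalPrimes, zeroLocusDim 𝔯 + 1 = zeroLocusDim 𝔮 →
      boxDegree c 𝔯 ≤ e * boxDegree c 𝔮 → a ^ boxDegree c 𝔯 ≤ fiberDist v φ c l 𝔯 ^ m) :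
    a ^ (e * boxDegree c 𝔮) ≤
      (∏ σ ∈ fiberFinset φ 𝔮 (aeval (genericFamily c l (zeroLocusDim 𝔮))),
        max (pointDist v φ σ) (v (φ t))) ^ m := by
  obtain ⟨s, hs, hsdeg, hsprod⟩ := exists_components hφ hc h𝔮 ht hte hgen
  calc a ^ (e * boxDegree c 𝔮) ≤ a ^ (s.map (boxDegree c)).sum :=
        pow_le_pow_right_of_le_one' ha hsdeg
    _ ≤ (s.map (fiberDist v φ c l)).prod ^ m :=
        pow_multiset_sum_map_le fun 𝔯 h𝔯 => hlow 𝔯 (hs 𝔯 h𝔯).1 (hs 𝔯 h𝔯).2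
          ((Multiset.single_le_sum (fun _ _ => Nat.zero_le _) _
            (Multiset.mem_map_of_mem _ h𝔯)).trans hsdeg)
    _ ≤ _ := pow_le_pow_left' hsprod _

theorem IsGenericFor.pow_boxDegree_le_fiberDist_pow (h𝔮 : IsGenericFor v φ c 𝔮 l)
    (hφ : IsIntegralGenericPoint v φ) (hc : ∀ i, 1 ≤ c i) (ht : t ∉ 𝔮) (he : e ≠ 0)
    (hte : t ∈ box 𝕜 c ^ e) (ha0 : 0 < a) (ha1 : a < 1) (hta : v (φ t) ≤ a)
    (hm : boxDegree c 𝔮 < m)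
    (hgen : ∀ 𝔯 ∈ (𝔮 ⊔ Ideal.span {t}).minimalPrimes, IsGenericFor v φ c 𝔯 l)
    (hlow : ∀ 𝔯 ∈ (𝔮 ⊔ Ideal.span {t}).minimalPrimes, zeroLocusDim 𝔯 + 1 = zeroLocusDim 𝔮 →
      boxDegree c 𝔯 ≤ e * boxDegree c 𝔮 → a ^ boxDegree c 𝔯 ≤ fiberDist v φ c l 𝔯 ^ (m * e)) :
    a ^ boxDegree c 𝔮 ≤ fiberDist v φ c l 𝔮 ^ m := by
  have hprod : a ^ boxDegree c 𝔮 ≤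
      (∏ σ ∈ fiberFinset φ 𝔮 (aeval (genericFamily c l (zeroLocusDim 𝔮))),
        max (pointDist v φ σ) (v (φ t))) ^ m := by
    refine (pow_le_pow_iff_left₀ zero_le zero_le he).mp ?_
    rw [← pow_mul, ← pow_mul, mul_comm (boxDegree c 𝔮)]
    exact h𝔮.pow_mul_boxDegree_le_prod_max_pow hφ hc ht hte ha1.le hgen hlow
  rcases prod_max_eq_prod_or_le (fun _ hσ => h𝔮.pointDist_le_one hφ hc hσ)
    (hφ.valuation_le_one t) with heq | hle
  · rwa [heq] at hprod
  · refine absurd ((pow_le_pow_iff_right_of_lt_one₀ ha0 ha1).mp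
      (hprod.trans (pow_le_pow_left' (hle.trans hta) m))) (not_le.mpr hm)

end

variable [IsAlgClosed 𝕜]

theorem eventually_isGenericFor_minimalPrimes (hφ : IsIntegralGenericPoint v φ)
    (hc : ∀ i, 1 ≤ c i) (I : Ideal (MvPolynomial (Fin r) 𝕜)) :
    ∀ᶠ l in genericFilter 𝕜 (r + 1), ∀ 𝔮 ∈ I.minimalPrimes, IsGenericFor v φ c 𝔮 l := by
  rw [Filter.eventually_all_finite (Ideal.finite_minimalPrimes_of_isNoetherianRing _ I)]
  intro 𝔮 h𝔮
  have := h𝔮.1.1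
  exact eventually_isGenericFor hφ hc 𝔮

variable {ψ : MvPolynomial (Fin r) 𝕜 →ₐ[𝕜] Ω} {π : Γ}

theorem IsFlowCurve.eventually_pow_le_fiberDist_pow (hψ : IsFlowCurve D 𝔭 v ψ π)
    (hc : ∀ i, 1 ≤ c i) {k N Λ : ℕ} (hX : FiberDistBound v ψ (π ^ k) 𝔭 c N Λ)
    (I : Ideal (MvPolynomial (Fin r) 𝕜)) :
    ∀ᶠ l in genericFilter 𝕜 (r + 1), ∀ 𝔮 ∈ I.minimalPrimes, zeroLocusDim 𝔮 = N →
      boxDegree c 𝔮 ≤ Λ * ∏ i, c i →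
      (π ^ k) ^ boxDegree c 𝔮 ≤ fiberDist v ψ c l 𝔮 ^ (2 * Λ * ∏ i, c i) := by
  rw [Filter.eventually_all_finite (Ideal.finite_minimalPrimes_of_isNoetherianRing _ I)]
  intro 𝔮 h𝔮
  have := h𝔮.1.1
  simp only [Filter.eventually_imp_distrib_left]
  intro hN hdeg
  by_cases hle : 𝔮 ≤ 𝔭
  · exact hX 𝔮 h𝔮.1.1 hle hN hdeg
  · filter_upwards [eventually_isGenericFor hψ.isIntegralGenericPoint hc 𝔮] with l hl
    exact (pow_le_one' (pow_le_one' hψ.lt_one.le _) _).trans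
      (one_le_pow_of_one_le' (hψ.one_le_fiberDist hc hl hle) _)

/- Cutting the zero set of `𝔮` by the hypersurface `t = 0` lowers the dimension; since `t` is small
on `ψ`, the distance of `ψ` to `𝔮` is controlled by its distances to the components. -/
theorem IsFlowCurve.eventually_pow_boxDegree_le (hψ : IsFlowCurve D 𝔭 v ψ π)
    (hc : ∀ i, 1 ≤ c i) {k N Λ e : ℕ} (hk : k ≠ 0) (hΛ : 1 ≤ Λ) (he : e ≠ 0) [𝔮.IsPrime]
    (hN : zeroLocusDim 𝔮 = N + 1) (hdeg : boxDegree c 𝔮 ≤ Λ * ∏ i, c i)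
    {t : MvPolynomial (Fin r) 𝕜} (ht : t ∉ 𝔮) (hte : t ∈ box 𝕜 c ^ e) (hvt : v (ψ t) ≤ π ^ k)
    (hX : FiberDistBound v ψ (π ^ k) 𝔭 c N (e * Λ)) :
    ∀ᶠ l in genericFilter 𝕜 (r + 1),
      (π ^ k) ^ boxDegree c 𝔮 ≤ fiberDist v ψ c l 𝔮 ^ (2 * Λ * ∏ i, c i) := by
  have hψ_generic := hψ.isIntegralGenericPoint
  have hvol : 0 < Λ * ∏ i, c i := Nat.mul_pos hΛ (Finset.prod_pos fun i _ => hc i)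
  filter_upwards [hψ.eventually_pow_le_fiberDist_pow hc hX (𝔮 ⊔ Ideal.span {t}),
    eventually_isGenericFor hψ_generic hc 𝔮,
    eventually_isGenericFor_minimalPrimes hψ_generic hc (𝔮 ⊔ Ideal.span {t})] with l hl hgen hgenI
  refine hgen.pow_boxDegree_le_fiberDist_pow hψ_generic hc ht he hte (pow_pos hψ.pos k)
    (pow_lt_one' hψ.lt_one hk) hvt (by rw [mul_assoc]; omega) hgenI fun 𝔯 h𝔯 hdim h𝔯deg => ?_
  convert hl 𝔯 h𝔯 (by omega) ?_ using 2
  · ring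
  · calc boxDegree c 𝔯 ≤ e * boxDegree c 𝔮 := h𝔯deg
      _ ≤ e * (Λ * ∏ i, c i) := Nat.mul_le_mul_left _ hdeg
      _ = e * Λ * ∏ i, c i := (mul_assoc _ _ _).symm

end Intersection

/-- A flat prime ideal `𝔭` of bounded degree and of dimension at most `N` cannot satisfy
`FiberDistBound` in dimension `N`. The fields `Ω` and the value groups `Γ` are restricted to the
universe of the base field, which contains those of the flow curves. -/
def FlatObstruction (D : Derivation 𝕜 (MvPolynomial (Fin r) 𝕜) (MvPolynomial (Fin r) 𝕜))
    (Λ₀ N : ℕ) : Prop :=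
  ∃ Λ C k₀ : ℕ, 1 ≤ Λ ∧ ∀ 𝔭 : Ideal (MvPolynomial (Fin r) 𝕜), 𝔭.IsPrime → 𝔭 ≠ ⊥ →
    NoStablePrimeLE D 𝔭 → zeroLocusDim 𝔭 ≤ N → ∀ c : Fin r → ℕ, (∀ i, 1 ≤ c i) →
    boxDegree c 𝔭 ≤ Λ₀ * ∏ i, c i → ∀ (Ω Γ : Type u) [Field Ω] [IsAlgClosed Ω] [Algebra 𝕜 Ω]
      [LinearOrderedCommGroupWithZero Γ] (v : Valuation Ω Γ) (ψ : MvPolynomial (Fin r) 𝕜 →ₐ[𝕜] Ω)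
      (π : Γ), IsFlowCurve D 𝔭 v ψ π → ∀ k ≥ k₀, IsFlat D 𝔭 c C k →
      ¬FiberDistBound v ψ (π ^ k) 𝔭 c N Λ

variable [CharZero 𝕜] [IsAlgClosed 𝕜]

theorem flatObstruction_top (hr : 1 ≤ r) (Λ₀ : ℕ) : FlatObstruction D Λ₀ r := by
  refine ⟨(2 * r) ^ r, 0, 0, Nat.pos_of_ne_zero (by positivity), ?_⟩
  intro 𝔭 _ _ _ _ c hc _ Ω Γ _ _ _ _ v ψ π hψ k _ _ hX
  have hψ_generic := hψ.isIntegralGenericPoint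
  have : Infinite 𝕜 := CharZero.infinite 𝕜
  have hbot : (⊥ : Ideal (MvPolynomial (Fin r) 𝕜)).IsPrime := Ideal.isPrime_bot
  have hbound := hX ⊥ hbot bot_le zeroLocusDim_bot
    (boxDegree_le_of_zeroLocusDim_eq hc hr zeroLocusDim_bot)
  obtain ⟨l, hl, hgen⟩ := (hbound.and (eventually_isGenericFor hψ_generic hc ⊥)).exists
  have hvol : 0 < ∏ i, c i := Finset.prod_pos fun i _ => hc i
  rw [hgen.fiberDist_bot hψ_generic hc, zero_pow (by positivity)] at hl
  exact absurd hl (not_le.mpr (pow_pos (pow_pos hψ.pos _) _))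

theorem FlatObstruction.of_succ {c₀ Λ₀ N : ℕ} (hD : RaisesBoxDegreeBy D c₀)
    (hT : TangencyBound D (N + 1)) (hS : FlatObstruction D Λ₀ (N + 1)) :
    FlatObstruction D Λ₀ N := by
  obtain ⟨Λ, C₁, k₁, hΛ, hS⟩ := hS
  obtain ⟨C₂, k₂, hT⟩ := hT Λ
  set e := max ((Λ₀ + 1) * 2 ^ r) (C₂ + k₂ * c₀)
  have he_pos : 1 ≤ e :=
    Nat.le_trans (Nat.mul_pos (Nat.succ_pos Λ₀) (by positivity)) (le_max_left _ _)
  refine ⟨e * Λ, max C₁ e, max (max k₁ k₂) 1, Nat.mul_pos he_pos hΛ, ?_⟩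
  intro 𝔭 h𝔭 h0 hns hN c hc hdeg Ω Γ _ _ _ _ v ψ π hψ k hk hflat hX
  have : Infinite 𝕜 := CharZero.infinite 𝕜
  have hflat_mono {C k' : ℕ} (hC : C ≤ max C₁ e) (hk' : k' ≤ k) : IsFlat D 𝔭 c C k' :=
    fun Q hQ hQC j hj => hflat Q hQ (box_pow_le_box_pow c hC hQC) j (hj.trans hk')
  refine hS 𝔭 h𝔭 h0 hns (hN.trans (Nat.le_succ N)) c hc hdeg Ω Γ v ψ π hψ k (by omega)
    (hflat_mono (le_max_left _ _) le_rfl) fun 𝔮 h𝔮 hle hN𝔮 hdeg𝔮 => ?_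
  have hflat₂ : IsFlat D 𝔭 c C₂ k₂ := hflat_mono
    ((Nat.le_add_right _ _).trans ((le_max_right _ _).trans (le_max_right _ _))) (by omega)
  obtain ⟨t, ht𝔭, ht𝔮, hte⟩ := hflat₂.exists_mem_notMem hD h0 hc hdeg hle fun hbot =>
    hT 𝔮 h𝔮 hbot (fun 𝔯 h𝔯 h𝔯𝔮 => hns 𝔯 h𝔯 (h𝔯𝔮.trans hle)) hN𝔮 c hc hdeg𝔮
  exact hψ.eventually_pow_boxDegree_le hc (by omega) hΛ (by omega) hN𝔮 hdeg𝔮 ht𝔮 hte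
    (hψ.valuation_le_pow t k fun j hj => hflat_mono (le_max_right _ _) le_rfl t ht𝔭 hte j hj.le) hX

theorem FlatObstruction.of_tangencyBound {c₀ : ℕ} (hr : 1 ≤ r) (hD : RaisesBoxDegreeBy D c₀)
    (Λ₀ : ℕ) {N : ℕ} (hN : N ≤ r) (hT : ∀ N' > N, TangencyBound D N') :
    FlatObstruction D Λ₀ N := by
  induction hN using Nat.decreasingInduction with
  | self => exact flatObstruction_top hr Λ₀
  | of_succ N _ ih =>
    exact .of_succ hD (hT _ N.lt_succ_self) (ih fun N' hN' => hT N' (N.lt_succ_self.trans hN'))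

theorem FlatObstruction.tangencyBound {N : ℕ} (hS : ∀ Λ₀, FlatObstruction D Λ₀ N) :
    TangencyBound D N := by
  intro Λ₀
  obtain ⟨Λ, C, k₀, _, hS⟩ := hS (Λ₀ + 2)
  refine ⟨C, max k₀ (2 * Λ), fun 𝔭 h𝔭 h0 hns hN c hc hdeg => ?_⟩
  have : Infinite 𝕜 := CharZero.infinite 𝕜
  obtain ⟨c', hle, hc', hdeg', hvol⟩ := exists_le_prod_le_boxDegree (Nat.le_add_left 2 Λ₀) hc
    (hdeg.trans (Nat.mul_le_mul_right _ (Nat.le_add_right _ _)))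
  by_contra! hflat
  obtain ⟨A, ψ, π, hψ⟩ := exists_isFlowCurve h0 hns
  refine hS 𝔭 h𝔭 h0 hns hN.le c' hc' hdeg' _ _ _ ψ π hψ _ (le_max_left _ _)
    (fun Q hQ hQC => hflat Q hQ (box_pow_mono hle C hQC)) fun 𝔮 h𝔮 hle𝔮 hN𝔮 _ => ?_
  obtain rfl : 𝔮 = 𝔭 := eq_of_le_of_not_lt hle𝔮 fun hlt =>
    (natTrdeg_quotient_lt (𝕜 := 𝕜) hlt).ne (hN.trans hN𝔮.symm)
  filter_upwards [eventually_isGenericFor hψ.isIntegralGenericPoint hc' 𝔮] with l hl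
  calc (π ^ max k₀ (2 * Λ)) ^ boxDegree c' 𝔮 ≤ π ^ (2 * Λ * ∏ i, c' i) := by
        rw [← pow_mul]
        exact pow_le_pow_right_of_le_one' hψ.lt_one.le (Nat.mul_le_mul (le_max_right _ _) hvol)
    _ ≤ _ := pow_le_pow_left' (hψ.le_fiberDist hc' hl) _

theorem tangencyBound {c₀ : ℕ} (hr : 1 ≤ r) (hD : RaisesBoxDegreeBy D c₀) (N : ℕ) :
    TangencyBound D N := by
  by_cases hN : N < r
  · exact FlatObstruction.tangencyBound fun Λ₀ =>
      .of_tangencyBound hr hD Λ₀ hN.le fun N' _ => tangencyBound hr hD N'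
  · exact fun _ => ⟨0, 0, fun 𝔭 _ h0 _ hdim => absurd (hdim ▸ zeroLocusDim_lt h0) hN⟩
termination_by r - N

end Tangency

section Solution

universe u

variable {𝕜 : Type u} [Field 𝕜] {r : ℕ}

theorem exists_X_sub_C_mem_of_zeroLocusDim_eq_zero [IsAlgClosed 𝕜]
    {𝔭 : Ideal (MvPolynomial (Fin r) 𝕜)} [𝔭.IsPrime] (h : zeroLocusDim 𝔭 = 0) (i : Fin r) :
    ∃ a : 𝕜, X i - C a ∈ 𝔭 := by
  have htrdeg : Algebra.trdeg 𝕜 (MvPolynomial (Fin r) 𝕜 ⧸ 𝔭) = 0 := by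
    rw [← natCast_natTrdeg, show natTrdeg 𝕜 _ = 0 from h, Nat.cast_zero]
  have := trdeg_eq_zero_iff.mp htrdeg
  obtain ⟨a, ha⟩ := (IsAlgClosed.algebraMap_bijective_of_isIntegral (k := 𝕜)
    (K := MvPolynomial (Fin r) 𝕜 ⧸ 𝔭)).2 (Ideal.Quotient.mk 𝔭 (X i))
  exact ⟨a, Ideal.Quotient.eq.mp ha.symm⟩

variable {Ω Γ : Type*} [Field Ω] [Algebra 𝕜 Ω] [LinearOrderedCommGroupWithZero Γ]

/-- An integral generic point `φ` that behaves like a solution of the differential system of `D`.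
The valuation `v` stands for the order of vanishing and `π` for the value of the time parameter: `D`
lowers orders of vanishing by at most one, some coordinate does not have a critical point, and
orders of vanishing on `D`-stable prime ideals are at most `K₀`. -/
structure IsSolution (D : Derivation 𝕜 (MvPolynomial (Fin r) 𝕜) (MvPolynomial (Fin r) 𝕜))
    (v : Valuation Ω Γ) (φ : MvPolynomial (Fin r) 𝕜 →ₐ[𝕜] Ω) (π : Γ) (K₀ : ℕ) : Prop where
  isIntegralGenericPoint : IsIntegralGenericPoint v φ
  lt_one : π < 1
  valuation_derivation_mul_le (Q : MvPolynomial (Fin r) 𝕜) : v (φ (D Q)) * π ≤ v (φ Q)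
  exists_le_valuation_X_sub_C : ∃ i, ∀ a : 𝕜, π ≤ v (φ (X i - C a))
  exists_mem_of_stable (𝔭 : Ideal (MvPolynomial (Fin r) 𝕜)) (hp : 𝔭.IsPrime) (h0 : 𝔭 ≠ ⊥)
    (hD : ∀ x ∈ 𝔭, D x ∈ 𝔭) : ∃ P ∈ 𝔭, π ^ K₀ ≤ v (φ P)

/-- A lower bound, for generic projections, for the distance from `φ` to the subvarieties of
dimension `N` whose degree is at most `Λ` times the volume of the box. -/
def UniformFiberDistBound (v : Valuation Ω Γ) (φ : MvPolynomial (Fin r) 𝕜 →ₐ[𝕜] Ω) (a : Γ)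
    (N Λ : ℕ) : Prop :=
  ∀ 𝔭 : Ideal (MvPolynomial (Fin r) 𝕜), 𝔭.IsPrime → 𝔭 ≠ ⊥ → zeroLocusDim 𝔭 = N →
    ∀ c : Fin r → ℕ, (∀ i, 1 ≤ c i) → boxDegree c 𝔭 ≤ Λ * ∏ i, c i →
    ∀ᶠ l in genericFilter 𝕜 (r + 1), a ^ boxDegree c 𝔭 ≤ fiberDist v φ c l 𝔭

variable {D : Derivation 𝕜 (MvPolynomial (Fin r) 𝕜) (MvPolynomial (Fin r) 𝕜)} {v : Valuation Ω Γ}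
  {φ : MvPolynomial (Fin r) 𝕜 →ₐ[𝕜] Ω} {π a b : Γ} {K₀ N Λ : ℕ} {c : Fin r → ℕ}

theorem IsSolution.valuation_iterate_mul_pow_le (hφ : IsSolution D v φ π K₀)
    (Q : MvPolynomial (Fin r) 𝕜) (j : ℕ) : v (φ (D^[j] Q)) * π ^ j ≤ v (φ Q) := by
  induction j generalizing Q with
  | zero => simp
  | succ j ih =>
    rw [Function.iterate_succ_apply, pow_succ, ← mul_assoc]
    exact (mul_le_mul' (ih (D Q)) le_rfl).trans (hφ.valuation_derivation_mul_le Q)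

theorem IsSolution.noStablePrimeLE (hφ : IsSolution D v φ π K₀)
    {𝔭 : Ideal (MvPolynomial (Fin r) 𝕜)} (h : ∀ g ∈ 𝔭, v (φ g) < π ^ K₀) :
    NoStablePrimeLE D 𝔭 := by
  intro 𝔮 h𝔮 hle h0
  by_contra! hstable
  obtain ⟨P, hP, hvP⟩ := hφ.exists_mem_of_stable 𝔮 h𝔮 h0 hstable
  exact not_lt.mpr hvP (h P (hle hP))

theorem UniformFiberDistBound.eventually_minimalPrimes (h : UniformFiberDistBound v φ a N Λ)
    (hc : ∀ i, 1 ≤ c i) {I : Ideal (MvPolynomial (Fin r) 𝕜)} (hI : I ≠ ⊥) :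
    ∀ᶠ l in genericFilter 𝕜 (r + 1), ∀ 𝔮 ∈ I.minimalPrimes, zeroLocusDim 𝔮 = N →
      boxDegree c 𝔮 ≤ Λ * ∏ i, c i → a ^ boxDegree c 𝔮 ≤ fiberDist v φ c l 𝔮 := by
  rw [Filter.eventually_all_finite (Ideal.finite_minimalPrimes_of_isNoetherianRing _ I)]
  intro 𝔮 h𝔮
  simp only [Filter.eventually_imp_distrib_left]
  exact fun hN hdeg => h 𝔮 h𝔮.1.1 (ne_bot_of_le_ne_bot hI h𝔮.1.2) hN c hc hdeg

variable [CharZero 𝕜] [IsAlgClosed Ω]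

theorem IsGenericFor.prod_max_mul_pow_le_fiberDist {𝔮 : Ideal (MvPolynomial (Fin r) 𝕜)}
    [𝔮.IsPrime] {l : ℕ → 𝕜} (h : IsGenericFor v φ c 𝔮 l) (hφ : IsIntegralGenericPoint v φ)
    (hc : ∀ i, 1 ≤ c i) {Q : MvPolynomial (Fin r) 𝕜} (hQ : Q ∈ 𝔮) (hb : b ≤ 1)
    (hab : a * b ≤ v (φ Q)) :
    (∏ σ ∈ fiberFinset φ 𝔮 (aeval (genericFamily c l (zeroLocusDim 𝔮))),
      max (pointDist v φ σ) a) * b ^ boxDegree c 𝔮 ≤ fiberDist v φ c l 𝔮 := by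
  rw [← (h.fiberDescription hφ hc).card_eq, ← Finset.prod_const, ← Finset.prod_mul_distrib]
  refine Finset.prod_le_prod' fun σ hσ => ?_
  rw [max_mul]
  exact max_le (mul_le_of_le_one_right' hb) (hab.trans (h.valuation_le_pointDist hφ hc hσ hQ))

variable [IsAlgClosed 𝕜]

theorem IsSolution.uniformFiberDistBound_zero (hφ : IsSolution D v φ π K₀) (Λ : ℕ) :
    UniformFiberDistBound v φ π 0 Λ := by
  intro 𝔭 _ _ hdim c hc _
  obtain ⟨i, hi⟩ := hφ.exists_le_valuation_X_sub_C
  obtain ⟨a, ha⟩ := exists_X_sub_C_mem_of_zeroLocusDim_eq_zero hdim i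
  filter_upwards [eventually_isGenericFor hφ.isIntegralGenericPoint hc 𝔭] with l hl
  exact hl.pow_boxDegree_le_fiberDist hφ.isIntegralGenericPoint hc ha (hi a)

/- An element `Q` of `𝔭` with `t = D^[j] Q ∉ 𝔭` bounds the distance from `φ` to the zero set of `𝔭`
below by `v (φ Q) ≥ v (φ t) * π ^ k` wherever that distance is less than `v (φ t)`. -/
theorem IsSolution.eventually_pow_boxDegree_le (hφ : IsSolution D v φ π K₀)
    {𝔭 : Ideal (MvPolynomial (Fin r) 𝕜)} [𝔭.IsPrime] (h0 : 𝔭 ≠ ⊥) (hN : zeroLocusDim 𝔭 = N + 1)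
    (hc : ∀ i, 1 ≤ c i) (hdeg : boxDegree c 𝔭 ≤ Λ * ∏ i, c i) {Q : MvPolynomial (Fin r) 𝕜}
    (hQ : Q ∈ 𝔭) {j k e C : ℕ} (hj : j ≤ k) (hDQ : D^[j] Q ∉ 𝔭) (hDQe : D^[j] Q ∈ box 𝕜 c ^ e)
    (h : UniformFiberDistBound v φ (π ^ C) N (e * Λ)) :
    ∀ᶠ l in genericFilter 𝕜 (r + 1),
      (π ^ (C * e + k)) ^ boxDegree c 𝔭 ≤ fiberDist v φ c l 𝔭 := by
  have hφ_generic := hφ.isIntegralGenericPoint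
  have hπ : π ≤ 1 := hφ.lt_one.le
  set t := D^[j] Q
  have hvt : v (φ t) * π ^ k ≤ v (φ Q) :=
    (mul_le_mul' le_rfl (pow_le_pow_right_of_le_one' hπ hj)).trans
      (hφ.valuation_iterate_mul_pow_le Q j)
  have hI : 𝔭 ⊔ Ideal.span {t} ≠ ⊥ := ne_bot_of_le_ne_bot h0 le_sup_left
  filter_upwards [h.eventually_minimalPrimes hc hI, eventually_isGenericFor hφ_generic hc 𝔭,
    eventually_isGenericFor_minimalPrimes hφ_generic hc (𝔭 ⊔ Ideal.span {t})] with l hl hgen hgenI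
  have hprod := hgen.pow_mul_boxDegree_le_prod_max_pow (m := 1) hφ_generic hc hDQ hDQe
    (pow_le_one' hπ C) hgenI fun 𝔮 h𝔮 hdim h𝔮deg => by
      rw [pow_one]
      refine hl 𝔮 h𝔮 (by omega) ?_
      rw [mul_assoc]
      exact h𝔮deg.trans (Nat.mul_le_mul_left e hdeg)
  rw [pow_one, pow_mul] at hprod
  rw [pow_add, mul_pow, pow_mul π C]
  exact (mul_le_mul' hprod le_rfl).trans
    (hgen.prod_max_mul_pow_le_fiberDist hφ_generic hc hQ (pow_le_one' hπ k) hvt)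

theorem IsSolution.exists_uniformFiberDistBound (hφ : IsSolution D v φ π K₀) {c₀ : ℕ}
    (hr : 1 ≤ r) (hD : RaisesBoxDegreeBy D c₀) (N Λ : ℕ) :
    ∃ C : ℕ, UniformFiberDistBound v φ (π ^ C) N Λ := by
  induction N generalizing Λ with
  | zero => exact ⟨1, (pow_one π).symm ▸ hφ.uniformFiberDistBound_zero Λ⟩
  | succ N ih =>
    obtain ⟨C₁, k, hT⟩ := tangencyBound hr hD (N + 1) Λ
    obtain ⟨C, hC⟩ := ih ((C₁ + k * c₀) * Λ)
    refine ⟨K₀ + (C * (C₁ + k * c₀) + k), fun 𝔭 h𝔭 h0 hN c hc hdeg => ?_⟩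
    have hpow_le {m : ℕ} (hm : m ≤ K₀ + (C * (C₁ + k * c₀) + k)) :
        (π ^ (K₀ + (C * (C₁ + k * c₀) + k))) ^ boxDegree c 𝔭 ≤ (π ^ m) ^ boxDegree c 𝔭 :=
      pow_le_pow_left' (pow_le_pow_right_of_le_one' hφ.lt_one.le hm) _
    by_cases hlarge : ∃ g ∈ 𝔭, π ^ K₀ ≤ v (φ g)
    · obtain ⟨g, hg, hvg⟩ := hlarge
      filter_upwards [eventually_isGenericFor hφ.isIntegralGenericPoint hc 𝔭] with l hl
      exact (hpow_le (Nat.le_add_right _ _)).trans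
        (hl.pow_boxDegree_le_fiberDist hφ.isIntegralGenericPoint hc hg hvg)
    push Not at hlarge
    obtain ⟨Q, hQ, hQC, j, hj, hDQ⟩ := hT 𝔭 h𝔭 h0 (hφ.noStablePrimeLE hlarge) hN c hc hdeg
    have hDQe : D^[j] Q ∈ box 𝕜 c ^ (C₁ + k * c₀) :=
      box_pow_le_box_pow c (Nat.add_le_add_left (Nat.mul_le_mul_right c₀ hj) C₁)
        (hD.iterate_mem_box_pow hc hQC j)
    filter_upwards [hφ.eventually_pow_boxDegree_le h0 hN hc hdeg hQ hj hDQ hDQe hC] with l hl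
    exact (hpow_le (Nat.le_add_left _ _)).trans hl

theorem IsSolution.exists_pow_mul_prod_le_valuation (hφ : IsSolution D v φ π K₀) {c₀ : ℕ}
    (hr : 1 ≤ r) (hD : RaisesBoxDegreeBy D c₀) :
    ∃ K : ℕ, ∀ c : Fin r → ℕ, (∀ i, 1 ≤ c i) → ∀ P ∈ box 𝕜 c, P ≠ 0 →
      π ^ (K * ∏ i, c i) ≤ v (φ P) := by
  have hφ_generic := hφ.isIntegralGenericPoint
  have hπ : π ≤ 1 := hφ.lt_one.le
  set Λ := (2 * r) ^ r
  obtain ⟨C, hC⟩ := hφ.exists_uniformFiberDistBound hr hD (r - 1) Λ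
  refine ⟨C * Λ, fun c hc P hP hP0 => ?_⟩
  have hdeg : boxDegree c (⊥ : Ideal (MvPolynomial (Fin r) 𝕜)) ≤ Λ * ∏ i, c i :=
    have : Infinite 𝕜 := CharZero.infinite 𝕜
    boxDegree_le_of_zeroLocusDim_eq hc hr zeroLocusDim_bot
  set I := (⊥ : Ideal (MvPolynomial (Fin r) 𝕜)) ⊔ Ideal.span {P}
  have hI : I ≠ ⊥ := by simpa [I] using hP0
  obtain ⟨l, hl, hgen, hgenI⟩ := ((hC.eventually_minimalPrimes hc hI).and
    ((eventually_isGenericFor hφ_generic hc ⊥).and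
      (eventually_isGenericFor_minimalPrimes hφ_generic hc I))).exists
  have hprod := hgen.pow_mul_boxDegree_le_prod_max_pow (m := 1) (e := 1) hφ_generic hc
    ((Submodule.mem_bot _).not.mpr hP0) (by rwa [pow_one]) (pow_le_one' hπ C) hgenI
    fun 𝔮 h𝔮 hdim h𝔮deg => by
      rw [zeroLocusDim_bot] at hdim
      rw [pow_one]
      exact hl 𝔮 h𝔮 (by omega) (h𝔮deg.trans (by rwa [one_mul]))
  rw [pow_one, one_mul, ← pow_mul] at hprod
  calc π ^ (C * Λ * ∏ i, c i) ≤ π ^ (C * boxDegree c (⊥ : Ideal (MvPolynomial (Fin r) 𝕜))) :=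
        pow_le_pow_right_of_le_one' hπ (by rw [mul_assoc]; exact Nat.mul_le_mul_left C hdeg)
    _ ≤ _ := hprod
    _ ≤ v (φ P) := by
        rw [← Finset.mul_prod_erase _ _ (hgen.self_mem_fiberFinset_bot hφ_generic hc),
          pointDist_self, max_eq_right zero_le]
        exact mul_le_of_le_one_right' (Finset.prod_le_one' fun τ hτ =>
          max_le (hgen.pointDist_le_one hφ_generic hc (Finset.mem_of_mem_erase hτ))
            (hφ_generic.valuation_le_one P))

end Solution

section DerivationDegree

variable {𝕜 : Type*} [Field 𝕜] {r : ℕ} {c : Fin r → ℕ}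

theorem mkDerivation_apply (A : Fin r → MvPolynomial (Fin r) 𝕜) (Q : MvPolynomial (Fin r) 𝕜) :
    mkDerivation 𝕜 A Q = ∑ i, A i * pderiv i Q := by
  have hsum_apply (P : MvPolynomial (Fin r) 𝕜) :
      (∑ i, A i • pderiv i : Derivation 𝕜 _ (MvPolynomial (Fin r) 𝕜)) P =
        ∑ i, A i * pderiv i P := by
    rw [← Derivation.coeFnAddMonoidHom_apply, map_sum, Finset.sum_apply]
    rfl
  have hsum : mkDerivation 𝕜 A = ∑ i, A i • pderiv i := derivation_ext fun j => by
    simp [mkDerivation_X, hsum_apply, pderiv_X, Pi.single_apply]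
  rw [hsum, hsum_apply]

theorem pderiv_mem_box {Q : MvPolynomial (Fin r) 𝕜} (hQ : Q ∈ box 𝕜 c) (i : Fin r) :
    pderiv i Q ∈ box 𝕜 c := by
  rw [Q.as_sum, map_sum]
  refine Submodule.sum_mem _ fun s hs => ?_
  rw [pderiv_monomial]
  exact (monomial_mem_restrictSupport 𝕜).mpr
    (Or.inl fun j => (Nat.sub_le _ _).trans (mem_box_iff.mp hQ s hs j))

theorem mem_box_pow_totalDegree (hc : ∀ i, 1 ≤ c i) (P : MvPolynomial (Fin r) 𝕜) :
    P ∈ box 𝕜 c ^ P.totalDegree := by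
  rw [box_pow, mem_box_iff]
  intro s hs j
  calc s j ≤ P.degreeOf j := degreeOf_le_iff.mp le_rfl s hs
    _ ≤ P.totalDegree := degreeOf_le_totalDegree P j
    _ ≤ P.totalDegree * c j := Nat.le_mul_of_pos_right _ (hc j)

theorem exists_raisesBoxDegreeBy
    (D : Derivation 𝕜 (MvPolynomial (Fin r) 𝕜) (MvPolynomial (Fin r) 𝕜)) :
    ∃ c₀ : ℕ, RaisesBoxDegreeBy D c₀ := by
  refine ⟨∑ i, (D (X i)).totalDegree, fun c hc e Q hQ => ?_⟩
  have hD : D = mkDerivation 𝕜 fun i => D (X i) :=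
    derivation_ext fun i => (mkDerivation_X 𝕜 (fun i => D (X i)) i).symm
  have hDQ : D Q = ∑ i, D (X i) * pderiv i Q :=
    (DFunLike.congr_fun hD Q).trans (mkDerivation_apply _ Q)
  rw [hDQ, add_comm e, pow_add]
  refine Submodule.sum_mem _ fun i _ => Submodule.mul_mem_mul ?_ ?_
  · exact box_pow_le_box_pow c (Finset.single_le_sum (f := fun i => (D (X i)).totalDegree)
      (fun _ _ => Nat.zero_le _) (Finset.mem_univ i)) (mem_box_pow_totalDegree hc _)
  · rw [box_pow] at hQ ⊢
    exact pderiv_mem_box hQ i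

end DerivationDegree

section FormalSolution

variable {𝕜 : Type*} [Field 𝕜] {r : ℕ}
  {D : Derivation 𝕜 (MvPolynomial (Fin r) 𝕜) (MvPolynomial (Fin r) 𝕜)}
  {F : MvPolynomial (Fin r) 𝕜 →ₐ[𝕜] PowerSeries 𝕜} {h : PowerSeries 𝕜}

theorem aeval_mkDerivation_eq_mul_derivative {σ : Type*} {A : σ → MvPolynomial σ 𝕜}
    {y : σ → PowerSeries 𝕜} (hA : ∀ i, aeval y (A i) = h * PowerSeries.derivative 𝕜 (y i))
    (Q : MvPolynomial σ 𝕜) :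
    aeval y (mkDerivation 𝕜 A Q) = h * PowerSeries.derivative 𝕜 (aeval y Q) := by
  induction Q using MvPolynomial.induction_on with
  | C a => simp [← algebraMap_eq]
  | add p q hp hq => rw [map_add, map_add, map_add, map_add, hp, hq, mul_add]
  | mul_X p i hp =>
    simp only [Derivation.leibniz, map_add, smul_eq_mul, map_mul, mkDerivation_X, aeval_X, hA, hp]
    ring

theorem injective_of_comm_derivative
    (hF : ∀ Q, F (D Q) = h * PowerSeries.derivative 𝕜 (F Q))
    (hstable : ∀ 𝔭 : Ideal (MvPolynomial (Fin r) 𝕜), 𝔭.IsPrime → 𝔭 ≠ ⊥ →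
      (∀ x ∈ 𝔭, D x ∈ 𝔭) → ∃ P ∈ 𝔭, F P ≠ 0) : Function.Injective F := by
  rw [RingHom.injective_iff_ker_eq_bot]
  by_contra h0
  obtain ⟨P, hP, hP0⟩ := hstable _ (RingHom.ker_isPrime F) h0 fun x hx => by
    rw [RingHom.mem_ker] at hx ⊢
    rw [hF, hx, map_zero, mul_zero]
  exact hP0 hP

theorem pow_le_valuation_iff_order_le {Γ : Type*} [LinearOrderedCommGroupWithZero Γ]
    {v : Valuation (PowerSeries 𝕜) Γ} (hv : ∀ f, v f ≤ 1) (h0 : 0 < v PowerSeries.X)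
    (h1 : v PowerSeries.X < 1) {f : PowerSeries 𝕜} {k : ℕ} :
    v PowerSeries.X ^ k ≤ v f ↔ f.order ≤ k := by
  refine ⟨fun hle => ?_, fun hle => ?_⟩
  · by_contra! hlt
    have hdvd : PowerSeries.X ^ (k + 1) ∣ f := PowerSeries.X_pow_dvd_iff.mpr fun m hm =>
      PowerSeries.coeff_of_lt_order m
        ((Nat.cast_le.mpr (Nat.lt_succ_iff.mp hm)).trans_lt hlt)
    exact not_lt.mpr (hle.trans (valuation_le_pow_of_X_pow_dvd hv hdvd))
      (pow_lt_pow_right_of_lt_one₀ h0 h1 k.lt_succ_self)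
  · have hf : f ≠ 0 := by rintro rfl; simp at hle
    exact (pow_le_pow_right_of_le_one' h1.le (ENat.toNat_le_of_le_natCast hle)).trans
      (pow_le_valuation_of_coeff_ne_zero hv (PowerSeries.coeff_order hf))

theorem valuation_mul_derivative_mul_le {Γ : Type*} [LinearOrderedCommGroupWithZero Γ]
    {v : Valuation (PowerSeries 𝕜) Γ} (hv : ∀ f, v f ≤ 1) (f g : PowerSeries 𝕜) :
    v (f * PowerSeries.derivative 𝕜 g) * v PowerSeries.X ≤ v g := by
  rcases eq_or_ne g 0 with rfl | hg
  · simp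
  refine le_trans ?_ (pow_le_valuation_of_coeff_ne_zero hv (PowerSeries.coeff_order hg))
  rcases hm : g.order.toNat with _ | m
  · rw [pow_zero]
    exact mul_le_one' (hv _) (hv _)
  · rw [pow_succ]
    refine mul_le_mul' (valuation_le_pow_of_X_pow_dvd hv (Dvd.dvd.mul_left
      (PowerSeries.X_pow_dvd_iff.mpr fun j hj => ?_) f)) le_rfl
    rw [PowerSeries.coeff_derivative, PowerSeries.coeff_of_lt_order_toNat _ (by omega), zero_mul]

variable {Ω Γ : Type*} [Field Ω] [Algebra 𝕜 Ω] [LinearOrderedCommGroupWithZero Γ]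
  {v : Valuation Ω Γ} {ι : PowerSeries 𝕜 →ₐ[𝕜] Ω} {K₀ : ℕ}

theorem isSolution_comp (hι : Function.Injective ι) (hv : ∀ f, v (ι f) ≤ 1)
    (hX : v (ι PowerSeries.X) < 1) (hF : ∀ Q, F (D Q) = h * PowerSeries.derivative 𝕜 (F Q))
    (hcoord : ∃ i, PowerSeries.coeff 1 (F (X i)) ≠ 0)
    (hstable : ∀ 𝔭 : Ideal (MvPolynomial (Fin r) 𝕜), 𝔭.IsPrime → 𝔭 ≠ ⊥ →
      (∀ x ∈ 𝔭, D x ∈ 𝔭) → ∃ P ∈ 𝔭, (F P).order ≤ K₀) :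
    IsSolution D v (ι.comp F) (v (ι PowerSeries.X)) K₀ := by
  have hX0 : 0 < v (ι PowerSeries.X) :=
    v.pos_iff.mpr ((map_ne_zero_iff ι hι).mpr PowerSeries.X_ne_zero)
  have hF_injective : Function.Injective F := injective_of_comm_derivative hF fun 𝔭 hp h0 hD => by
    obtain ⟨P, hP, hle⟩ := hstable 𝔭 hp h0 hD
    exact ⟨P, hP, fun h => by simp [h] at hle⟩
  refine ⟨⟨hι.comp hF_injective, fun g => hv _⟩, hX, fun Q => ?_, ?_, fun 𝔭 hp h0 hD => ?_⟩
  · rw [AlgHom.comp_apply, AlgHom.comp_apply, hF]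
    exact valuation_mul_derivative_mul_le (v := v.comap ι.toRingHom) hv h (F Q)
  · obtain ⟨i, hi⟩ := hcoord
    refine ⟨i, fun a => ?_⟩
    have hcoeff : PowerSeries.coeff 1 (F (X i - C a)) ≠ 0 := by
      rwa [map_sub, ← algebraMap_eq, AlgHom.commutes, map_sub, PowerSeries.algebraMap_apply,
        PowerSeries.coeff_C, if_neg one_ne_zero, sub_zero]
    exact (pow_one (v (ι PowerSeries.X))).symm.le.trans
      (pow_le_valuation_of_coeff_ne_zero (v := v.comap ι.toRingHom) hv hcoeff)
  · obtain ⟨P, hP, hle⟩ := hstable 𝔭 hp h0 hD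
    exact ⟨P, hP, (pow_le_valuation_iff_order_le (v := v.comap ι.toRingHom) hv hX0 hX).mpr hle⟩

theorem exists_order_le_mul_prod_degreeOf [CharZero 𝕜] [IsAlgClosed 𝕜]
    (hF : ∀ Q, F (D Q) = h * PowerSeries.derivative 𝕜 (F Q))
    (hcoord : ∃ i, PowerSeries.coeff 1 (F (X i)) ≠ 0)
    (hstable : ∀ 𝔭 : Ideal (MvPolynomial (Fin r) 𝕜), 𝔭.IsPrime → 𝔭 ≠ ⊥ →
      (∀ x ∈ 𝔭, D x ∈ 𝔭) → ∃ P ∈ 𝔭, (F P).order ≤ K₀) :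
    ∃ K : ℕ, ∀ P : MvPolynomial (Fin r) 𝕜, P ≠ 0 →
      (F P).order ≤ ↑(K * ∏ i, (P.degreeOf i + 1)) := by
  let ι : PowerSeries 𝕜 →ₐ[𝕜] AlgebraicClosure (FractionRing (PowerSeries 𝕜)) :=
    IsScalarTower.toAlgHom 𝕜 (PowerSeries 𝕜) _
  have hι : Function.Injective ι := (algebraMap (FractionRing (PowerSeries 𝕜)) _).injective.comp
    (IsFractionRing.injective (PowerSeries 𝕜) (FractionRing (PowerSeries 𝕜)))
  obtain ⟨A, hA, hX⟩ := exists_valuationSubring_powerSeries 𝕜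
  have hX0 : 0 < A.valuation (ι PowerSeries.X) :=
    A.valuation.pos_iff.mpr ((map_ne_zero_iff ι hι).mpr PowerSeries.X_ne_zero)
  have hr : 1 ≤ r := hcoord.choose.pos
  obtain ⟨c₀, hD⟩ := exists_raisesBoxDegreeBy D
  obtain ⟨K, hK⟩ := (isSolution_comp hι hA hX hF hcoord hstable).exists_pow_mul_prod_le_valuation
    hr hD
  refine ⟨K, fun P hP => (pow_le_valuation_iff_order_le (v := A.valuation.comap ι.toRingHom)
    hA hX0 hX).mp (hK _ (fun i => Nat.le_add_left 1 _) P ?_ hP)⟩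
  exact mem_box_iff.mpr fun s hs i => (degreeOf_le_iff.mp le_rfl s hs).trans (Nat.le_succ _)

end FormalSolution

section TaylorSeries

variable {𝕜 : Type*} [NontriviallyNormedField 𝕜] {F G : 𝕜 → 𝕜}

/-- The Taylor series of `F` at `0`. In positive characteristic the coefficients of index at
least the characteristic are the junk values of a division by zero. -/
def taylorSeries (F : 𝕜 → 𝕜) : PowerSeries 𝕜 :=
  PowerSeries.mk fun m => iteratedDeriv m F 0 / m.factorial

theorem coeff_taylorSeries (F : 𝕜 → 𝕜) (m : ℕ) :
    PowerSeries.coeff m (taylorSeries F) = iteratedDeriv m F 0 / m.factorial :=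
  PowerSeries.coeff_mk _ _

theorem taylorSeries_congr (h : F =ᶠ[nhds 0] G) : taylorSeries F = taylorSeries G := by
  ext m
  rw [coeff_taylorSeries, coeff_taylorSeries, h.iteratedDeriv_eq m]

theorem taylorSeries_const (a : 𝕜) : taylorSeries (fun _ => a) = PowerSeries.C a := by
  ext m
  rw [coeff_taylorSeries, iteratedDeriv_const, PowerSeries.coeff_C]
  split_ifs with h <;> simp [h]

theorem taylorSeries_id : taylorSeries (id : 𝕜 → 𝕜) = PowerSeries.X := by
  ext m
  rw [coeff_taylorSeries, PowerSeries.coeff_X]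
  rcases m with _ | m
  · simp
  · rw [iteratedDeriv_succ', deriv_id', iteratedDeriv_const]
    rcases m with _ | m <;> simp

theorem taylorSeries_add [CompleteSpace 𝕜] (hF : AnalyticAt 𝕜 F 0) (hG : AnalyticAt 𝕜 G 0) :
    taylorSeries (fun z => F z + G z) = taylorSeries F + taylorSeries G := by
  ext m
  rw [map_add, coeff_taylorSeries, coeff_taylorSeries, coeff_taylorSeries,
    iteratedDeriv_fun_add hF.contDiffAt hG.contDiffAt, add_div]

variable [CharZero 𝕜]

theorem taylorSeries_mul [CompleteSpace 𝕜] (hF : AnalyticAt 𝕜 F 0) (hG : AnalyticAt 𝕜 G 0) :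
    taylorSeries (fun z => F z * G z) = taylorSeries F * taylorSeries G := by
  ext m
  rw [PowerSeries.coeff_mul, coeff_taylorSeries, iteratedDeriv_fun_mul hF.contDiffAt hG.contDiffAt,
    Finset.Nat.sum_antidiagonal_eq_sum_range_succ
      (fun i j => PowerSeries.coeff i (taylorSeries F) * PowerSeries.coeff j (taylorSeries G)),
    Finset.sum_div]
  refine Finset.sum_congr rfl fun i hi => ?_
  rw [coeff_taylorSeries, coeff_taylorSeries,
    Nat.cast_choose 𝕜 (Nat.lt_succ_iff.mp (Finset.mem_range.mp hi))]
  have hm : (m.factorial : 𝕜) ≠ 0 := Nat.cast_ne_zero.mpr m.factorial_ne_zero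
  field_simp

theorem taylorSeries_deriv (F : 𝕜 → 𝕜) :
    taylorSeries (deriv F) = PowerSeries.derivative 𝕜 (taylorSeries F) := by
  ext m
  have hm : (m + 1 : 𝕜) ≠ 0 := Nat.cast_add_one_ne_zero m
  rw [PowerSeries.coeff_derivative, coeff_taylorSeries, coeff_taylorSeries, iteratedDeriv_succ',
    Nat.factorial_succ]
  push_cast
  field_simp

theorem order_taylorSeries_le_iff {M : ℕ} :
    (taylorSeries F).order ≤ M ↔ ∃ m ≤ M, iteratedDeriv m F 0 ≠ 0 := by
  have hcoeff (m : ℕ) : PowerSeries.coeff m (taylorSeries F) ≠ 0 ↔ iteratedDeriv m F 0 ≠ 0 := by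
    rw [coeff_taylorSeries, div_ne_zero_iff,
      and_iff_left (Nat.cast_ne_zero.mpr m.factorial_ne_zero)]
  refine ⟨fun hle => ?_, fun ⟨m, hm, h0⟩ => ?_⟩
  · have hF : taylorSeries F ≠ 0 := by rintro h; simp [h] at hle
    exact ⟨_, ENat.toNat_le_of_le_natCast hle, (hcoeff _).mp (PowerSeries.coeff_order hF)⟩
  · exact (PowerSeries.order_le m ((hcoeff m).mpr h0)).trans (Nat.cast_le.mpr hm)

end TaylorSeries

section Curve

variable {𝕜 σ : Type*} [NontriviallyNormedField 𝕜] {g : σ → 𝕜 → 𝕜}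

theorem analyticAt_eval (hg : ∀ i, AnalyticAt 𝕜 (g i) 0) (P : MvPolynomial σ 𝕜) :
    AnalyticAt 𝕜 (fun z => eval (fun i => g i z) P) 0 := by
  induction P using MvPolynomial.induction_on with
  | C a => simpa using analyticAt_const
  | add p q hp hq => simpa using hp.fun_add hq
  | mul_X p i hp => simpa using hp.fun_mul (hg i)

theorem aeval_taylorSeries [CompleteSpace 𝕜] [CharZero 𝕜] (hg : ∀ i, AnalyticAt 𝕜 (g i) 0)
    (P : MvPolynomial σ 𝕜) :
    aeval (fun i => taylorSeries (g i)) P = taylorSeries fun z => eval (fun i => g i z) P := by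
  induction P using MvPolynomial.induction_on with
  | C a => simp [taylorSeries_const]
  | add p q hp hq =>
    simp only [map_add, taylorSeries_add (analyticAt_eval hg p) (analyticAt_eval hg q), hp, hq]
  | mul_X p i hp =>
    simp only [map_mul, eval_X, aeval_X, taylorSeries_mul (analyticAt_eval hg p) (hg i), hp]

theorem aeval_taylorSeries_mkDerivation [CompleteSpace 𝕜] [CharZero 𝕜]
    {A : σ → MvPolynomial σ 𝕜} {a : MvPolynomial σ 𝕜} (hg : ∀ i, AnalyticAt 𝕜 (g i) 0)
    (hA : ∀ i, ∀ᶠ z in nhds 0,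
      eval (fun j => g j z) a * deriv (g i) z = eval (fun j => g j z) (A i))
    (Q : MvPolynomial σ 𝕜) :
    aeval (fun i => taylorSeries (g i)) (mkDerivation 𝕜 A Q) =
      aeval (fun i => taylorSeries (g i)) a *
        PowerSeries.derivative 𝕜 (aeval (fun i => taylorSeries (g i)) Q) := by
  refine aeval_mkDerivation_eq_mul_derivative (fun i => ?_) Q
  rw [aeval_taylorSeries hg, aeval_taylorSeries hg, ← taylorSeries_deriv,
    ← taylorSeries_mul (analyticAt_eval hg a) (hg i).deriv]
  exact (taylorSeries_congr (hA i)).symm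

end Curve

section GraphCurve

variable {n : ℕ}

/-- The curve `z ↦ (z, f₁(z), …, fₙ(z))`, coordinate by coordinate. -/
def graphCurve (f : Fin n → ℂ → ℂ) : Fin (n + 1) → ℂ → ℂ := Fin.cons id f

theorem graphCurve_apply (f : Fin n → ℂ → ℂ) (z : ℂ) :
    (fun i => graphCurve f i z) = (Fin.cons z fun j => f j z : Fin (n + 1) → ℂ) :=
  funext (Fin.cases rfl fun _ => rfl)

theorem analyticAt_graphCurve {f : Fin n → ℂ → ℂ} (hf : ∀ i, AnalyticAt ℂ (f i) 0) :
    ∀ i, AnalyticAt ℂ (graphCurve f i) 0 :=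
  Fin.cases analyticAt_id hf

theorem coeff_one_taylorSeries_graphCurve_zero (f : Fin n → ℂ → ℂ) :
    PowerSeries.coeff 1 (taylorSeries (graphCurve f 0)) = 1 := by
  rw [graphCurve, Fin.cons_zero, taylorSeries_id, PowerSeries.coeff_one_X]

theorem mkDerivation_eq_Dop (A : Fin (n + 1) → MvPolynomial (Fin (n + 1)) ℂ)
    (Q : MvPolynomial (Fin (n + 1)) ℂ) : mkDerivation ℂ A Q = Dop A Q := by
  rw [mkDerivation_apply, Fin.sum_univ_succ, Dop]

theorem degreeOf_succ_le_degXvars (P : MvPolynomial (Fin (n + 1)) ℂ) (j : Fin n) :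
    P.degreeOf j.succ ≤ degXvars P :=
  degreeOf_le_iff.mpr fun s hs =>
    (Finset.single_le_sum (f := fun i : Fin n => s i.succ) (fun _ _ => Nat.zero_le _)
      (Finset.mem_univ j)).trans
      (Finset.le_sup (f := fun d : Fin (n + 1) →₀ ℕ => ∑ i : Fin n, d i.succ) hs)

theorem prod_degreeOf_succ_le (P : MvPolynomial (Fin (n + 1)) ℂ) :
    ∏ i, (P.degreeOf i + 1) ≤ (P.degreeOf 0 + 1) * (degXvars P + 1) ^ n := by
  rw [Fin.prod_univ_succ]
  refine Nat.mul_le_mul_left _ ?_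
  simpa using Finset.prod_le_pow_card Finset.univ (fun j : Fin n => P.degreeOf j.succ + 1) _
    fun j _ => Nat.succ_le_succ (degreeOf_succ_le_degXvars P j)

end GraphCurve

/-- Nesterenko's conditional multiplicity estimate for solutions of algebraic differential
systems (Theorem `theoNesterenko_classique` of the paper).  The condition
"the function `z ↦ P(z, f₁(z), …, fₙ(z))` does not vanish identically near `0` and its order
of vanishing at `z = 0` is at most `K`" is expressed, for an analytic function, as the
existence of `m ≤ K` with `iteratedDeriv m F 0 ≠ 0`. -/
theorem nesterenko_conditional_multiplicity_estimate
    (n : ℕ) (hn : 1 ≤ n)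
    (A : Fin (n + 1) → MvPolynomial (Fin (n + 1)) ℂ) (hA0 : A 0 ≠ 0)
    (f : Fin n → ℂ → ℂ) (hf : ∀ i, AnalyticAt ℂ (f i) 0)
    (hode : ∀ i : Fin n, ∀ᶠ z in nhds (0 : ℂ),
      MvPolynomial.eval (Fin.cons z fun j => f j z) (A 0) * deriv (f i) z
        = MvPolynomial.eval (Fin.cons z fun j => f j z) (A i.succ))
    (K₀ : ℕ)
    (hstable : ∀ 𝔭 : Ideal (MvPolynomial (Fin (n + 1)) ℂ), 𝔭.IsPrime → 𝔭 ≠ ⊥ →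
      (∀ x ∈ 𝔭, Dop A x ∈ 𝔭) →
      ∃ P ∈ 𝔭, ∃ m : ℕ, m ≤ K₀ ∧
        iteratedDeriv m (fun z => MvPolynomial.eval (Fin.cons z fun j => f j z) P) 0 ≠ 0) :
    ∃ K₁ : ℕ, 0 < K₁ ∧ ∀ P : MvPolynomial (Fin (n + 1)) ℂ, P ≠ 0 →
      ∃ m : ℕ, m ≤ K₁ * (P.degreeOf 0 + 1) * (degXvars P + 1) ^ n ∧
        iteratedDeriv m (fun z => MvPolynomial.eval (Fin.cons z fun j => f j z) P) 0 ≠ 0 := by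
  have hg := analyticAt_graphCurve hf
  have hA : ∀ i, ∀ᶠ z in nhds 0, eval (fun j => graphCurve f j z) (A 0) * deriv (graphCurve f i) z
      = eval (fun j => graphCurve f j z) (A i) := by
    simp only [graphCurve_apply]
    exact Fin.cases (by simp [graphCurve]) hode
  have horder (P) (M : ℕ) : (aeval (fun i => taylorSeries (graphCurve f i)) P).order ≤ M ↔ ∃ m ≤ M,
      iteratedDeriv m (fun z => eval (Fin.cons z fun j => f j z : Fin (n + 1) → ℂ) P) 0 ≠ 0 := by
    simp only [aeval_taylorSeries hg, order_taylorSeries_le_iff, graphCurve_apply]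
  obtain ⟨K, hK⟩ := exists_order_le_mul_prod_degreeOf (K₀ := K₀)
    (aeval_taylorSeries_mkDerivation hg hA)
    ⟨0, by simp [coeff_one_taylorSeries_graphCurve_zero]⟩ fun 𝔭 hp h0 hD => by
      simp only [horder]
      exact hstable 𝔭 hp h0 fun x hx => mkDerivation_eq_Dop A x ▸ hD x hx
  refine ⟨K + 1, K.succ_pos, fun P hP => (horder P _).mp ((hK P hP).trans (Nat.cast_le.mpr ?_))⟩
  rw [mul_assoc]
  exact Nat.mul_le_mul K.le_succ (prod_degreeOf_succ_le P)
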